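/- H_n^f is a Frobenius superalgebra: there is an even isomorphism of left H_n^f-modules H_n^f ≅ Hom_F(H_n^f, F) between the left regular module and the F-linear dual of the right regular module. -/

import Mathlib

set_option maxHeartbeats 1000000

namespace HC

/-- Generators of the affine Hecke–Clifford superalgebra `H_n`. -/
inductive Gen (n : ℕ) : Type
  | X : Fin n → Gen n
  | Xinv : Fin n → Gen n
  | C : Fin n → Gen n
  | T : Fin (n - 1) → Gen n

/-- The node `i` of `Fin n`, for `i : Fin (n-1)` (1-based: the node `i`). -/
def lo {n : ℕ} (i : Fin (n - 1)) : Fin n :=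
  ⟨i.val, by have := i.isLt; omega⟩

/-- The node `i+1` of `Fin n`, for `i : Fin (n-1)`. -/
def hi {n : ℕ} (i : Fin (n - 1)) : Fin n :=
  ⟨i.val + 1, by have := i.isLt; omega⟩

variable (F : Type) [Field F]

/-- The free algebra on the generators. -/
abbrev FA (n : ℕ) : Type := FreeAlgebra F (Gen n)

noncomputable def fx {n : ℕ} (i : Fin n) : FA F n := FreeAlgebra.ι F (Gen.X i)
noncomputable def fxinv {n : ℕ} (i : Fin n) : FA F n := FreeAlgebra.ι F (Gen.Xinv i)
noncomputable def fc {n : ℕ} (i : Fin n) : FA F n := FreeAlgebra.ι F (Gen.C i)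
noncomputable def ft {n : ℕ} (i : Fin (n - 1)) : FA F n := FreeAlgebra.ι F (Gen.T i)

/-- The defining relations of the affine Hecke–Clifford superalgebra, with parameter
`q` and `ξ = q - q⁻¹`. -/
inductive Rel (q : F) (n : ℕ) : FA F n → FA F n → Prop
  | XXinv (i : Fin n) : Rel q n (fx F i * fxinv F i) 1
  | XinvX (i : Fin n) : Rel q n (fxinv F i * fx F i) 1
  | XX (i j : Fin n) : Rel q n (fx F i * fx F j) (fx F j * fx F i)
  | XiXi (i j : Fin n) : Rel q n (fxinv F i * fxinv F j) (fxinv F j * fxinv F i)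
  | XXi (i j : Fin n) (h : i ≠ j) : Rel q n (fx F i * fxinv F j) (fxinv F j * fx F i)
  | CC (i : Fin n) : Rel q n (fc F i * fc F i) 1
  | Canti (i j : Fin n) (h : i ≠ j) : Rel q n (fc F i * fc F j) (-(fc F j * fc F i))
  | CX (i : Fin n) : Rel q n (fc F i * fx F i) (fxinv F i * fc F i)
  | CXi (i : Fin n) : Rel q n (fc F i * fxinv F i) (fx F i * fc F i)
  | CXo (i j : Fin n) (h : i ≠ j) : Rel q n (fc F i * fx F j) (fx F j * fc F i)
  | CXio (i j : Fin n) (h : i ≠ j) : Rel q n (fc F i * fxinv F j) (fxinv F j * fc F i)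
  | Tquad (i : Fin (n - 1)) : Rel q n (ft F i * ft F i) ((q - q⁻¹) • ft F i + 1)
  | Tbraid (i j : Fin (n - 1)) (h : (j : ℕ) = (i : ℕ) + 1) :
      Rel q n (ft F i * ft F j * ft F i) (ft F j * ft F i * ft F j)
  | TTfar (i j : Fin (n - 1)) (h : (i : ℕ) + 1 < (j : ℕ)) :
      Rel q n (ft F i * ft F j) (ft F j * ft F i)
  | TC (i : Fin (n - 1)) : Rel q n (ft F i * fc F (lo i)) (fc F (hi i) * ft F i)
  | TCo (i : Fin (n - 1)) (j : Fin n) (h1 : j ≠ lo i) (h2 : j ≠ hi i) :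
      Rel q n (ft F i * fc F j) (fc F j * ft F i)
  | TXo (i : Fin (n - 1)) (j : Fin n) (h1 : j ≠ lo i) (h2 : j ≠ hi i) :
      Rel q n (ft F i * fx F j) (fx F j * ft F i)
  | TXio (i : Fin (n - 1)) (j : Fin n) (h1 : j ≠ lo i) (h2 : j ≠ hi i) :
      Rel q n (ft F i * fxinv F j) (fxinv F j * ft F i)
  | cross (i : Fin (n - 1)) :
      Rel q n ((ft F i + (q - q⁻¹) • (fc F (lo i) * fc F (hi i))) * fx F (lo i) * ft F i)
        (fx F (hi i))

/-- The affine Hecke–Clifford superalgebra `H_n` over `F` with parameter `q`. -/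
abbrev H (q : F) (n : ℕ) : Type := RingQuot (Rel F q n)

noncomputable def X (q : F) {n : ℕ} (i : Fin n) : H F q n :=
  RingQuot.mkAlgHom F (Rel F q n) (fx F i)

noncomputable def Xinv (q : F) {n : ℕ} (i : Fin n) : H F q n :=
  RingQuot.mkAlgHom F (Rel F q n) (fxinv F i)

noncomputable def C (q : F) {n : ℕ} (i : Fin n) : H F q n :=
  RingQuot.mkAlgHom F (Rel F q n) (fc F i)

noncomputable def T (q : F) {n : ℕ} (i : Fin (n - 1)) : H F q n :=
  RingQuot.mkAlgHom F (Rel F q n) (ft F i)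

/-- `q` is either a primitive root of unity of odd order (including `q = 1`)
or not a root of unity at all (and `q ≠ 0`). -/
def GoodParam (q : F) : Prop :=
  q ≠ 0 ∧ ((∃ m : ℕ, Odd m ∧ IsPrimitiveRoot q m) ∨ ∀ m : ℕ, 0 < m → q ^ m ≠ 1)

/-- `X_i^a` for an integer exponent `a ∈ ℤ`. -/
noncomputable def XZ (q : F) {n : ℕ} (i : Fin n) (a : ℤ) : H F q n :=
  if 0 ≤ a then X F q i ^ a.toNat else Xinv F q i ^ (-a).toNat

/-- The monomial `X^α = X_1^{α_1} ⋯ X_n^{α_n}` for `α ∈ ℤ^n`. -/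
noncomputable def Xmon (q : F) {n : ℕ} (α : Fin n → ℤ) : H F q n :=
  ((List.finRange n).map fun i => XZ F q i (α i)).prod

/-- The monomial `C^β = C_1^{β_1} ⋯ C_n^{β_n}` for `β ∈ {0,1}^n`. -/
noncomputable def Cmon (q : F) {n : ℕ} (β : Fin n → Bool) : H F q n :=
  ((List.finRange n).map fun i => if β i then C F q i else 1).prod

/-- The basic transposition `s_i = (i, i+1)` of `S_n`. -/
def s {n : ℕ} (i : Fin (n - 1)) : Equiv.Perm (Fin n) := Equiv.swap (lo i) (hi i)

/-- The Coxeter length (number of inversions) of a permutation of `Fin n`. -/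
def len {n : ℕ} (w : Equiv.Perm (Fin n)) : ℕ :=
  ((Finset.univ : Finset (Fin n × Fin n)).filter fun p => p.1 < p.2 ∧ w p.2 < w p.1).card

/-- `Tw` is the family of standard basis elements `T_w`, `w ∈ S_n`: it satisfies
`T_1 = 1`, `T_{s_i} = T_i`, and `T_{s_i w} = T_i T_w` whenever `ℓ(s_i w) = ℓ(w) + 1`.
These conditions determine the family uniquely. -/
def IsTFam (q : F) {n : ℕ} (Tw : Equiv.Perm (Fin n) → H F q n) : Prop :=
  Tw 1 = 1 ∧ (∀ i : Fin (n - 1), Tw (s i) = T F q i) ∧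
    ∀ (i : Fin (n - 1)) (w : Equiv.Perm (Fin n)),
      len (s i * w) = len w + 1 → Tw (s i * w) = T F q i * Tw w

/-- `h` is the quantum characteristic of `q`:  the smallest positive integer with
`q^{1-h} + q^{3-h} + ⋯ + q^{h-1} = 0`. -/
def qcharEq (q : F) (h : ℕ) : Prop :=
  0 < h ∧ (∑ k ∈ Finset.range h, q ^ (1 - (h : ℤ) + 2 * (k : ℤ))) = 0 ∧
    ∀ h' : ℕ, 0 < h' → h' < h →
      (∑ k ∈ Finset.range h', q ^ (1 - (h' : ℤ) + 2 * (k : ℤ))) ≠ 0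

/-- `i ∈ I = {0, 1, …, ℓ}` where `ℓ = (h-1)/2` (no condition if the quantum
characteristic is infinite). -/
def memI (q : F) (i : ℕ) : Prop := ∀ h : ℕ, qcharEq F q h → 2 * i + 1 ≤ h

/-- `q(i) = 2(q^{2i+1} + q^{-2i-1})/(q + q⁻¹)`. -/
noncomputable def qres (q : F) (i : ℕ) : F :=
  2 * (q ^ (2 * i + 1) + q⁻¹ ^ (2 * i + 1)) / (q + q⁻¹)

/-- Index of the block containing position `k` (0-based), for a composition given as a
list of parts. -/
def blk : List ℕ → ℕ → ℕ
  | [], _ => 0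
  | a :: rest, k => if k < a then 0 else blk rest (k - a) + 1

/-- Membership in the Young subgroup `S_μ ⊆ S_n`. -/
def InYoung {n : ℕ} (μ : List ℕ) (w : Equiv.Perm (Fin n)) : Prop :=
  ∀ k : Fin n, blk μ (w k).val = blk μ k.val

/-- `μ` is a composition of `n`. -/
def IsComposition (μ : List ℕ) (n : ℕ) : Prop := (∀ a ∈ μ, 0 < a) ∧ μ.sum = n

/-- The parabolic subalgebra generated by all `X_i^{±1}`, `C_i`, and the `T_j` with
`j` in a set `J` of admissible indices. -/
def parabolicJ (q : F) {n : ℕ} (J : Set (Fin (n - 1))) : Subalgebra F (H F q n) :=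
  Algebra.adjoin F
    ((Set.range fun i : Fin n => X F q i) ∪ (Set.range fun i : Fin n => Xinv F q i) ∪
      (Set.range fun i : Fin n => C F q i) ∪ {h | ∃ j ∈ J, h = T F q j})

/-- The parabolic subalgebra `H_μ` for a composition `μ`. -/
def parabolicC (q : F) {n : ℕ} (μ : List ℕ) : Subalgebra F (H F q n) :=
  parabolicJ F q {j | InYoung μ (s j)}

/-- The classical parabolic subalgebra `H^cl_μ`, generated by the `T_j` with `s_j ∈ S_μ`. -/
def clparC (q : F) {n : ℕ} (μ : List ℕ) : Subalgebra F (H F q n) :=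
  Algebra.adjoin F {h | ∃ j : Fin (n - 1), InYoung μ (s j) ∧ h = T F q j}

/-- The finite Hecke–Clifford subalgebra `H^fn_n`, generated by all `C_i` and `T_j`. -/
def Hfin (q : F) (n : ℕ) : Subalgebra F (H F q n) :=
  Algebra.adjoin F
    ((Set.range fun i : Fin n => C F q i) ∪ {h | ∃ j : Fin (n - 1), h = T F q j})

/-- `x` is a minimal length `(S_μ, S_ν)`-double coset representative. -/
def IsMinDC {n : ℕ} (μ ν : List ℕ) (x : Equiv.Perm (Fin n)) : Prop :=
  ∀ u v : Equiv.Perm (Fin n), InYoung μ u → InYoung ν v → len x ≤ len (u * x * v)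

/-- `w ∈ S_μ x S_ν`. -/
def InDC {n : ℕ} (μ ν : List ℕ) (x w : Equiv.Perm (Fin n)) : Prop :=
  ∃ u v : Equiv.Perm (Fin n), InYoung μ u ∧ InYoung ν v ∧ w = u * x * v

/-- A covering step in the Bruhat order: multiplication by a reflection increasing length. -/
def BruhatStep {n : ℕ} (v w : Equiv.Perm (Fin n)) : Prop :=
  ∃ a b : Fin n, a ≠ b ∧ w = Equiv.swap a b * v ∧ len v < len w

/-- The Bruhat order on `S_n`. -/
def BruhatLE {n : ℕ} : Equiv.Perm (Fin n) → Equiv.Perm (Fin n) → Prop :=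
  Relation.ReflTransGen BruhatStep

/-- The space of `A`-equivariant linear maps between two representations of the
`F`-algebra `A`. -/
def eqvHoms {A : Type} [Ring A] [Algebra F A] {M N : Type}
    [AddCommGroup M] [Module F M] [AddCommGroup N] [Module F N]
    (ρM : A →ₐ[F] Module.End F M) (ρN : A →ₐ[F] Module.End F N) :
    Submodule F (M →ₗ[F] N) where
  carrier := {f | ∀ (x : A) (m : M), f (ρM x m) = ρN x (f m)}
  add_mem' := by
    intro f g hf hg x m
    simp only [LinearMap.add_apply, hf x m, hg x m, map_add]
  zero_mem' := by
    intro x m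
    simp only [LinearMap.zero_apply, map_zero]
  smul_mem' := by
    intro c f hf x m
    simp only [LinearMap.smul_apply, hf x m, map_smul]

/-- `(E, ρE, ι)` is the module induced along the algebra morphism `φ : B →ₐ A` from
the `B`-representation `(M, ρ)`, i.e. `E = A ⊗_B M`, characterized by its universal
property. -/
def IsInducedAlong {A B : Type} [Ring A] [Ring B] [Algebra F A] [Algebra F B]
    (φ : B →ₐ[F] A) {M : Type} [AddCommGroup M] [Module F M]
    (ρ : B →ₐ[F] Module.End F M) {E : Type} [AddCommGroup E] [Module F E]
    (ρE : A →ₐ[F] Module.End F E) (ι : M →ₗ[F] E) : Prop :=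
  (∀ (b : B) (m : M), ι (ρ b m) = ρE (φ b) (ι m)) ∧
    ∀ (P : Type) [AddCommGroup P] [Module F P],
      ∀ (ρP : A →ₐ[F] Module.End F P) (f : M →ₗ[F] P),
        (∀ (b : B) (m : M), f (ρ b m) = ρP (φ b) (f m)) →
        ∃! g : E →ₗ[F] P,
          (∀ (x : A) (e : E), g (ρE x e) = ρP x (g e)) ∧ ∀ m : M, g (ι m) = f m

/-- `δ` is the grading automorphism of the superalgebra `H_n`
(identity on even generators, `-1` on the odd generators `C_i`). -/
def IsGradingAut (q : F) {n : ℕ} (δ : H F q n →ₐ[F] H F q n) : Prop :=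
  (∀ i : Fin n, δ (X F q i) = X F q i) ∧ (∀ i : Fin n, δ (Xinv F q i) = Xinv F q i) ∧
    (∀ i : Fin n, δ (C F q i) = -C F q i) ∧ ∀ i : Fin (n - 1), δ (T F q i) = T F q i

/-- `τ` is the antiautomorphism of `H_n` with `τ(T_i) = T_i + ξ C_i C_{i+1}`,
`τ(C_j) = C_j`, `τ(X_j) = X_j`. -/
def IsTauAntiAut (q : F) {n : ℕ} (τ : H F q n →ₗ[F] H F q n) : Prop :=
  Function.Bijective τ ∧ (∀ a b : H F q n, τ (a * b) = τ b * τ a) ∧ τ 1 = 1 ∧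
    (∀ i : Fin (n - 1),
      τ (T F q i) = T F q i + (q - q⁻¹) • (C F q (lo i) * C F q (hi i))) ∧
    (∀ j : Fin n, τ (C F q j) = C F q j) ∧ (∀ j : Fin n, τ (X F q j) = X F q j) ∧
    ∀ j : Fin n, τ (Xinv F q j) = Xinv F q j

/-- `ρ'` is the representation of the subalgebra `B` obtained from the
`H_ν`-representation `ρν` by twisting with the isomorphism `φ_{x⁻¹}`
(determined by `X_i ↦ X_{x⁻¹ i}`, `C_i ↦ C_{x⁻¹ i}`, `T_w ↦ T_{x⁻¹ w x}`). -/
def IsTwistedRep (q : F) {n : ℕ} (ν : List ℕ) (x : Equiv.Perm (Fin n))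
    (B : Subalgebra F (H F q n)) {M : Type} [AddCommGroup M] [Module F M]
    (ρν : ↥(parabolicC F q (n := n) ν) →ₐ[F] Module.End F M)
    (ρ' : ↥B →ₐ[F] Module.End F M) : Prop :=
  (∀ (i : Fin n) (a : ↥B) (b : ↥(parabolicC F q (n := n) ν)),
      (a : H F q n) = X F q i → (b : H F q n) = X F q (x⁻¹ i) → ρ' a = ρν b) ∧
  (∀ (i : Fin n) (a : ↥B) (b : ↥(parabolicC F q (n := n) ν)),
      (a : H F q n) = Xinv F q i → (b : H F q n) = Xinv F q (x⁻¹ i) → ρ' a = ρν b) ∧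
  (∀ (i : Fin n) (a : ↥B) (b : ↥(parabolicC F q (n := n) ν)),
      (a : H F q n) = C F q i → (b : H F q n) = C F q (x⁻¹ i) → ρ' a = ρν b) ∧
  ∀ (j j' : Fin (n - 1)) (a : ↥B) (b : ↥(parabolicC F q (n := n) ν)),
      lo j' = x⁻¹ (lo j) → (a : H F q n) = T F q j → (b : H F q n) = T F q j' → ρ' a = ρν b

/-- The element `f = a_d X_1^d + ⋯ + a_1 X_1 + a_0` of `H_n`. -/
noncomputable def felem (q : F) (n d : ℕ) (aa : ℕ → F) : H F q n :=
  if h : 0 < n then ∑ i ∈ Finset.range (d + 1), aa i • X F q (⟨0, h⟩ : Fin n) ^ i else 0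

/-- The conditions on the coefficients of `f`: degree `d ≥ 1`, monic, and
`a_i = a_0 a_{d-i}`. -/
def GoodPoly (d : ℕ) (aa : ℕ → F) : Prop :=
  1 ≤ d ∧ aa d = 1 ∧ (∀ i ≤ d, aa i = aa 0 * aa (d - i)) ∧ ∀ i : ℕ, d < i → aa i = 0

/-- The relation generating the two-sided ideal `I_f` of `H_n`. -/
inductive CycRel (q : F) (n d : ℕ) (aa : ℕ → F) : H F q n → H F q n → Prop
  | rel : CycRel q n d aa (felem F q n d aa) 0

/-- The cyclotomic Hecke–Clifford superalgebra `H_n^f = H_n / I_f`. -/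
abbrev Hf (q : F) (n d : ℕ) (aa : ℕ → F) : Type := RingQuot (CycRel F q n d aa)

/-- The canonical quotient map `H_n → H_n^f`. -/
noncomputable def cyc (q : F) (n d : ℕ) (aa : ℕ → F) : H F q n →ₐ[F] Hf F q n d aa :=
  RingQuot.mkAlgHom F (CycRel F q n d aa)

noncomputable def Xf (q : F) (n d : ℕ) (aa : ℕ → F) (i : Fin n) : Hf F q n d aa :=
  cyc F q n d aa (X F q i)
noncomputable def Xinvf (q : F) (n d : ℕ) (aa : ℕ → F) (i : Fin n) : Hf F q n d aa :=
  cyc F q n d aa (Xinv F q i)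
noncomputable def Cf (q : F) (n d : ℕ) (aa : ℕ → F) (i : Fin n) : Hf F q n d aa :=
  cyc F q n d aa (C F q i)
noncomputable def Tf (q : F) (n d : ℕ) (aa : ℕ → F) (i : Fin (n - 1)) : Hf F q n d aa :=
  cyc F q n d aa (T F q i)

/-- `e` is the canonical embedding `H_k^f → H_N^f` (shifting all indices by `sh`;
for `sh = 0` this is the standard identification of `H_k^f` with a subalgebra of
`H_N^f`). -/
def IsCycEmb (q : F) (k N d : ℕ) (aa : ℕ → F) (sh : ℕ)
    (e : Hf F q k d aa →ₐ[F] Hf F q N d aa) : Prop :=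
  (∀ (i : Fin k) (i' : Fin N), (i' : ℕ) = sh + (i : ℕ) →
      e (Xf F q k d aa i) = Xf F q N d aa i') ∧
  (∀ (i : Fin k) (i' : Fin N), (i' : ℕ) = sh + (i : ℕ) →
      e (Xinvf F q k d aa i) = Xinvf F q N d aa i') ∧
  (∀ (i : Fin k) (i' : Fin N), (i' : ℕ) = sh + (i : ℕ) →
      e (Cf F q k d aa i) = Cf F q N d aa i') ∧
  ∀ (j : Fin (k - 1)) (j' : Fin (N - 1)), (j' : ℕ) = sh + (j : ℕ) →
      e (Tf F q k d aa j) = Tf F q N d aa j'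

/-- `δ` is the grading automorphism of the superalgebra `H_n^f`. -/
def IsCycGrading (q : F) (n d : ℕ) (aa : ℕ → F)
    (δ : Hf F q n d aa →ₐ[F] Hf F q n d aa) : Prop :=
  (∀ i : Fin n, δ (Xf F q n d aa i) = Xf F q n d aa i) ∧
  (∀ i : Fin n, δ (Xinvf F q n d aa i) = Xinvf F q n d aa i) ∧
  (∀ i : Fin n, δ (Cf F q n d aa i) = -Cf F q n d aa i) ∧
  ∀ j : Fin (n - 1), δ (Tf F q n d aa j) = Tf F q n d aa j

/-- The elements `f_1 = f`, `f_{i+1} = (T_i + ξ C_i C_{i+1}) f_i T_i` of `H_n`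
(0-based indexing: `fseq k = f_{k+1}`). -/
noncomputable def fseq (q : F) (n d : ℕ) (aa : ℕ → F) : ℕ → H F q n
  | 0 => felem F q n d aa
  | k + 1 =>
    if h : k < n - 1 then
      (T F q (⟨k, h⟩ : Fin (n - 1)) +
          (q - q⁻¹) • (C F q (lo (⟨k, h⟩ : Fin (n - 1))) *
            C F q (hi (⟨k, h⟩ : Fin (n - 1))))) *
        fseq q n d aa k * T F q (⟨k, h⟩ : Fin (n - 1))
    else 0

/-- `f_Z = f_{z_1} ⋯ f_{z_u}` for `Z = {z_1 < ⋯ < z_u} ⊆ {1,…,n}` (0-based). -/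
noncomputable def fZ (q : F) (n d : ℕ) (aa : ℕ → F) (Z : Finset (Fin n)) : H F q n :=
  ((Z.sort (· ≤ ·)).map fun z => fseq F q n d aa (z : ℕ)).prod

section Presentation

variable {F} {E : Type} [Ring E] [Algebra F E]

/-- Two elements of a ring anticommute. -/
def Anti {E : Type} [Ring E] (x y : E) : Prop := x * y = -(y * x)

theorem Anti.symm {x y : E} (h : Anti x y) : Anti y x := by
  unfold Anti at *
  rw [h, neg_neg]

theorem Anti.conj {x y x' y' : E} (u : Eˣ) (h : Anti x y) (hx : SemiconjBy (u : E) x x')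
    (hy : SemiconjBy (u : E) y y') : Anti x' y' := by
  unfold Anti at *
  have e1 : x' * y' * (u : E) = -(y' * x') * u := by
    rw [mul_assoc, ← hy.eq, ← mul_assoc, ← hx.eq, mul_assoc, h, neg_mul, mul_assoc y', ← hx.eq,
      ← mul_assoc, ← hy.eq]
    simp [mul_assoc]
  exact u.isUnit.mul_left_injective e1

theorem Anti.mul_commute {x y z : E} (h1 : Anti x z) (h2 : Anti y z) : Commute (x * y) z := by
  unfold Anti at *
  rw [Commute, SemiconjBy, mul_assoc, h2, mul_neg, ← mul_assoc, h1]
  simp [mul_assoc]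

theorem commute_of_conj_family {n : ℕ} (g : ℕ → Eˣ) (s : ℕ → E)
    (braid : ∀ i, i + 2 < n → g i * g (i + 1) * g i = g (i + 1) * g i * g (i + 1))
    (far : ∀ i j, i + 1 < j → j + 1 < n → Commute (g i) (g j))
    (step : ∀ i, i + 1 < n → SemiconjBy (g i : E) (s i) (s (i + 1)))
    (base : ∀ i, 0 < i → i + 1 < n → Commute (g i : E) (s 0)) :
    ∀ j, j < n → ∀ i, i + 1 < n → j ≠ i → j ≠ i + 1 → Commute (g i : E) (s j) := by
  intro j
  induction j using Nat.strong_induction_on with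
  | _ j ih =>
    intro hj i hi h1 h2
    rcases j with _ | j
    · exact base i (by omega) hi
    by_cases hji : j = i + 1
    · subst hji
      have a1 : SemiconjBy ((g (i + 1) * g i : Eˣ) : E) (s i) (s (i + 2)) := by
        push_cast
        exact (step (i + 1) hj).mul_left (step i hi)
      have a2 : SemiconjBy ((g (i + 1) * g i : Eˣ) : E) (g (i + 1) : E) (g i) := by
        rw [SemiconjBy]
        norm_cast
        rw [← braid i hj, mul_assoc]
      have a3 : Commute (g (i + 1) : E) (s i) := ih i (by omega) (by omega) _ hj (by omega) (by omega)
      have e1 : (g i : E) * s (i + 2) * (g (i + 1) * g i : Eˣ) =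
          s (i + 2) * g i * (g (i + 1) * g i : Eˣ) := by
        rw [mul_assoc, ← a1.eq, ← mul_assoc, ← a2.eq, mul_assoc, a3.eq, ← mul_assoc, a1.eq,
          mul_assoc, a2.eq, mul_assoc]
      exact (g (i + 1) * g i).isUnit.mul_left_injective e1
    · have b1 : Commute (g i : E) (g j) := by
        rcases lt_or_gt_of_ne h1 with h | h
        · exact (far j i h hi).symm.map (Units.coeHom E)
        · exact (far i j (by omega) hj).map (Units.coeHom E)
      have b2 : Commute (g i : E) (s j) := ih j (by omega) (by omega) i hi (by omega) hji
      have e1 : (g i : E) * s (j + 1) * (g j) = s (j + 1) * g i * g j := by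
        rw [mul_assoc, ← (step j hj).eq, ← mul_assoc, b1.eq, mul_assoc, b2.eq, ← mul_assoc,
          (step j hj).eq, mul_assoc, ← b1.eq, mul_assoc]
      exact (g j).isUnit.mul_left_injective e1

theorem anti_of_conj_families {n : ℕ} (g g' : ℕ → Eˣ) (s s' : ℕ → E)
    (step : ∀ i, i + 1 < n → SemiconjBy (g i : E) (s i) (s (i + 1)))
    (step' : ∀ i, i + 1 < n → SemiconjBy (g' i : E) (s' i) (s' (i + 1)))
    (comm : ∀ j, j < n → ∀ i, i + 1 < n → j ≠ i → j ≠ i + 1 → Commute (g' i : E) (s j))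
    (comm' : ∀ j, j < n → ∀ i, i + 1 < n → j ≠ i → j ≠ i + 1 → Commute (g i : E) (s' j))
    (base : 1 < n → Anti (s 0) (s' 1)) :
    ∀ i j, i < j → j < n → Anti (s i) (s' j) := by
  have h0 : ∀ j, j + 1 < n → Anti (s 0) (s' (j + 1)) := by
    intro j
    induction j with
    | zero => exact base
    | succ j ih =>
      intro hj
      exact (ih (by omega)).conj (g' (j + 1)) (comm 0 (by omega) _ hj (by omega) (by omega))
        (step' _ hj)
  intro i
  induction i with
  | zero =>
    intro j hj hn
    obtain ⟨j, rfl⟩ : ∃ k, j = k + 1 := ⟨j - 1, by omega⟩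
    exact h0 j hn
  | succ i ih =>
    intro j hj hn
    exact (ih j (by omega) hn).conj (g i) (step i (by omega))
      (comm' j hn i (by omega) (by omega) (by omega))

/-- A cyclotomic Hecke–Clifford system of rank `n`, in terms of the Hecke generators and the two
odd involutions `c = C_1`, `e = C_1 X_1`. -/
structure Sys (q : F) (d : ℕ) (aa : ℕ → F) (n : ℕ) (t : ℕ → E) (c e : E) : Prop where
  cc : c * c = 1
  ee : e * e = 1
  poly : ∑ i ∈ Finset.range (d + 1), aa i • (c * e) ^ i = 0
  quad : ∀ i, i + 1 < n → t i * t i = (q - q⁻¹) • t i + 1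
  braid : ∀ i, i + 2 < n → t i * t (i + 1) * t i = t (i + 1) * t i * t (i + 1)
  far : ∀ i j, i + 1 < j → j + 1 < n → t i * t j = t j * t i
  tc : ∀ i, 0 < i → i + 1 < n → t i * c = c * t i
  te : ∀ i, 0 < i → i + 1 < n → t i * e = e * t i
  acc : 1 < n → Anti c (t 0 * c * (t 0 - (q - q⁻¹) • 1))
  aee : 1 < n → Anti e (t 0 * e * (t 0 - (q - q⁻¹) • 1))
  aec : 1 < n → Anti e (t 0 * c * (t 0 - (q - q⁻¹) • 1))

/-- The unit attached to a solution of the quadratic Hecke relation. -/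
def heckeUnit (ξ : F) (t : E) (h : t * t = ξ • t + 1) : Eˣ where
  val := t
  inv := t - ξ • 1
  val_inv := by simp [mul_sub, h]
  inv_val := by simp [sub_mul, h]

open Classical in
/-- The units attached to the Hecke generators of a system. -/
noncomputable def Sys.unit {q : F} {d : ℕ} {aa : ℕ → F} {n : ℕ} {t : ℕ → E} {c e : E}
    (S : Sys q d aa n t c e) (i : ℕ) : Eˣ :=
  if h : i + 1 < n then heckeUnit (q - q⁻¹) (t i) (S.quad i h) else 1

/-- The family of conjugates `s_{i+1} = g_i s_i g_i⁻¹`. -/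
def conjFamily (g : ℕ → Eˣ) (s : E) : ℕ → E
  | 0 => s
  | i + 1 => g i * conjFamily g s i * (g i)⁻¹.val

theorem conjFamily_step (g : ℕ → Eˣ) (s : E) (i : ℕ) :
    SemiconjBy (g i : E) (conjFamily g s i) (conjFamily g s (i + 1)) := by
  simp [SemiconjBy, conjFamily, mul_assoc]

theorem conjFamily_mul_self (g : ℕ → Eˣ) (s : E) (h : s * s = 1) (i : ℕ) :
    conjFamily g s i * conjFamily g s i = 1 := by
  induction i with
  | zero => exact h
  | succ i ih =>
    calc _ = (g i : E) * (conjFamily g s i * (((g i)⁻¹.val * g i) * conjFamily g s i)) *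
          (g i)⁻¹.val := by simp only [conjFamily, mul_assoc]
      _ = 1 := by rw [Units.inv_mul, one_mul, ih, mul_one, Units.mul_inv]

namespace Sys

variable {q : F} {d : ℕ} {aa : ℕ → F} {n : ℕ} {t : ℕ → E} {c e : E}

theorem unit_val (S : Sys q d aa n t c e) {i : ℕ} (h : i + 1 < n) : (S.unit i : E) = t i := by
  simp [unit, h, heckeUnit]

theorem unit_inv (S : Sys q d aa n t c e) {i : ℕ} (h : i + 1 < n) :
    ((S.unit i)⁻¹.val : E) = t i - (q - q⁻¹) • 1 := by
  simp only [unit, h, dite_true]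
  rfl

/-- The Clifford generators `C_i` of a system. -/
noncomputable def cs (S : Sys q d aa n t c e) : ℕ → E := conjFamily S.unit c

/-- The involutions `C_i X_i` of a system. -/
noncomputable def es (S : Sys q d aa n t c e) : ℕ → E := conjFamily (fun i => (S.unit i)⁻¹) e

theorem cs_step (S : Sys q d aa n t c e) (i : ℕ) :
    SemiconjBy (S.unit i : E) (S.cs i) (S.cs (i + 1)) :=
  conjFamily_step S.unit c i

theorem es_step (S : Sys q d aa n t c e) (i : ℕ) :
    SemiconjBy ((S.unit i)⁻¹.val : E) (S.es i) (S.es (i + 1)) :=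
  conjFamily_step (fun i => (S.unit i)⁻¹) e i

theorem unit_braid (S : Sys q d aa n t c e) (i : ℕ) (h : i + 2 < n) :
    S.unit i * S.unit (i + 1) * S.unit i = S.unit (i + 1) * S.unit i * S.unit (i + 1) := by
  ext
  push_cast
  rw [S.unit_val (show i + 1 < n by omega), S.unit_val h, S.braid i h]

theorem unit_far (S : Sys q d aa n t c e) (i j : ℕ) (h1 : i + 1 < j) (h : j + 1 < n) :
    Commute (S.unit i) (S.unit j) := by
  ext
  push_cast
  rw [S.unit_val (show i + 1 < n by omega), S.unit_val h, S.far i j h1 h]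

theorem comm_cs (S : Sys q d aa n t c e) : ∀ j, j < n → ∀ i, i + 1 < n → j ≠ i → j ≠ i + 1 →
    Commute (S.unit i : E) (S.cs j) :=
  commute_of_conj_family S.unit S.cs S.unit_braid S.unit_far
    (fun i _ => S.cs_step i)
    (fun i h1 h2 => by rw [S.unit_val h2]; exact S.tc i h1 h2)

theorem comm_es (S : Sys q d aa n t c e) : ∀ j, j < n → ∀ i, i + 1 < n → j ≠ i → j ≠ i + 1 →
    Commute ((S.unit i)⁻¹.val : E) (S.es j) :=
  commute_of_conj_family (fun i => (S.unit i)⁻¹) S.es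
    (fun i h => by
      have := congrArg Inv.inv (S.unit_braid i h)
      simpa only [mul_inv_rev, ← mul_assoc] using this)
    (fun i j h1 h => (S.unit_far i j h1 h).inv_inv)
    (fun i _ => S.es_step i)
    (fun i h1 h2 => by
      apply Commute.units_inv_left
      rw [S.unit_val h2]; exact S.te i h1 h2)

theorem cs_zero (S : Sys q d aa n t c e) : S.cs 0 = c := rfl

theorem es_zero (S : Sys q d aa n t c e) : S.es 0 = e := rfl

theorem cs_succ (S : Sys q d aa n t c e) {i : ℕ} (h : i + 1 < n) :
    t i * S.cs i = S.cs (i + 1) * t i := by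
  have := (conjFamily_step S.unit c i).eq
  rwa [S.unit_val h] at this

theorem es_succ_mul (S : Sys q d aa n t c e) {i : ℕ} (h : i + 1 < n) :
    S.es i * t i = t i * S.es (i + 1) := by
  have := (conjFamily_step (fun i => (S.unit i)⁻¹) e i).eq
  rw [← S.unit_val h]
  change _ = (S.unit i : E) * conjFamily (fun i => (S.unit i)⁻¹) e (i + 1)
  simp [conjFamily, es, mul_assoc]

theorem cs_sq (S : Sys q d aa n t c e) (i : ℕ) : S.cs i * S.cs i = 1 :=
  conjFamily_mul_self _ _ S.cc i

theorem es_sq (S : Sys q d aa n t c e) (i : ℕ) : S.es i * S.es i = 1 :=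
  conjFamily_mul_self _ _ S.ee i

theorem t_comm_cs (S : Sys q d aa n t c e) {i j : ℕ} (hj : j < n) (hi : i + 1 < n) (h1 : j ≠ i)
    (h2 : j ≠ i + 1) : Commute (t i) (S.cs j) := by
  have := S.comm_cs j hj i hi h1 h2
  rwa [S.unit_val hi] at this

theorem t_comm_es (S : Sys q d aa n t c e) {i j : ℕ} (hj : j < n) (hi : i + 1 < n) (h1 : j ≠ i)
    (h2 : j ≠ i + 1) : Commute (t i) (S.es j) := by
  have := (S.comm_es j hj i hi h1 h2).units_inv_left
  rwa [inv_inv, S.unit_val hi] at this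

theorem acs_lt (S : Sys q d aa n t c e) : ∀ i j, i < j → j < n → Anti (S.cs i) (S.cs j) := by
  refine anti_of_conj_families S.unit S.unit S.cs S.cs (fun i _ => S.cs_step i)
    (fun i _ => S.cs_step i) S.comm_cs S.comm_cs fun h => ?_
  have := S.acc h
  rwa [← S.unit_inv h, ← S.unit_val h] at this

theorem aes_lt (S : Sys q d aa n t c e) : ∀ i j, i < j → j < n → Anti (S.es i) (S.es j) := by
  refine anti_of_conj_families (fun i => (S.unit i)⁻¹) (fun i => (S.unit i)⁻¹) S.es S.es
    (fun i _ => S.es_step i) (fun i _ => S.es_step i)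
    S.comm_es S.comm_es fun h => ?_
  have h1 := S.aee h
  rw [← S.unit_inv h, ← S.unit_val h] at h1
  refine (h1.conj (S.unit 0)⁻¹ (S.es_step 0) ?_).symm
  simp [SemiconjBy, mul_assoc, es, conjFamily]

theorem aesc_lt (S : Sys q d aa n t c e) : ∀ i j, i < j → j < n → Anti (S.es i) (S.cs j) := by
  refine anti_of_conj_families (fun i => (S.unit i)⁻¹) S.unit S.es S.cs
    (fun i _ => S.es_step i) (fun i _ => S.cs_step i)
    (fun j hj i hi h1 h2 => ?_)
    (fun j hj i hi h1 h2 => (S.comm_cs j hj i hi h1 h2).units_inv_left) fun h => ?_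
  · rw [S.unit_val hi]
    exact S.t_comm_es hj hi h1 h2
  · have h1 := S.aec h
    rwa [← S.unit_inv h, ← S.unit_val h] at h1

theorem acse_lt (S : Sys q d aa n t c e) : ∀ i j, i < j → j < n → Anti (S.cs i) (S.es j) := by
  refine anti_of_conj_families S.unit (fun i => (S.unit i)⁻¹) S.cs S.es
    (fun i _ => S.cs_step i) (fun i _ => S.es_step i)
    (fun j hj i hi h1 h2 => (S.comm_cs j hj i hi h1 h2).units_inv_left)
    (fun j hj i hi h1 h2 => ?_) fun h => ?_
  · rw [S.unit_val hi]
    exact S.t_comm_es hj hi h1 h2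
  · have h1 := S.aec h
    rw [← S.unit_inv h, ← S.unit_val h] at h1
    refine (h1.conj (S.unit 0)⁻¹ (S.es_step 0) ?_).symm
    simp [SemiconjBy, mul_assoc, cs, conjFamily]

theorem acs (S : Sys q d aa n t c e) {i j : ℕ} (hi : i < n) (hj : j < n) (h : i ≠ j) :
    Anti (S.cs i) (S.cs j) := by
  rcases lt_or_gt_of_ne h with h | h
  · exact S.acs_lt i j h hj
  · exact (S.acs_lt j i h hi).symm

theorem aes (S : Sys q d aa n t c e) {i j : ℕ} (hi : i < n) (hj : j < n) (h : i ≠ j) :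
    Anti (S.es i) (S.es j) := by
  rcases lt_or_gt_of_ne h with h | h
  · exact S.aes_lt i j h hj
  · exact (S.aes_lt j i h hi).symm

theorem acse (S : Sys q d aa n t c e) {i j : ℕ} (hi : i < n) (hj : j < n) (h : i ≠ j) :
    Anti (S.cs i) (S.es j) := by
  rcases lt_or_gt_of_ne h with h | h
  · exact S.acse_lt i j h hj
  · exact (S.aesc_lt j i h hi).symm

theorem ce_comm_cs (S : Sys q d aa n t c e) {i j : ℕ} (hi : i < n) (hj : j < n) (h : i ≠ j) :
    Commute (S.cs i * S.es i) (S.cs j) :=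
  (S.acs hi hj h).mul_commute (S.acse hj hi h.symm).symm

theorem ce_comm_es (S : Sys q d aa n t c e) {i j : ℕ} (hi : i < n) (hj : j < n) (h : i ≠ j) :
    Commute (S.cs i * S.es i) (S.es j) :=
  (S.acse hi hj h).mul_commute (S.aes hi hj h)

theorem ec_comm_cs (S : Sys q d aa n t c e) {i j : ℕ} (hi : i < n) (hj : j < n) (h : i ≠ j) :
    Commute (S.es i * S.cs i) (S.cs j) :=
  (S.acse hj hi h.symm).symm.mul_commute (S.acs hi hj h)

theorem ec_comm_es (S : Sys q d aa n t c e) {i j : ℕ} (hi : i < n) (hj : j < n) (h : i ≠ j) :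
    Commute (S.es i * S.cs i) (S.es j) :=
  (S.aes hi hj h).mul_commute (S.acse hi hj h)

theorem cross (S : Sys q d aa n t c e) {i : ℕ} (h : i + 1 < n) :
    (t i + (q - q⁻¹) • (S.cs i * S.cs (i + 1))) * (S.cs i * S.es i) * t i =
      S.cs (i + 1) * S.es (i + 1) := by
  have h1 : t i + (q - q⁻¹) • (S.cs i * S.cs (i + 1)) =
      S.cs (i + 1) * (t i - (q - q⁻¹) • 1) * S.cs i := by
    rw [S.acs (show i < n by omega) h (by omega), mul_sub, sub_mul, mul_assoc, S.cs_succ h,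
      ← mul_assoc, S.cs_sq]
    simp [sub_eq_add_neg]
  have h2 : (t i - (q - q⁻¹) • 1) * t i = 1 := by
    rw [sub_mul, S.quad i h]; simp
  rw [h1]
  calc _ = S.cs (i + 1) * (t i - (q - q⁻¹) • 1) * (S.cs i * S.cs i) * (S.es i * t i) := by
        simp only [mul_assoc]
    _ = S.cs (i + 1) * ((t i - (q - q⁻¹) • 1) * t i) * S.es (i + 1) := by
        rw [S.cs_sq, S.es_succ_mul h]; simp only [mul_assoc, mul_one]
    _ = _ := by rw [h2, mul_one]

end Sys

end Presentation

/-- The algebra `H_n^f`, with its ring structure sealed. -/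
def HF (q : F) (d : ℕ) (aa : ℕ → F) (n : ℕ) : Type := Hf F q n d aa

noncomputable instance (q : F) (d : ℕ) (aa : ℕ → F) (n : ℕ) : Ring (HF F q d aa n) :=
  inferInstanceAs (Ring (Hf F q n d aa))

noncomputable instance (q : F) (d : ℕ) (aa : ℕ → F) (n : ℕ) : Algebra F (HF F q d aa n) :=
  inferInstanceAs (Algebra F (Hf F q n d aa))

/-- The quotient map onto `H_n^f`. -/
noncomputable def toHF (q : F) (d : ℕ) (aa : ℕ → F) (n : ℕ) : H F q n →ₐ[F] HF F q d aa n :=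
  cyc F q n d aa

theorem toHF_surjective (q : F) (d : ℕ) (aa : ℕ → F) (n : ℕ) :
    Function.Surjective (toHF F q d aa n) :=
  RingQuot.mkAlgHom_surjective F (CycRel F q n d aa)

theorem toHF_felem (q : F) (d : ℕ) (aa : ℕ → F) (n : ℕ) :
    toHF F q d aa n (felem F q n d aa) = 0 := by
  have := RingQuot.mkAlgHom_rel F (CycRel.rel (F := F) (q := q) (n := n) (d := d) (aa := aa))
  rw [map_zero] at this
  exact this

/-- The generators `X_i` of `H_n^f`. -/
noncomputable def gX (q : F) (d : ℕ) (aa : ℕ → F) (n : ℕ) (i : Fin n) : HF F q d aa n :=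
  toHF F q d aa n (X F q i)

/-- The generators `X_i⁻¹` of `H_n^f`. -/
noncomputable def gXi (q : F) (d : ℕ) (aa : ℕ → F) (n : ℕ) (i : Fin n) : HF F q d aa n :=
  toHF F q d aa n (Xinv F q i)

/-- The generators `C_i` of `H_n^f`. -/
noncomputable def gC (q : F) (d : ℕ) (aa : ℕ → F) (n : ℕ) (i : Fin n) : HF F q d aa n :=
  toHF F q d aa n (C F q i)

/-- The generators `T_i` of `H_n^f`. -/
noncomputable def gT (q : F) (d : ℕ) (aa : ℕ → F) (n : ℕ) (i : Fin (n - 1)) : HF F q d aa n :=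
  toHF F q d aa n (T F q i)

section Universal

variable {F} {E : Type} [Ring E] [Algebra F E] {q : F} {d : ℕ} {aa : ℕ → F}

namespace Sys

variable {n : ℕ} {t : ℕ → E} {c e : E}

/-- The values of a system on the generators of the affine algebra. -/
noncomputable def onGen (S : Sys q d aa n t c e) : Gen n → E
  | Gen.X i => S.cs i * S.es i
  | Gen.Xinv i => S.es i * S.cs i
  | Gen.C i => S.cs i
  | Gen.T i => t i

theorem ce_mul_ec (S : Sys q d aa n t c e) (i : ℕ) : S.cs i * S.es i * (S.es i * S.cs i) = 1 := by
  rw [mul_assoc, ← mul_assoc (S.es i), S.es_sq, one_mul, S.cs_sq]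

theorem ec_mul_ce (S : Sys q d aa n t c e) (i : ℕ) : S.es i * S.cs i * (S.cs i * S.es i) = 1 := by
  rw [mul_assoc, ← mul_assoc (S.cs i), S.cs_sq, one_mul, S.es_sq]

theorem onGen_rel (S : Sys q d aa n t c e) {x y : FA F n} (h : Rel F q n x y) :
    FreeAlgebra.lift F S.onGen x = FreeAlgebra.lift F S.onGen y := by
  have hlt : ∀ i : Fin (n - 1), (i : ℕ) + 1 < n := fun i => by have := i.isLt; omega
  induction h with
  | XXinv i => simp [fx, fxinv, onGen, S.ce_mul_ec]
  | XinvX i => simp [fx, fxinv, onGen, S.ec_mul_ce]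
  | XX i j =>
    simp only [fx, onGen, map_mul, FreeAlgebra.lift_ι_apply]
    by_cases h : i = j
    · rw [h]
    · have h' : (i : ℕ) ≠ j := fun h' => h (Fin.ext h')
      exact (S.ce_comm_cs i.2 j.2 h').mul_right (S.ce_comm_es i.2 j.2 h')
  | XiXi i j =>
    simp only [fxinv, onGen, map_mul, FreeAlgebra.lift_ι_apply]
    by_cases h : i = j
    · rw [h]
    · have h' : (i : ℕ) ≠ j := fun h' => h (Fin.ext h')
      exact (S.ec_comm_es i.2 j.2 h').mul_right (S.ec_comm_cs i.2 j.2 h')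
  | XXi i j h =>
    simp only [fx, fxinv, onGen, map_mul, FreeAlgebra.lift_ι_apply]
    have h' : (i : ℕ) ≠ j := fun h' => h (Fin.ext h')
    exact (S.ce_comm_es i.2 j.2 h').mul_right (S.ce_comm_cs i.2 j.2 h')
  | CC i => simp [fc, onGen, S.cs_sq]
  | Canti i j h =>
    simp only [fc, onGen, map_mul, map_neg, FreeAlgebra.lift_ι_apply]
    exact S.acs i.2 j.2 fun h' => h (Fin.ext h')
  | CX i =>
    simp only [fc, fx, fxinv, onGen, map_mul, FreeAlgebra.lift_ι_apply]
    rw [← mul_assoc, S.cs_sq, mul_assoc, S.cs_sq, one_mul, mul_one]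
  | CXi i =>
    simp only [fc, fx, fxinv, onGen, map_mul, FreeAlgebra.lift_ι_apply, mul_assoc]
  | CXo i j h =>
    simp only [fc, fx, onGen, map_mul, FreeAlgebra.lift_ι_apply]
    exact (S.ce_comm_cs j.2 i.2 fun h' => h (Fin.ext h'.symm)).symm
  | CXio i j h =>
    simp only [fc, fxinv, onGen, map_mul, FreeAlgebra.lift_ι_apply]
    exact (S.ec_comm_cs j.2 i.2 fun h' => h (Fin.ext h'.symm)).symm
  | Tquad i =>
    simp only [ft, onGen, map_mul, map_add, map_smul, map_one, FreeAlgebra.lift_ι_apply]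
    exact S.quad i (hlt i)
  | Tbraid i j h =>
    simp only [ft, onGen, map_mul, FreeAlgebra.lift_ι_apply, h]
    exact S.braid i (by have := hlt j; omega)
  | TTfar i j h =>
    simp only [ft, onGen, map_mul, FreeAlgebra.lift_ι_apply]
    exact S.far i j h (hlt j)
  | TC i =>
    simp only [ft, fc, onGen, map_mul, FreeAlgebra.lift_ι_apply]
    exact S.cs_succ (hlt i)
  | TCo i j h1 h2 =>
    simp only [ft, fc, onGen, map_mul, FreeAlgebra.lift_ι_apply]
    exact S.t_comm_cs j.2 (hlt i) (fun h => h1 (Fin.ext h)) (fun h => h2 (Fin.ext h))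
  | TXo i j h1 h2 =>
    simp only [ft, fx, onGen, map_mul, FreeAlgebra.lift_ι_apply]
    exact (S.t_comm_cs j.2 (hlt i) (fun h => h1 (Fin.ext h)) (fun h => h2 (Fin.ext h))).mul_right
      (S.t_comm_es j.2 (hlt i) (fun h => h1 (Fin.ext h)) (fun h => h2 (Fin.ext h)))
  | TXio i j h1 h2 =>
    simp only [ft, fxinv, onGen, map_mul, FreeAlgebra.lift_ι_apply]
    exact (S.t_comm_es j.2 (hlt i) (fun h => h1 (Fin.ext h)) (fun h => h2 (Fin.ext h))).mul_right
      (S.t_comm_cs j.2 (hlt i) (fun h => h1 (Fin.ext h)) (fun h => h2 (Fin.ext h)))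
  | cross i =>
    simp only [ft, fx, fc, onGen, map_mul, map_add, map_smul, FreeAlgebra.lift_ι_apply]
    exact S.cross (hlt i)

/-- The morphism from the affine algebra attached to a system. -/
noncomputable def affineLift (S : Sys q d aa n t c e) : H F q n →ₐ[F] E :=
  RingQuot.liftAlgHom F ⟨FreeAlgebra.lift F S.onGen, fun _ _ h => S.onGen_rel h⟩

theorem affineLift_felem (S : Sys q d aa n t c e) : S.affineLift (felem F q n d aa) = 0 := by
  unfold felem
  split_ifs with h
  · simp only [map_sum, map_smul, map_pow]
    have : S.affineLift (X F q ⟨0, h⟩) = c * e := by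
      simp [affineLift, X, fx, onGen, cs_zero, es_zero]
    rw [this, S.poly]
  · simp

/-- The morphism from the cyclotomic algebra attached to a system. -/
noncomputable def lift (S : Sys q d aa n t c e) : HF F q d aa n →ₐ[F] E :=
  RingQuot.liftAlgHom F (s := CycRel F q n d aa) ⟨S.affineLift, fun _ _ h => by
    cases h
    rw [S.affineLift_felem, map_zero]⟩

theorem lift_toHF (S : Sys q d aa n t c e) (x : H F q n) :
    S.lift (toHF F q d aa n x) = S.affineLift x :=
  RingQuot.liftAlgHom_mkAlgHom_apply F (s := CycRel F q n d aa) _ _ x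

theorem lift_Tf (S : Sys q d aa n t c e) (i : Fin (n - 1)) : S.lift (gT F q d aa n i) = t i := by
  rw [gT, lift_toHF]
  simp [affineLift, T, ft, onGen]

theorem lift_Cf (S : Sys q d aa n t c e) (i : Fin n) : S.lift (gC F q d aa n i) = S.cs i := by
  rw [gC, lift_toHF]
  simp [affineLift, C, fc, onGen]

theorem lift_Xf (S : Sys q d aa n t c e) (i : Fin n) :
    S.lift (gX F q d aa n i) = S.cs i * S.es i := by
  rw [gX, lift_toHF]
  simp [affineLift, X, fx, onGen]

end Sys

/-- Transport of the defining relations to the cyclotomic quotient. -/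
theorem Hf_rel {n : ℕ} {x y : FA F n} (h : Rel F q n x y) :
    toHF F q d aa n (RingQuot.mkAlgHom F (Rel F q n) x) =
      toHF F q d aa n (RingQuot.mkAlgHom F (Rel F q n) y) :=
  congrArg _ (RingQuot.mkAlgHom_rel F h)

variable (q d aa)

/-- The Hecke generators of `H_n^f`, indexed by `ℕ`. -/
noncomputable def tt (n : ℕ) (i : ℕ) : HF F q d aa n :=
  if h : i < n - 1 then gT F q d aa n ⟨i, h⟩ else 1

/-- The odd involution `C_1`. -/
noncomputable def c0 (m : ℕ) : HF F q d aa (m + 1) := gC F q d aa (m + 1) 0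

/-- The odd involution `C_1 X_1`. -/
noncomputable def e0 (m : ℕ) : HF F q d aa (m + 1) :=
  gC F q d aa (m + 1) 0 * gX F q d aa (m + 1) 0

variable {q d aa}

theorem tt_of_lt {n i : ℕ} (h : i < n - 1) : tt q d aa n i = gT F q d aa n ⟨i, h⟩ := by
  simp [tt, h]

section Relations
variable {n : ℕ}

theorem Cf_sq (i : Fin n) : gC F q d aa n i * gC F q d aa n i = 1 := by
  simpa [map_mul, gC, C] using Hf_rel (d := d) (aa := aa) (Rel.CC (F := F) (q := q) i)

theorem Xinvf_Xf (i : Fin n) : gXi F q d aa n i * gX F q d aa n i = 1 := by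
  simpa [map_mul, gX, X, gXi, Xinv] using
    Hf_rel (d := d) (aa := aa) (Rel.XinvX (F := F) (q := q) i)

theorem Cf_Xf (i : Fin n) :
    gC F q d aa n i * gX F q d aa n i = gXi F q d aa n i * gC F q d aa n i := by
  simpa [map_mul, gX, X, gXi, Xinv, gC, C] using
    Hf_rel (d := d) (aa := aa) (Rel.CX (F := F) (q := q) i)

theorem Cf_Xf_of_ne {i j : Fin n} (h : i ≠ j) :
    gC F q d aa n i * gX F q d aa n j = gX F q d aa n j * gC F q d aa n i := by
  simpa [map_mul, gX, X, gC, C] using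
    Hf_rel (d := d) (aa := aa) (Rel.CXo (F := F) (q := q) i j h)

theorem Xf_Xf (i j : Fin n) :
    gX F q d aa n i * gX F q d aa n j = gX F q d aa n j * gX F q d aa n i := by
  simpa [map_mul, gX, X] using
    Hf_rel (d := d) (aa := aa) (Rel.XX (F := F) (q := q) i j)

theorem Cf_Cf {i j : Fin n} (h : i ≠ j) :
    gC F q d aa n i * gC F q d aa n j = -(gC F q d aa n j * gC F q d aa n i) := by
  simpa [map_mul, gC, C] using
    Hf_rel (d := d) (aa := aa) (Rel.Canti (F := F) (q := q) i j h)

theorem Tf_sq (i : Fin (n - 1)) :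
    gT F q d aa n i * gT F q d aa n i = (q - q⁻¹) • gT F q d aa n i + 1 := by
  simpa only [map_mul, map_add, map_smul, map_one, gT, T] using
    Hf_rel (d := d) (aa := aa) (Rel.Tquad (F := F) (q := q) i)

theorem Tf_braid (i j : Fin (n - 1)) (h : (j : ℕ) = (i : ℕ) + 1) :
    gT F q d aa n i * gT F q d aa n j * gT F q d aa n i =
      gT F q d aa n j * gT F q d aa n i * gT F q d aa n j := by
  simpa [map_mul, gT, T] using Hf_rel (d := d) (aa := aa) (Rel.Tbraid (F := F) (q := q) i j h)

theorem Tf_far (i j : Fin (n - 1)) (h : (i : ℕ) + 1 < (j : ℕ)) :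
    gT F q d aa n i * gT F q d aa n j = gT F q d aa n j * gT F q d aa n i := by
  simpa [map_mul, gT, T] using Hf_rel (d := d) (aa := aa) (Rel.TTfar (F := F) (q := q) i j h)

theorem Tf_Cf (i : Fin (n - 1)) :
    gT F q d aa n i * gC F q d aa n (lo i) = gC F q d aa n (hi i) * gT F q d aa n i := by
  simpa [map_mul, gT, T, gC, C] using Hf_rel (d := d) (aa := aa) (Rel.TC (F := F) (q := q) i)

theorem Tf_Cf_of_ne {i : Fin (n - 1)} {j : Fin n} (h1 : j ≠ lo i) (h2 : j ≠ hi i) :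
    gT F q d aa n i * gC F q d aa n j = gC F q d aa n j * gT F q d aa n i := by
  simpa [map_mul, gT, T, gC, C] using
    Hf_rel (d := d) (aa := aa) (Rel.TCo (F := F) (q := q) i j h1 h2)

theorem Tf_Xf_of_ne {i : Fin (n - 1)} {j : Fin n} (h1 : j ≠ lo i) (h2 : j ≠ hi i) :
    gT F q d aa n i * gX F q d aa n j = gX F q d aa n j * gT F q d aa n i := by
  simpa [map_mul, gT, T, gX, X] using
    Hf_rel (d := d) (aa := aa) (Rel.TXo (F := F) (q := q) i j h1 h2)

theorem Tf_cross (i : Fin (n - 1)) :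
    (gT F q d aa n i + (q - q⁻¹) • (gC F q d aa n (lo i) * gC F q d aa n (hi i))) *
      gX F q d aa n (lo i) * gT F q d aa n i = gX F q d aa n (hi i) := by
  simpa only [map_mul, map_add, map_smul, gT, T, gX, X, gC, C] using
    Hf_rel (d := d) (aa := aa) (Rel.cross (F := F) (q := q) i)

end Relations

theorem poly_Xf (m : ℕ) :
    ∑ i ∈ Finset.range (d + 1), aa i • gX F q d aa (m + 1) 0 ^ i = 0 := by
  have := toHF_felem F q d aa (m + 1)
  simpa [felem, gX] using this

end Universal

section Canonical

variable {F} {q : F} {d : ℕ} {aa : ℕ → F}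

theorem Tf_mul_inv {n : ℕ} (i : Fin (n - 1)) :
    gT F q d aa n i * (gT F q d aa n i - (q - q⁻¹) • 1) = 1 := by
  simp [mul_sub, Tf_sq]

theorem Tf_inv_mul {n : ℕ} (i : Fin (n - 1)) :
    (gT F q d aa n i - (q - q⁻¹) • 1) * gT F q d aa n i = 1 := by
  simp [sub_mul, Tf_sq]

theorem Tf_conj_Cf {n : ℕ} (i : Fin (n - 1)) :
    gT F q d aa n i * gC F q d aa n (lo i) * (gT F q d aa n i - (q - q⁻¹) • 1) =
      gC F q d aa n (hi i) := by
  rw [Tf_Cf, mul_assoc, Tf_mul_inv, mul_one]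

theorem Tf_conj_CfXf {n : ℕ} (i : Fin (n - 1)) :
    (gT F q d aa n i - (q - q⁻¹) • 1) * (gC F q d aa n (lo i) * gX F q d aa n (lo i)) *
      gT F q d aa n i = gC F q d aa n (hi i) * gX F q d aa n (hi i) := by
  have hne : lo i ≠ hi i := fun h => by
    have := congrArg Fin.val h
    simp [lo, hi] at this
  have h1 : gC F q d aa n (hi i) *
      (gT F q d aa n i + (q - q⁻¹) • (gC F q d aa n (lo i) * gC F q d aa n (hi i))) =
      (gT F q d aa n i - (q - q⁻¹) • 1) * gC F q d aa n (lo i) := by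
    rw [Cf_Cf hne, mul_add, ← Tf_Cf, sub_mul, mul_smul_comm, mul_neg, ← mul_assoc, Cf_sq]
    simp [sub_eq_add_neg]
  rw [← Tf_cross i, ← mul_assoc, ← mul_assoc, ← mul_assoc, h1]

variable (q d aa) in
theorem sys_canonical (m : ℕ) :
    Sys q d aa (m + 1) (tt q d aa (m + 1)) (c0 q d aa m) (e0 q d aa m) := by
  have hlt : ∀ {i}, i + 1 < m + 1 → i < m + 1 - 1 := fun h => by omega
  have hce : c0 q d aa m * e0 q d aa m = gX F q d aa (m + 1) 0 := by
    rw [c0, e0, ← mul_assoc, Cf_sq, one_mul]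
  have h01 : ∀ h : 0 < m + 1 - 1, (0 : Fin (m + 1)) ≠ hi ⟨0, h⟩ := fun h h' => by
    have := congrArg Fin.val h'
    simp [hi] at this
  have hlo : ∀ {i} (h : i < m + 1 - 1), 0 < i → (0 : Fin (m + 1)) ≠ lo ⟨i, h⟩ := fun h h2 h' => by
    have := congrArg Fin.val h'
    simp [lo] at this
    omega
  have hhi : ∀ {i} (h : i < m + 1 - 1), (0 : Fin (m + 1)) ≠ hi ⟨i, h⟩ := fun h h' => by
    have := congrArg Fin.val h'
    simp [hi] at this
  refine ⟨Cf_sq 0, ?_, ?_, ?_, ?_, ?_, ?_, ?_, ?_, ?_, ?_⟩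
  · rw [e0]
    nth_rewrite 1 [Cf_Xf]
    rw [mul_assoc, ← mul_assoc (gC _ _ _ _ _ _), Cf_sq, one_mul, Xinvf_Xf]
  · rw [hce, poly_Xf]
  · intro i h
    rw [tt_of_lt (hlt h), Tf_sq]
  · intro i h
    rw [tt_of_lt (i := i) (by omega), tt_of_lt (i := i + 1) (by omega), Tf_braid _ _ rfl]
  · intro i j h1 h
    rw [tt_of_lt (i := i) (by omega), tt_of_lt (i := j) (by omega), Tf_far _ _ h1]
  · intro i h1 h
    rw [tt_of_lt (hlt h), c0, Tf_Cf_of_ne (hlo _ h1) (hhi _)]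
  · intro i h1 h
    rw [tt_of_lt (hlt h), e0, ← mul_assoc, Tf_Cf_of_ne (hlo _ h1) (hhi _), mul_assoc,
      Tf_Xf_of_ne (hlo _ h1) (hhi _), mul_assoc]
  · intro h
    rw [tt_of_lt (hlt h)]
    have := Tf_conj_Cf (q := q) (d := d) (aa := aa) (⟨0, hlt h⟩ : Fin (m + 1 - 1))
    change gT F q d aa (m + 1) _ * c0 q d aa m * _ = _ at this
    rw [this]
    exact Cf_Cf (h01 _)
  · intro h
    have h1 := Tf_conj_CfXf (q := q) (d := d) (aa := aa) (⟨0, hlt h⟩ : Fin (m + 1 - 1))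
    change _ * e0 q d aa m * _ = _ at h1
    have h2 : Anti (e0 q d aa m) (gC F q d aa (m + 1) (hi ⟨0, hlt h⟩) *
        gX F q d aa (m + 1) (hi ⟨0, hlt h⟩)) := by
      unfold Anti e0
      have hne := h01 (hlt h)
      calc _ = gC F q d aa (m + 1) 0 * (gX F q d aa (m + 1) 0 *
            gC F q d aa (m + 1) (hi ⟨0, hlt h⟩)) * gX F q d aa (m + 1) (hi ⟨0, hlt h⟩) := by
            simp only [mul_assoc]
        _ = (gC F q d aa (m + 1) 0 * gC F q d aa (m + 1) (hi ⟨0, hlt h⟩)) *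
            (gX F q d aa (m + 1) 0 * gX F q d aa (m + 1) (hi ⟨0, hlt h⟩)) := by
            rw [← Cf_Xf_of_ne hne.symm]; simp only [mul_assoc]
        _ = -(gC F q d aa (m + 1) (hi ⟨0, hlt h⟩) * (gC F q d aa (m + 1) 0 *
            gX F q d aa (m + 1) (hi ⟨0, hlt h⟩)) * gX F q d aa (m + 1) 0) := by
            rw [Cf_Cf hne, Xf_Xf]; simp only [mul_assoc, neg_mul]
        _ = _ := by
            rw [Cf_Xf_of_ne hne]; simp only [mul_assoc]
    rw [← h1] at h2
    rw [tt_of_lt (hlt h)]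
    refine (h2.conj (heckeUnit _ _ (Tf_sq ⟨0, hlt h⟩)) ?_ ?_).symm
    · simp only [heckeUnit, SemiconjBy, mul_assoc, Tf_inv_mul, mul_one]
    · simp only [heckeUnit, SemiconjBy, ← mul_assoc, Tf_mul_inv, one_mul]
  · intro h
    rw [tt_of_lt (hlt h)]
    have := Tf_conj_Cf (q := q) (d := d) (aa := aa) (⟨0, hlt h⟩ : Fin (m + 1 - 1))
    change gT F q d aa (m + 1) _ * c0 q d aa m * _ = _ at this
    rw [this]
    unfold Anti e0
    rw [mul_assoc, ← Cf_Xf_of_ne (h01 _).symm, ← mul_assoc, Cf_Cf (h01 _), neg_mul, mul_assoc]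

theorem subalgebra_eq_top_of_gens {n : ℕ} (B : Subalgebra F (HF F q d aa n))
    (hX : ∀ i, gX F q d aa n i ∈ B) (hXi : ∀ i, gXi F q d aa n i ∈ B)
    (hC : ∀ i, gC F q d aa n i ∈ B) (hT : ∀ i, gT F q d aa n i ∈ B) : B = ⊤ := by
  rw [eq_top_iff]
  rintro x -
  obtain ⟨y, rfl⟩ := toHF_surjective F q d aa n x
  obtain ⟨z, rfl⟩ := RingQuot.mkAlgHom_surjective F (Rel F q n) y
  induction z using FreeAlgebra.induction with
  | grade0 r => simp only [AlgHom.commutes]; exact B.algebraMap_mem r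
  | grade1 g =>
    cases g with
    | X i => exact hX i
    | Xinv i => exact hXi i
    | C i => exact hC i
    | T i => exact hT i
  | mul a b ha hb => rw [map_mul, map_mul]; exact B.mul_mem ha hb
  | add a b ha hb => rw [map_add, map_add]; exact B.add_mem ha hb

theorem subalgebra_eq_top {m : ℕ} (B : Subalgebra F (HF F q d aa (m + 1)))
    (hc : c0 q d aa m ∈ B) (he : e0 q d aa m ∈ B)
    (ht : ∀ i, i < m → tt q d aa (m + 1) i ∈ B) : B = ⊤ := by
  have hT : ∀ i, gT F q d aa (m + 1) i ∈ B := fun i => by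
    have := ht i (by have := i.isLt; omega)
    rwa [tt_of_lt i.2] at this
  have h1 : ∀ i (h : i < m + 1),
      gC F q d aa (m + 1) ⟨i, h⟩ ∈ B ∧ gX F q d aa (m + 1) ⟨i, h⟩ ∈ B := by
    intro i
    induction i with
    | zero =>
      intro h
      refine ⟨hc, ?_⟩
      have : gX F q d aa (m + 1) 0 = c0 q d aa m * e0 q d aa m := by
        rw [c0, e0, ← mul_assoc, Cf_sq, one_mul]
      change gX F q d aa (m + 1) 0 ∈ B
      rw [this]
      exact B.mul_mem hc he
    | succ i ih =>
      intro h
      obtain ⟨a1, a2⟩ := ih (by omega)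
      have hC : gC F q d aa (m + 1) ⟨i + 1, h⟩ ∈ B := by
        have := Tf_conj_Cf (q := q) (d := d) (aa := aa) (⟨i, by omega⟩ : Fin (m + 1 - 1))
        simp only [hi, lo] at this
        rw [← this]
        exact B.mul_mem (B.mul_mem (hT _) a1) (B.sub_mem (hT _) (B.smul_mem B.one_mem _))
      refine ⟨hC, ?_⟩
      have := Tf_cross (q := q) (d := d) (aa := aa) (⟨i, by omega⟩ : Fin (m + 1 - 1))
      simp only [hi, lo] at this
      rw [← this]
      exact B.mul_mem (B.mul_mem (B.add_mem (hT _) (B.smul_mem (B.mul_mem a1 hC) _)) a2) (hT _)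
  refine subalgebra_eq_top_of_gens B (fun i => (h1 i i.2).2) (fun i => ?_) (fun i => (h1 i i.2).1) hT
  have : gXi F q d aa (m + 1) i = gC F q d aa (m + 1) i * gX F q d aa (m + 1) i *
      gC F q d aa (m + 1) i := by
    rw [Cf_Xf, mul_assoc, Cf_sq, mul_one]
  rw [this]
  exact B.mul_mem (B.mul_mem (h1 i i.2).1 (h1 i i.2).2) (h1 i i.2).1

/-- The system `(t, c, e)` generates the algebra `E`. -/
def Gens {E : Type} [Ring E] [Algebra F E] (n : ℕ) (t : ℕ → E) (c e : E) : Prop :=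
  ∀ B : Subalgebra F E, c ∈ B → e ∈ B → (∀ i, i + 1 < n → t i ∈ B) → B = ⊤

variable (q d aa) in
theorem gens_canonical (m : ℕ) :
    Gens (F := F) (m + 1) (tt q d aa (m + 1)) (c0 q d aa m) (e0 q d aa m) :=
  fun B h1 h2 h3 => subalgebra_eq_top B h1 h2 fun i hi => h3 i (by omega)

section
variable {E : Type} [Ring E] [Algebra F E]

theorem Gens.hom_ext {E' : Type} [Ring E'] [Algebra F E'] {n : ℕ} {t : ℕ → E} {c e : E}
    (h : Gens (F := F) n t c e)
    {φ ψ : E →ₐ[F] E'} (hc : φ c = ψ c) (he : φ e = ψ e) (ht : ∀ i, i + 1 < n → φ (t i) = ψ (t i)) :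
    φ = ψ := by
  have := h (AlgHom.equalizer φ ψ) hc he ht
  ext x
  have hx : x ∈ AlgHom.equalizer φ ψ := by rw [this]; trivial
  exact hx

theorem Gens.induction {n : ℕ} {t : ℕ → E} {c e : E} (h : Gens (F := F) n t c e)
    {p : E → Prop} (one : p 1) (smul : ∀ (r : F) x, p x → p (r • x))
    (add : ∀ x y, p x → p y → p (x + y)) (mul : ∀ x y, p x → p y → p (x * y))
    (hc : p c) (he : p e) (ht : ∀ i, i + 1 < n → p (t i)) (x : E) : p x := by
  have alg : ∀ r : F, p (algebraMap F E r) := fun r => by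
    rw [Algebra.algebraMap_eq_smul_one]; exact smul r _ one
  have := h
    { carrier := {x | p x}
      mul_mem' := fun {a b} => mul a b
      add_mem' := fun {a b} => add a b
      algebraMap_mem' := alg } hc he ht
  have hx : x ∈ (⊤ : Subalgebra F E) := trivial
  rw [← this] at hx
  exact hx

end

variable {E : Type} [Ring E] [Algebra F E] {m : ℕ} {t : ℕ → E} {c e : E}

theorem Sys.lift_tt (S : Sys q d aa (m + 1) t c e) {i : ℕ} (h : i + 1 < m + 1) :
    S.lift (tt q d aa (m + 1) i) = t i := by
  rw [tt_of_lt (by omega), S.lift_Tf]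

theorem Sys.lift_c0 (S : Sys q d aa (m + 1) t c e) : S.lift (c0 q d aa m) = c := by
  rw [c0, S.lift_Cf]; rfl

theorem Sys.lift_e0 (S : Sys q d aa (m + 1) t c e) : S.lift (e0 q d aa m) = e := by
  rw [e0, map_mul, S.lift_Cf, S.lift_Xf, ← mul_assoc, S.cs_sq, one_mul]; rfl

theorem Sys.neg {n : ℕ} (S : Sys q d aa n t c e) : Sys q d aa n t (-c) (-e) := by
  have h : ∀ {x y z : E}, Anti x (t 0 * y * z) → Anti (-x) (t 0 * -y * z) := fun h => by
    unfold Anti at *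
    simpa using h
  refine ⟨?_, ?_, ?_, S.quad, S.braid, S.far, ?_, ?_, fun h1 => h (S.acc h1),
    fun h1 => h (S.aee h1), fun h1 => h (S.aec h1)⟩
  · simp [S.cc]
  · simp [S.ee]
  · simp [S.poly]
  · intro i h1 h2
    simp [S.tc i h1 h2]
  · intro i h1 h2
    simp [S.te i h1 h2]

theorem Sys.of_le {n n' : ℕ} (S : Sys q d aa n t c e) (h : n' ≤ n) : Sys q d aa n' t c e :=
  ⟨S.cc, S.ee, S.poly, fun i hi => S.quad i (by omega), fun i hi => S.braid i (by omega),
    fun i j h1 h2 => S.far i j h1 (by omega), fun i h1 h2 => S.tc i h1 (by omega),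
    fun i h1 h2 => S.te i h1 (by omega), fun h1 => S.acc (by omega), fun h1 => S.aee (by omega),
    fun h1 => S.aec (by omega)⟩

end Canonical

section RankOne

variable {F} {q : F} {d : ℕ} {aa : ℕ → F}

section
variable {E : Type} [Ring E] [Algebra F E]

theorem Gens.submodule_eq_top {n : ℕ} {t : ℕ → E} {c e : E} (h : Gens (F := F) n t c e)
    (W : Submodule F E) (one : 1 ∈ W) (hc : ∀ w ∈ W, c * w ∈ W) (he : ∀ w ∈ W, e * w ∈ W)
    (ht : ∀ i, i + 1 < n → ∀ w ∈ W, t i * w ∈ W) : W = ⊤ := by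
  rw [eq_top_iff]
  rintro x -
  have key : ∀ w ∈ W, x * w ∈ W := by
    refine h.induction (p := fun x => ∀ w ∈ W, x * w ∈ W) ?_ ?_ ?_ ?_ hc he ht x
    · simp
    · intro r x hx w hw
      rw [smul_mul_assoc]
      exact W.smul_mem _ (hx w hw)
    · intro x y hx hy w hw
      rw [add_mul]
      exact W.add_mem (hx w hw) (hy w hw)
    · intro x y hx hy w hw
      rw [mul_assoc]
      exact hx _ (hy w hw)
  simpa using key 1 one

end

theorem GoodPoly.sq {d : ℕ} {aa : ℕ → F} (hf : GoodPoly F d aa) : aa 0 * aa 0 = 1 := by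
  have := hf.2.2.1 d le_rfl
  rw [Nat.sub_self, hf.2.1] at this
  exact this.symm

section Basis

variable {K : Type} [Ring K] [Algebra F K] {t : ℕ → K} {c e : K}

theorem Sys.xy (S : Sys q d aa 1 t c e) : c * e * (e * c) = 1 := by
  rw [mul_assoc, ← mul_assoc e, S.ee, one_mul, S.cc]

theorem Sys.yx (S : Sys q d aa 1 t c e) : e * c * (c * e) = 1 := by
  rw [mul_assoc, ← mul_assoc c, S.cc, one_mul, S.ee]

theorem Sys.yx_pow (S : Sys q d aa 1 t c e) (m j : ℕ) :
    (e * c) ^ m * (c * e) ^ (m + j) = (c * e) ^ j := by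
  induction m with
  | zero => simp
  | succ m ih =>
    rw [pow_succ, show m + 1 + j = (m + j) + 1 by omega, pow_succ', mul_assoc,
      ← mul_assoc (e * c) (c * e), S.yx, one_mul, ih]

theorem Sys.xy_pow (S : Sys q d aa 1 t c e) (m j : ℕ) :
    (c * e) ^ (m + j) * (e * c) ^ m = (c * e) ^ j := by
  induction m with
  | zero => simp
  | succ m ih =>
    rw [pow_succ', show m + 1 + j = (m + j) + 1 by omega, pow_succ, mul_assoc,
      ← mul_assoc (c * e) (e * c), S.xy, one_mul, ih]

theorem Sys.c_x_pow (S : Sys q d aa 1 t c e) (m : ℕ) : c * (c * e) ^ m = (e * c) ^ m * c := by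
  induction m with
  | zero => simp
  | succ m ih =>
    rw [pow_succ, ← mul_assoc, ih, pow_succ, mul_assoc, ← mul_assoc c c, S.cc, one_mul,
      mul_assoc (_ ^ m), mul_assoc e c c, S.cc, mul_one]

/-- The span of the standard basis of the rank one algebra. -/
def rankOneSpan (F : Type) [Field F] {K : Type} [Ring K] [Algebra F K] (d : ℕ) (c e : K) :
    Submodule F K :=
  Submodule.span F (Set.range fun m : Fin d => (c * e) ^ (m : ℕ)) ⊔
    Submodule.span F (Set.range fun m : Fin d => (c * e) ^ (m : ℕ) * c)

theorem pow_mem_rankOneSpan {m : ℕ} (h : m < d) : (c * e) ^ m ∈ rankOneSpan F d c e :=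
  Submodule.mem_sup_left (Submodule.subset_span ⟨⟨m, h⟩, rfl⟩)

theorem pow_mul_mem_rankOneSpan {m : ℕ} (h : m < d) : (c * e) ^ m * c ∈ rankOneSpan F d c e :=
  Submodule.mem_sup_right (Submodule.subset_span ⟨⟨m, h⟩, rfl⟩)

theorem rankOneSpan_induction {p : K → Prop} (smul : ∀ (r : F) x, p x → p (r • x))
    (add : ∀ x y, p x → p y → p (x + y)) (zero : p 0) (h1 : ∀ m, m < d → p ((c * e) ^ m))
    (h2 : ∀ m, m < d → p ((c * e) ^ m * c)) {w : K} (hw : w ∈ rankOneSpan F d c e) : p w := by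
  let W : Submodule F K :=
    { carrier := {x | p x}, add_mem' := fun {a b} => add a b, zero_mem' := zero,
      smul_mem' := fun r x => smul r x }
  have : rankOneSpan F d c e ≤ W := by
    refine sup_le (Submodule.span_le.2 ?_) (Submodule.span_le.2 ?_)
    · rintro _ ⟨m, rfl⟩
      exact h1 m m.2
    · rintro _ ⟨m, rfl⟩
      exact h2 m m.2
  exact this hw

theorem Sys.x_pow_d (S : Sys q d aa 1 t c e) (hf : GoodPoly F d aa) :
    (c * e) ^ d = -∑ i ∈ Finset.range d, aa i • (c * e) ^ i := by
  have := S.poly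
  rw [Finset.sum_range_succ, hf.2.1, one_smul] at this
  exact eq_neg_of_add_eq_zero_right this

theorem Sys.y_eq (S : Sys q d aa 1 t c e) (hf : GoodPoly F d aa) :
    e * c = -∑ i ∈ Finset.range d, (aa 0 * aa (i + 1)) • (c * e) ^ i := by
  have := S.poly
  rw [Finset.sum_range_succ', pow_zero] at this
  have h1 := congrArg (fun z => (e * c) * (aa 0 • z)) this
  simp only [smul_add, mul_add, smul_smul, hf.sq, mul_zero, smul_zero, Finset.smul_sum,
    Finset.mul_sum, mul_smul_comm, one_smul, mul_one] at h1
  have h2 : ∀ i, e * c * (c * e) ^ (i + 1) = (c * e) ^ i := fun i => by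
    rw [pow_succ', ← mul_assoc, S.yx, one_mul]
  simp only [h2] at h1
  exact eq_neg_of_add_eq_zero_right h1

theorem Sys.rankOneSpan_x (S : Sys q d aa 1 t c e) (hf : GoodPoly F d aa) {w : K}
    (hw : w ∈ rankOneSpan F d c e) : c * e * w ∈ rankOneSpan F d c e := by
  have key : ∀ m, m < d → (c * e) ^ (m + 1) ∈ rankOneSpan F d c e ∧
      (c * e) ^ (m + 1) * c ∈ rankOneSpan F d c e := by
    intro m hm
    by_cases h : m + 1 < d
    · exact ⟨pow_mem_rankOneSpan h, pow_mul_mem_rankOneSpan h⟩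
    · obtain rfl : m + 1 = d := by omega
      rw [S.x_pow_d hf, neg_mul, Finset.sum_mul]
      refine ⟨Submodule.neg_mem _ (Submodule.sum_mem _ fun i hi => Submodule.smul_mem _ _ ?_),
        Submodule.neg_mem _ (Submodule.sum_mem _ fun i hi => ?_)⟩
      · exact pow_mem_rankOneSpan (Finset.mem_range.1 hi)
      · rw [smul_mul_assoc]
        exact Submodule.smul_mem _ _ (pow_mul_mem_rankOneSpan (Finset.mem_range.1 hi))
  refine rankOneSpan_induction (p := fun w => c * e * w ∈ rankOneSpan F d c e)
    ?_ ?_ ?_ ?_ ?_ hw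
  · intro r x hx
    rw [mul_smul_comm]; exact Submodule.smul_mem _ _ hx
  · intro x y hx hy
    rw [mul_add]; exact Submodule.add_mem _ hx hy
  · simp
  · intro m hm
    rw [← pow_succ']; exact (key m hm).1
  · intro m hm
    rw [← mul_assoc, ← pow_succ']; exact (key m hm).2

theorem Sys.rankOneSpan_y (S : Sys q d aa 1 t c e) (hf : GoodPoly F d aa) {w : K}
    (hw : w ∈ rankOneSpan F d c e) : e * c * w ∈ rankOneSpan F d c e := by
  have key : e * c ∈ rankOneSpan F d c e ∧ e * c * c ∈ rankOneSpan F d c e := by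
    rw [S.y_eq hf, neg_mul, Finset.sum_mul]
    refine ⟨Submodule.neg_mem _ (Submodule.sum_mem _ fun i hi => Submodule.smul_mem _ _ ?_),
      Submodule.neg_mem _ (Submodule.sum_mem _ fun i hi => ?_)⟩
    · exact pow_mem_rankOneSpan (Finset.mem_range.1 hi)
    · rw [smul_mul_assoc]
      exact Submodule.smul_mem _ _ (pow_mul_mem_rankOneSpan (Finset.mem_range.1 hi))
  have h2 : ∀ i, e * c * (c * e) ^ (i + 1) = (c * e) ^ i := fun i => by
    rw [pow_succ', ← mul_assoc, S.yx, one_mul]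
  refine rankOneSpan_induction (p := fun w => e * c * w ∈ rankOneSpan F d c e)
    ?_ ?_ ?_ ?_ ?_ hw
  · intro r x hx
    rw [mul_smul_comm]; exact Submodule.smul_mem _ _ hx
  · intro x y hx hy
    rw [mul_add]; exact Submodule.add_mem _ hx hy
  · simp
  · rintro (_ | m) hm
    · simpa using key.1
    · rw [h2]; exact pow_mem_rankOneSpan (by omega)
  · rintro (_ | m) hm
    · simpa using key.2
    · rw [← mul_assoc, h2]; exact pow_mul_mem_rankOneSpan (by omega)

theorem Sys.rankOneSpan_c (S : Sys q d aa 1 t c e) (hf : GoodPoly F d aa) {w : K}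
    (hw : w ∈ rankOneSpan F d c e) : c * w ∈ rankOneSpan F d c e := by
  have hd := hf.1
  have key : ∀ m w, w ∈ rankOneSpan F d c e → (e * c) ^ m * w ∈ rankOneSpan F d c e := by
    intro m
    induction m with
    | zero => simp
    | succ m ih =>
      intro w hw
      rw [pow_succ, mul_assoc]
      exact ih _ (S.rankOneSpan_y hf hw)
  refine rankOneSpan_induction (p := fun w => c * w ∈ rankOneSpan F d c e) ?_ ?_ ?_ ?_ ?_ hw
  · intro r x hx
    rw [mul_smul_comm]; exact Submodule.smul_mem _ _ hx
  · intro x y hx hy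
    rw [mul_add]; exact Submodule.add_mem _ hx hy
  · simp
  · intro m hm
    rw [S.c_x_pow]
    refine key m _ ?_
    simpa using pow_mul_mem_rankOneSpan (F := F) (c := c) (e := e) (m := 0) (d := d) (by omega)
  · intro m hm
    rw [← mul_assoc, S.c_x_pow, mul_assoc, S.cc]
    refine key m _ ?_
    simpa using pow_mem_rankOneSpan (F := F) (c := c) (e := e) (m := 0) (d := d) (by omega)

theorem Sys.rankOneSpan_eq_top (S : Sys q d aa 1 t c e) (hf : GoodPoly F d aa)
    (hg : Gens (F := F) 1 t c e) : rankOneSpan F d c e = ⊤ := by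
  have hd := hf.1
  refine hg.submodule_eq_top _ ?_ (fun w => S.rankOneSpan_c hf) (fun w hw => ?_) ?_
  · simpa using pow_mem_rankOneSpan (F := F) (c := c) (e := e) (m := 0) (d := d) (by omega)
  · have := S.rankOneSpan_c hf (S.rankOneSpan_x hf hw)
    rwa [← mul_assoc, ← mul_assoc, S.cc, one_mul] at this
  · intro i hi; omega

theorem rankOne_decomp (hs : rankOneSpan F d c e = ⊤) (p : K) :
    ∃ α β : Fin d → F, p = ∑ m, α m • (c * e) ^ (m : ℕ) + ∑ m, β m • ((c * e) ^ (m : ℕ) * c) := by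
  have hp : p ∈ rankOneSpan F d c e := by rw [hs]; trivial
  obtain ⟨a, ha, b, hb, rfl⟩ := Submodule.mem_sup.1 hp
  obtain ⟨α, rfl⟩ := (Submodule.mem_span_range_iff_exists_fun F).1 ha
  obtain ⟨β, rfl⟩ := (Submodule.mem_span_range_iff_exists_fun F).1 hb
  exact ⟨α, β, rfl⟩

theorem Sys.res_nondeg (S : Sys q d aa 1 t c e) (hs : rankOneSpan F d c e = ⊤) (res : K →ₗ[F] F)
    (r1 : res 1 = 1) (rx : ∀ m, 0 < m → m < d → res ((c * e) ^ m) = 0)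
    (rxc : ∀ m, res ((c * e) ^ m * c) = 0) (rcx : ∀ m, res (c * (c * e) ^ m) = 0)
    (p : K) (hp : ∀ k, res (k * p) = 0) : p = 0 := by
  obtain ⟨α, β, rfl⟩ := rankOne_decomp hs p
  have ryc : ∀ m, res ((e * c) ^ m * c) = 0 := fun m => by rw [← S.c_x_pow]; exact rcx m
  have ryxc : ∀ m j, res ((e * c) ^ m * (c * e) ^ j * c) = 0 := by
    intro m j
    rcases le_total m j with h | h
    · obtain ⟨l, rfl⟩ := Nat.exists_eq_add_of_le h
      rw [S.yx_pow, rxc]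
    · obtain ⟨l, rfl⟩ := Nat.exists_eq_add_of_le h
      have := S.yx_pow j 0
      rw [add_zero, pow_zero] at this
      rw [Nat.add_comm, pow_add, mul_assoc (_ ^ l), this, mul_one, ryc]
  have rxyc : ∀ m j, res ((c * e) ^ m * (e * c) ^ j * c) = 0 := by
    intro m j
    rcases le_total j m with h | h
    · obtain ⟨l, rfl⟩ := Nat.exists_eq_add_of_le h
      rw [S.xy_pow, rxc]
    · obtain ⟨l, rfl⟩ := Nat.exists_eq_add_of_le h
      have := S.xy_pow m 0
      rw [add_zero, pow_zero] at this
      rw [pow_add, ← mul_assoc (_ ^ m), this, one_mul, ryc]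
  have hα : ∀ m (h : m < d), α ⟨m, h⟩ = 0 := by
    intro m
    induction m using Nat.strong_induction_on with
    | _ m ih =>
      intro hm
      have h1 := hp ((e * c) ^ m)
      simp only [mul_add, Finset.mul_sum, mul_smul_comm, map_add, map_sum, map_smul, ← mul_assoc,
        ryxc, smul_zero, Finset.sum_const_zero, add_zero] at h1
      rw [Finset.sum_eq_single ⟨m, hm⟩] at h1
      · have := S.yx_pow m 0
        rw [add_zero, pow_zero] at this
        simpa [this, r1] using h1
      · rintro ⟨j, hj⟩ - hne
        have hne' : j ≠ m := fun h => hne (Fin.ext h)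
        rcases lt_or_gt_of_ne hne' with h | h
        · rw [ih j h hj, zero_smul]
        · obtain ⟨l, rfl⟩ := Nat.exists_eq_add_of_lt h
          have := S.yx_pow m (l + 1)
          rw [← add_assoc] at this
          simp only [this]
          rw [rx _ (by omega) (by omega), smul_zero]
      · simp
  have hβ : ∀ i m (h : m < d), d - 1 - m = i → β ⟨m, h⟩ = 0 := by
    intro i
    induction i using Nat.strong_induction_on with
    | _ i ih =>
      intro m hm hi
      have h1 := hp ((c * e) ^ m * c)
      have e1 : ∀ j, (c * e) ^ m * (e * c) ^ j * c * c = (c * e) ^ m * (e * c) ^ j := fun j => by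
        rw [mul_assoc, S.cc, mul_one]
      have e2 : ∀ j, (c * e) ^ m * c * (c * e) ^ j = (c * e) ^ m * (e * c) ^ j * c := fun j => by
        rw [mul_assoc (_ ^ m), S.c_x_pow, ← mul_assoc]
      simp only [mul_add, Finset.mul_sum, mul_smul_comm, map_add, map_sum, map_smul, ← mul_assoc _ _ c,
        e1, e2, rxyc, smul_zero, Finset.sum_const_zero, zero_add] at h1
      rw [Finset.sum_eq_single ⟨m, hm⟩] at h1
      · have := S.xy_pow m 0
        rw [add_zero, pow_zero] at this
        simpa [this, r1] using h1
      · rintro ⟨j, hj⟩ - hne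
        have hne' : j ≠ m := fun h => hne (Fin.ext h)
        rcases lt_or_gt_of_ne hne' with h | h
        · obtain ⟨l, rfl⟩ := Nat.exists_eq_add_of_lt h
          have := S.xy_pow j (l + 1)
          rw [← add_assoc] at this
          simp only [this]
          rw [rx _ (by omega) (by omega), smul_zero]
        · rw [ih (d - 1 - j) (by omega) j hj rfl, zero_smul]
      · simp
  have z1 : α = 0 := funext fun m => hα m m.2
  have z2 : β = 0 := funext fun m => hβ _ m m.2 rfl
  simp [z1, z2]

end Basis

end RankOne

section Residue

variable {F} {q : F} {d : ℕ} {aa : ℕ → F}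

/-- The polynomial `f` with the given coefficients. -/
noncomputable def fpoly (d : ℕ) (aa : ℕ → F) : Polynomial F :=
  ∑ i ∈ Finset.range (d + 1), Polynomial.C (aa i) * Polynomial.X ^ i

theorem aeval_fpoly {L : Type} [CommRing L] [Algebra F L] (x : L) :
    Polynomial.aeval x (fpoly d aa) = ∑ i ∈ Finset.range (d + 1), aa i • x ^ i := by
  simp [fpoly, Algebra.smul_def]

theorem degree_lower_sum_lt (d : ℕ) (aa : ℕ → F) :
    (∑ i ∈ Finset.range d, Polynomial.C (aa i) * Polynomial.X ^ i : Polynomial F).degree <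
      (d : WithBot ℕ) := by
  rw [← Polynomial.mem_degreeLT]
  refine Submodule.sum_mem _ fun i hi => ?_
  rw [Polynomial.mem_degreeLT]
  exact lt_of_le_of_lt (Polynomial.degree_C_mul_X_pow_le i _)
    (by exact_mod_cast Finset.mem_range.1 hi)

theorem fpoly_monic (hf : GoodPoly F d aa) : (fpoly d aa).Monic := by
  unfold fpoly
  rw [Finset.sum_range_succ, hf.2.1, add_comm, map_one, one_mul]
  exact Polynomial.monic_X_pow_add (degree_lower_sum_lt d aa)

theorem fpoly_degree (hf : GoodPoly F d aa) : (fpoly d aa).degree = d := by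
  unfold fpoly
  rw [Finset.sum_range_succ, hf.2.1, add_comm, map_one, one_mul]
  refine (Polynomial.degree_add_eq_left_of_degree_lt ?_).trans (Polynomial.degree_X_pow d)
  rw [Polynomial.degree_X_pow]
  exact degree_lower_sum_lt d aa

theorem fpoly_reciprocal (hf : GoodPoly F d aa) {L : Type} [CommRing L] [Algebra F L] {x y : L}
    (hxy : x * y = 1) (h : Polynomial.aeval x (fpoly d aa) = 0) :
    Polynomial.aeval y (fpoly d aa) = 0 := by
  rw [aeval_fpoly] at *
  have h1 : y ^ d * ∑ i ∈ Finset.range (d + 1), aa i • x ^ i =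
      aa 0 • ∑ i ∈ Finset.range (d + 1), aa i • y ^ i := by
    rw [Finset.smul_sum, Finset.mul_sum, ← Finset.sum_range_reflect]
    refine Finset.sum_congr rfl fun i hi => ?_
    have hi' : i ≤ d := by have := Finset.mem_range.1 hi; omega
    have e1 : d + 1 - 1 - i = d - i := by omega
    rw [e1, hf.2.2.1 (d - i) (by omega), show d - (d - i) = i by omega, mul_smul_comm, ← mul_smul]
    congr 1
    nth_rewrite 1 [show d = i + (d - i) by omega]
    rw [pow_add, mul_assoc, ← mul_pow, mul_comm y x, hxy, one_pow, mul_one]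
  rw [h, mul_zero] at h1
  have h2 := congrArg (fun z => aa 0 • z) h1
  simp only [smul_zero, smul_smul, hf.sq, one_smul] at h2
  exact h2.symm

theorem exists_root_inv (hf : GoodPoly F d aa) :
    ∃ y : AdjoinRoot (fpoly d aa), AdjoinRoot.root (fpoly d aa) * y = 1 := by
  have h := AdjoinRoot.aeval_eq (f := fpoly d aa) (fpoly d aa)
  rw [AdjoinRoot.mk_self, aeval_fpoly, Finset.sum_range_succ', pow_zero] at h
  refine ⟨-aa 0 • ∑ i ∈ Finset.range d, aa (i + 1) • AdjoinRoot.root (fpoly d aa) ^ i, ?_⟩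
  have h1 : AdjoinRoot.root (fpoly d aa) *
      ∑ i ∈ Finset.range d, aa (i + 1) • AdjoinRoot.root (fpoly d aa) ^ i = -(aa 0 • 1) := by
    rw [← eq_neg_of_add_eq_zero_left h, Finset.mul_sum]
    exact Finset.sum_congr rfl fun i _ => by rw [pow_succ', mul_smul_comm]
  rw [mul_smul_comm, h1, smul_neg, neg_smul, neg_neg, smul_smul, hf.sq, one_smul]

theorem exists_reciprocal_involution (hf : GoodPoly F d aa) :
    ∃ ι : AdjoinRoot (fpoly d aa) →ₐ[F] AdjoinRoot (fpoly d aa),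
      (∀ z, ι (ι z) = z) ∧
        AdjoinRoot.root (fpoly d aa) * ι (AdjoinRoot.root (fpoly d aa)) = 1 := by
  obtain ⟨y, hy⟩ := exists_root_inv hf
  have h0 : Polynomial.aeval (AdjoinRoot.root (fpoly d aa)) (fpoly d aa) = 0 := by
    rw [AdjoinRoot.aeval_eq, AdjoinRoot.mk_self]
  have h1 := fpoly_reciprocal hf hy h0
  let ι : AdjoinRoot (fpoly d aa) →ₐ[F] AdjoinRoot (fpoly d aa) :=
    AdjoinRoot.liftAlgHom (fpoly d aa) (Algebra.ofId F _) y h1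
  have hr : ι (AdjoinRoot.root (fpoly d aa)) = y :=
    AdjoinRoot.lift_root h1
  refine ⟨ι, fun z => ?_, by rw [hr]; exact hy⟩
  have h2 : ι (ι (AdjoinRoot.root (fpoly d aa))) = AdjoinRoot.root (fpoly d aa) := by
    rw [hr]
    have h3 := congrArg ι hy
    rw [map_mul, hr, map_one] at h3
    calc ι y = AdjoinRoot.root (fpoly d aa) * y * ι y := by rw [hy, one_mul]
      _ = _ := by rw [mul_assoc, h3, mul_one]
  have : ι.comp ι = AlgHom.id F _ := AdjoinRoot.algHom_ext h2
  exact DFunLike.congr_fun this z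

theorem exists_res (hf : GoodPoly F d aa) :
    ∃ res : HF F q d aa 1 →ₗ[F] F, res 1 = 1 ∧
      (∀ m, 0 < m → m < d → res ((c0 q d aa 0 * e0 q d aa 0) ^ m) = 0) ∧
      (∀ m, res ((c0 q d aa 0 * e0 q d aa 0) ^ m * c0 q d aa 0) = 0) ∧
      ∀ m, res (c0 q d aa 0 * (c0 q d aa 0 * e0 q d aa 0) ^ m) = 0 := by
  obtain ⟨f, hfdef⟩ : ∃ f, f = fpoly d aa := ⟨_, rfl⟩
  have hex := exists_reciprocal_involution hf
  rw [← hfdef] at hex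
  obtain ⟨ι, hι, hr⟩ := hex
  let L := AdjoinRoot f
  let cop : Module.End F (L × L) :=
    LinearMap.prod (ι.toLinearMap ∘ₗ LinearMap.snd F L L) (ι.toLinearMap ∘ₗ LinearMap.fst F L L)
  let xop : Module.End F (L × L) :=
    LinearMap.prodMap (LinearMap.mulLeft F (AdjoinRoot.root f))
      (LinearMap.mulLeft F (AdjoinRoot.root f))
  have hc : ∀ z, cop z = (ι z.2, ι z.1) := fun z => rfl
  have hx : ∀ z, xop z = (AdjoinRoot.root f * z.1, AdjoinRoot.root f * z.2) := fun z => rfl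
  have hcc : cop * cop = 1 := by
    refine LinearMap.ext fun z => ?_
    simp [Module.End.mul_apply, hc, hι]
  have hxp : ∀ m z, (xop ^ m) z = (AdjoinRoot.root f ^ m * z.1, AdjoinRoot.root f ^ m * z.2) := by
    intro m
    induction m with
    | zero => simp
    | succ m ih =>
      intro z
      rw [pow_succ, Module.End.mul_apply, ih, hx, pow_succ]
      simp only [mul_assoc]
  have hcx : cop * (cop * xop) = xop := by rw [← mul_assoc, hcc, one_mul]
  have S : Sys q d aa 1 (fun _ => 1) cop (cop * xop) := by
    refine ⟨hcc, ?_, ?_, ?_, ?_, ?_, ?_, ?_, ?_, ?_, ?_⟩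
    · refine LinearMap.ext fun z => ?_
      simp only [Module.End.mul_apply, hc, hx, map_mul, hι, Module.End.one_apply, ← mul_assoc, hr,
        one_mul]
      rfl
    · rw [hcx]
      refine LinearMap.ext fun z => ?_
      have h0 := aeval_fpoly (d := d) (aa := aa) (AdjoinRoot.root f)
      rw [AdjoinRoot.aeval_eq, ← hfdef, AdjoinRoot.mk_self] at h0
      simp only [LinearMap.sum_apply, LinearMap.smul_apply, hxp]
      ext
      · simp only [Prod.fst_sum, Prod.smul_fst, ← smul_mul_assoc, ← Finset.sum_mul, ← h0, zero_mul,
          LinearMap.zero_apply, Prod.fst_zero]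
      · simp only [Prod.snd_sum, Prod.smul_snd, ← smul_mul_assoc, ← Finset.sum_mul, ← h0, zero_mul,
          LinearMap.zero_apply, Prod.snd_zero]
    all_goals intros; omega
  have hmon : f.Monic := hfdef ▸ fpoly_monic hf
  let res : HF F q d aa 1 →ₗ[F] F :=
    Polynomial.lcoeff F 0 ∘ₗ AdjoinRoot.modByMonicHom hmon ∘ₗ LinearMap.fst F L L ∘ₗ
      LinearMap.applyₗ ((1, 0) : L × L) ∘ₗ S.lift.toLinearMap
  have hres : ∀ h, res h = (AdjoinRoot.modByMonicHom hmon (S.lift h (1, 0)).1).coeff 0 :=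
    fun h => rfl
  have hpow : ∀ m, m < d → res ((c0 q d aa 0 * e0 q d aa 0) ^ m) =
      (Polynomial.X ^ m : Polynomial F).coeff 0 := by
    intro m hm
    rw [hres, map_pow, map_mul, S.lift_c0, S.lift_e0, hcx, hxp]
    have : AdjoinRoot.root f ^ m * 1 = AdjoinRoot.mk f (Polynomial.X ^ m) := by simp
    simp only [this, AdjoinRoot.modByMonicHom_mk]
    rw [(Polynomial.modByMonic_eq_self_iff hmon).2]
    rw [hfdef, fpoly_degree hf, Polynomial.degree_X_pow]
    exact_mod_cast hm
  refine ⟨res, ?_, ?_, ?_, ?_⟩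
  · simpa using hpow 0 (by have := hf.1; omega)
  · intro m h1 h2
    rw [hpow m h2]
    simp [h1.ne]
  · intro m
    rw [hres, map_mul, map_pow, map_mul, S.lift_c0, S.lift_e0, hcx, Module.End.mul_apply, hxp, hc]
    simp
  · intro m
    rw [hres, map_mul, map_pow, map_mul, S.lift_c0, S.lift_e0, hcx, Module.End.mul_apply, hc, hxp]
    simp

variable (q d aa) in
/-- The grading automorphism of `H_{m+1}^f`. -/
noncomputable def sg (m : ℕ) : HF F q d aa (m + 1) →ₐ[F] HF F q d aa (m + 1) :=
  (sys_canonical q d aa m).neg.lift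

theorem sg_c0 (m : ℕ) : sg q d aa m (c0 q d aa m) = -c0 q d aa m := Sys.lift_c0 _

theorem sg_e0 (m : ℕ) : sg q d aa m (e0 q d aa m) = -e0 q d aa m := Sys.lift_e0 _

theorem sg_tt {m i : ℕ} (h : i + 1 < m + 1) :
    sg q d aa m (tt q d aa (m + 1) i) = tt q d aa (m + 1) i := Sys.lift_tt _ h

/-- A residue functional on the rank one algebra. -/
structure IsRes {K : Type} [Ring K] [Algebra F K] (d : ℕ) (c e : K) (σ : K →ₐ[F] K)
    (res : K →ₗ[F] F) : Prop where
  pow : ∀ m, 0 < m → m < d → res ((c * e) ^ m) = 0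
  pow_c : ∀ m, res ((c * e) ^ m * c) = 0
  even : ∀ k, res (σ k) = res k
  nondeg : ∀ p, (∀ k, res (k * p) = 0) → p = 0

theorem rankOneSpan_HF (hf : GoodPoly F d aa) :
    rankOneSpan F d (c0 q d aa 0) (e0 q d aa 0) = ⊤ :=
  (sys_canonical q d aa 0).rankOneSpan_eq_top hf (gens_canonical q d aa 0)

theorem exists_isRes (hf : GoodPoly F d aa) :
    ∃ res : HF F q d aa 1 →ₗ[F] F,
      IsRes d (c0 q d aa 0) (e0 q d aa 0) (sg q d aa 0) res := by
  obtain ⟨res, h1, h2, h3, h4⟩ := exists_res (q := q) hf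
  have S := sys_canonical q d aa 0
  have hs := rankOneSpan_HF (q := q) hf
  refine ⟨res, h2, h3, fun k => ?_, S.res_nondeg hs res h1 h2 h3 h4⟩
  have hk : k ∈ rankOneSpan F d (c0 q d aa 0) (e0 q d aa 0) := by rw [hs]; trivial
  refine rankOneSpan_induction (p := fun k => res (sg q d aa 0 k) = res k) ?_ ?_ ?_ ?_ ?_ hk
  · intro r x hx
    simp [hx]
  · intro x y hx hy
    simp [hx, hy]
  · simp
  · intro m hm
    simp [sg_c0, sg_e0]
  · intro m hm
    simp [sg_c0, sg_e0, h3]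

theorem finite_rankOne (hf : GoodPoly F d aa) : Module.Finite F (HF F q d aa 1) := by
  rw [Module.finite_def, ← rankOneSpan_HF (q := q) hf]
  exact (Submodule.fg_span (Set.finite_range _)).sup (Submodule.fg_span (Set.finite_range _))

end Residue

section Induction

open scoped TensorProduct

variable {F}

/-- The data from which a system of rank `n + 1` is induced: the rank one algebra `K` and the rank
`n` algebra `A`, with the canonical map `κ : K → A` and the grading `σ` of `K`. -/
structure Ind (q : F) (d : ℕ) (aa : ℕ → F) (n : ℕ) (K A : Type) [Ring K] [Algebra F K] [Ring A]
    [Algebra F A] where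
  (cK eK : K)
  (t : ℕ → A)
  (c e : A)
  σ : K →ₐ[F] K
  κ : K →ₐ[F] A
  gen : Gens (F := F) 1 (fun _ => (1 : K)) cK eK
  sysK : Sys q d aa 1 (fun _ => (1 : K)) cK eK
  sys : Sys q d aa n t c e
  σc : σ cK = -cK
  σe : σ eK = -eK
  κc : κ cK = c
  κe : κ eK = e
  npos : 0 < n

variable {q : F} {d : ℕ} {aa : ℕ → F} {n : ℕ} {K A : Type} [Ring K] [Algebra F K] [Ring A]
    [Algebra F A]

variable (F n K A) in
/-- The underlying space of the induced representation. -/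
abbrev IndV : Type := Fin (n + 1) → K ⊗[F] A

variable (F n K A) in
/-- The inclusion of the `k`-th summand. -/
noncomputable def wl (k : ℕ) : K ⊗[F] A →ₗ[F] IndV F n K A :=
  if h : k < n + 1 then LinearMap.single F (fun _ => K ⊗[F] A) ⟨k, h⟩ else 0

/-- A linear map out of `IndV` given on the summands. -/
noncomputable def indOp {W : Type} [AddCommGroup W] [Module F W] (f : ℕ → (K ⊗[F] A →ₗ[F] W)) :
    IndV F n K A →ₗ[F] W :=
  LinearMap.lsum F (fun _ => K ⊗[F] A) F fun i => f i

theorem indOp_wl {W : Type} [AddCommGroup W] [Module F W] (f : ℕ → (K ⊗[F] A →ₗ[F] W)) {k : ℕ}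
    (hk : k ≤ n) (z : K ⊗[F] A) : indOp f (wl F n K A k z) = f k z := by
  rw [wl, dif_pos (Nat.lt_succ_of_le hk), indOp, LinearMap.lsum_apply]
  simp only [LinearMap.sum_apply, LinearMap.comp_apply, LinearMap.proj_apply,
    LinearMap.single_apply]
  rw [Finset.sum_eq_single (⟨k, Nat.lt_succ_of_le hk⟩ : Fin (n + 1))]
  · simp
  · intro b _ hb
    rw [Pi.single_eq_of_ne hb, map_zero]
  · simp

variable (F n) in
/-- The vector `T_{k-1} ⋯ T_0 p T_0 ⋯ T_{n-1} a` of the induced representation. -/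
noncomputable def w (k : ℕ) (p : K) (a : A) : IndV F n K A := wl F n K A k (p ⊗ₜ a)

theorem indV_hom_ext {W : Type} [AddCommGroup W] [Module F W] {f g : IndV F n K A →ₗ[F] W}
    (h : ∀ k ≤ n, ∀ p a, f (w F n k p a) = g (w F n k p a)) : f = g := by
  refine LinearMap.pi_ext' fun i => TensorProduct.ext' fun p a => ?_
  have := h i (Nat.le_of_lt_succ i.2) p a
  simpa [w, wl, Nat.le_of_lt_succ i.2] using this

theorem w_add_left (k : ℕ) (p p' : K) (a : A) :
    w F n k (p + p') a = w F n k p a + w F n k p' a := by simp [w, TensorProduct.add_tmul]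

theorem w_smul_left (k : ℕ) (r : F) (p : K) (a : A) : w F n k (r • p) a = r • w F n k p a := by
  rw [w, ← TensorProduct.smul_tmul', map_smul, w]

theorem w_neg_left (k : ℕ) (p : K) (a : A) : w F n k (-p) a = -w F n k p a := by
  simp [w, TensorProduct.neg_tmul]

theorem w_zero_left (k : ℕ) (a : A) : w F n k (0 : K) a = 0 := by simp [w]

theorem w_add_right (k : ℕ) (p : K) (a a' : A) :
    w F n k p (a + a') = w F n k p a + w F n k p a' := by simp [w, TensorProduct.tmul_add]

theorem w_sub_right (k : ℕ) (p : K) (a a' : A) :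
    w F n k p (a - a') = w F n k p a - w F n k p a' := by simp [w, TensorProduct.tmul_sub]

theorem w_smul_right (k : ℕ) (r : F) (p : K) (a : A) : w F n k p (r • a) = r • w F n k p a := by
  simp [w]

theorem w_neg_right (k : ℕ) (p : K) (a : A) : w F n k p (-a) = -w F n k p a := by
  simp [w, TensorProduct.tmul_neg]

theorem w_zero_right (k : ℕ) (p : K) : w F n k p (0 : A) = 0 := by simp [w]

/-- The products `t_{j-1} ⋯ t_0`. -/
def descProd (t : ℕ → A) : ℕ → A
  | 0 => 1
  | j + 1 => t j * descProd t j

namespace Ind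

variable (I : Ind q d aa n K A)

/-- The action of `T_i`. -/
noncomputable def opT (i : ℕ) : Module.End F (IndV F n K A) :=
  indOp fun k =>
    if k = i then wl F n K A (i + 1)
    else if k = i + 1 then wl F n K A i + (q - q⁻¹) • wl F n K A (i + 1)
    else if k < i then
      wl F n K A k ∘ₗ TensorProduct.map LinearMap.id (LinearMap.mulLeft F (I.t (i - 1)))
    else wl F n K A k ∘ₗ TensorProduct.map LinearMap.id (LinearMap.mulLeft F (I.t i))

/-- The action of `C_1`. -/
noncomputable def opC : Module.End F (IndV F n K A) :=
  indOp fun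
    | 0 => wl F n K A 0 ∘ₗ TensorProduct.map (LinearMap.mulLeft F I.cK) LinearMap.id
    | k + 1 => wl F n K A (k + 1) ∘ₗ
          TensorProduct.map I.σ.toLinearMap (LinearMap.mulLeft F I.c) +
        (q - q⁻¹) • (wl F n K A 0 ∘ₗ TensorProduct.map (LinearMap.mulLeft F I.cK)
            (LinearMap.mulLeft F (descProd I.t k)) -
          wl F n K A 0 ∘ₗ TensorProduct.map I.σ.toLinearMap
            (LinearMap.mulLeft F (descProd I.t k * I.c)))

/-- The multiplication map `p ⊗ a ↦ κ(p) a`. -/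
noncomputable def act : K ⊗[F] A →ₗ[F] A :=
  LinearMap.mul' F A ∘ₗ TensorProduct.map I.κ.toLinearMap LinearMap.id

/-- The action of `C_1 X_1`. -/
noncomputable def opD : Module.End F (IndV F n K A) :=
  indOp fun
    | 0 => wl F n K A 0 ∘ₗ TensorProduct.map (LinearMap.mulLeft F I.eK) LinearMap.id
    | k + 1 => wl F n K A (k + 1) ∘ₗ
          TensorProduct.map I.σ.toLinearMap (LinearMap.mulLeft F I.e) +
        (q - q⁻¹) • (wl F n K A 0 ∘ₗ TensorProduct.mk F K A I.eK ∘ₗ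
            LinearMap.mulLeft F (descProd I.t k) ∘ₗ I.act -
          wl F n K A 0 ∘ₗ TensorProduct.mk F K A 1 ∘ₗ
            LinearMap.mulLeft F (descProd I.t k) ∘ₗ I.act ∘ₗ
            TensorProduct.map I.σ.toLinearMap (LinearMap.mulLeft F I.e))

theorem opT_eq {i : ℕ} (h : i ≤ n) (p : K) (a : A) :
    I.opT i (w F n i p a) = w F n (i + 1) p a := by
  simp [opT, w, indOp_wl _ h]

theorem opT_succ {i : ℕ} (h : i + 1 ≤ n) (p : K) (a : A) :
    I.opT i (w F n (i + 1) p a) = w F n i p a + (q - q⁻¹) • w F n (i + 1) p a := by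
  simp [opT, w, indOp_wl _ h]

theorem opT_lt {i k : ℕ} (hk : k ≤ n) (h : k < i) (p : K) (a : A) :
    I.opT i (w F n k p a) = w F n k p (I.t (i - 1) * a) := by
  simp [opT, w, indOp_wl _ hk, h.ne, h, (h.trans (Nat.lt_succ_self i)).ne]

theorem opT_gt {i k : ℕ} (hk : k ≤ n) (h : i + 1 < k) (p : K) (a : A) :
    I.opT i (w F n k p a) = w F n k p (I.t i * a) := by
  simp [opT, w, indOp_wl _ hk, h.ne', show k ≠ i by omega, show ¬ k < i by omega]

theorem opC_zero (p : K) (a : A) : I.opC (w F n 0 p a) = w F n 0 (I.cK * p) a := by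
  simp [opC, w, indOp_wl _ (Nat.zero_le n)]

theorem opC_succ {k : ℕ} (h : k + 1 ≤ n) (p : K) (a : A) :
    I.opC (w F n (k + 1) p a) = w F n (k + 1) (I.σ p) (I.c * a) +
      (q - q⁻¹) • (w F n 0 (I.cK * p) (descProd I.t k * a) -
        w F n 0 (I.σ p) (descProd I.t k * (I.c * a))) := by
  simp [opC, w, indOp_wl _ h]

theorem opD_zero (p : K) (a : A) : I.opD (w F n 0 p a) = w F n 0 (I.eK * p) a := by
  simp [opD, w, indOp_wl _ (Nat.zero_le n)]

theorem opD_succ {k : ℕ} (h : k + 1 ≤ n) (p : K) (a : A) :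
    I.opD (w F n (k + 1) p a) = w F n (k + 1) (I.σ p) (I.e * a) +
      (q - q⁻¹) • (w F n 0 I.eK (descProd I.t k * (I.κ p * a)) -
        w F n 0 1 (descProd I.t k * (I.κ (I.σ p) * (I.e * a)))) := by
  simp [opD, w, indOp_wl _ h, act]

theorem σσ (p : K) : I.σ (I.σ p) = p := by
  have : I.σ.comp I.σ = AlgHom.id F K := by
    refine I.gen.hom_ext ?_ ?_ fun i hi => by omega
    · simp [I.σc]
    · simp [I.σe]
  exact DFunLike.congr_fun this p

theorem opT_quad (i : ℕ) (hi : i + 1 < n + 1) :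
    I.opT i * I.opT i = (q - q⁻¹) • I.opT i + 1 := by
  refine indV_hom_ext fun k hk p a => ?_
  simp only [Module.End.mul_apply, LinearMap.add_apply, LinearMap.smul_apply, Module.End.one_apply]
  rcases lt_trichotomy k i with h | rfl | h
  · simp only [I.opT_lt hk h, ← mul_assoc, I.sys.quad (i - 1) (by omega), add_mul, smul_mul_assoc,
      one_mul, w_add_right, w_smul_right]
  · simp only [I.opT_eq hk, I.opT_succ (Nat.lt_succ_iff.1 hi)]
    module
  · rcases Nat.eq_or_lt_of_le h with rfl | h
    · simp only [map_add, map_smul, I.opT_eq (Nat.le_of_succ_le hk), I.opT_succ hk]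
      module
    · simp only [I.opT_gt hk h, ← mul_assoc, I.sys.quad i (by omega), add_mul, smul_mul_assoc,
        one_mul, w_add_right, w_smul_right]

theorem opT_far (i j : ℕ) (hij : i + 1 < j) (hj : j + 1 < n + 1) :
    I.opT i * I.opT j = I.opT j * I.opT i := by
  have h1 : I.t i * I.t (j - 1) = I.t (j - 1) * I.t i ∨ j = i + 2 := by
    by_cases h : j = i + 2
    · exact Or.inr h
    · exact Or.inl (I.sys.far _ _ (by omega) (by omega))
  refine indV_hom_ext fun k hk p a => ?_
  simp only [Module.End.mul_apply]
  rcases lt_trichotomy k i with h | rfl | h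
  · rw [I.opT_lt hk h, I.opT_lt hk (by omega), I.opT_lt hk h, I.opT_lt hk (by omega), ← mul_assoc,
      ← mul_assoc, I.sys.far (i - 1) (j - 1) (by omega) (by omega)]
  · rw [I.opT_lt hk (by omega), I.opT_eq hk, I.opT_eq hk, I.opT_lt (by omega) (by omega)]
  rcases Nat.eq_or_lt_of_le h with rfl | h
  · rw [I.opT_lt hk (by omega)]
    simp only [I.opT_succ hk, map_add, map_smul]
    rw [I.opT_lt (by omega) (by omega), I.opT_lt hk (by omega)]
  rcases lt_trichotomy k j with h' | rfl | h'
  · rw [I.opT_lt hk h', I.opT_gt hk h, I.opT_gt hk h, I.opT_lt hk h']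
    rw [← mul_assoc, ← mul_assoc, h1.resolve_right (by omega)]
  · rw [I.opT_eq hk, I.opT_gt hk h, I.opT_eq hk, I.opT_gt (by omega) (by omega)]
  rcases Nat.eq_or_lt_of_le h' with rfl | h'
  · rw [I.opT_gt hk h]
    simp only [I.opT_succ hk, map_add, map_smul]
    rw [I.opT_gt hk (by omega), I.opT_gt (by omega) (by omega)]
  · rw [I.opT_gt hk (by omega), I.opT_gt hk h, I.opT_gt hk h, I.opT_gt hk (by omega), ← mul_assoc,
      ← mul_assoc, I.sys.far i j (by omega) (by omega)]

theorem opT_braid (i : ℕ) (hi : i + 2 < n + 1) :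
    I.opT i * I.opT (i + 1) * I.opT i = I.opT (i + 1) * I.opT i * I.opT (i + 1) := by
  refine indV_hom_ext fun k hk p a => ?_
  simp only [Module.End.mul_apply]
  rcases lt_trichotomy k i with h | rfl | h
  · obtain ⟨i, rfl⟩ : ∃ j, i = j + 1 := ⟨i - 1, by omega⟩
    have h1 := I.sys.braid i (by omega)
    simp only [I.opT_lt hk h, I.opT_lt hk (show k < i + 1 + 1 by omega), Nat.add_sub_cancel,
      ← mul_assoc, h1]
  · rw [I.opT_eq hk, I.opT_eq (by omega), I.opT_gt (by omega) (by omega), I.opT_lt hk (by omega),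
      I.opT_eq hk, I.opT_eq (by omega), Nat.add_sub_cancel]
  obtain rfl | rfl | h : k = i + 1 ∨ k = i + 1 + 1 ∨ i + 1 + 1 < k := by omega
  · have e3 : i ≤ n := by omega
    have e1 : i + 1 + 1 ≤ n := by omega
    simp only [map_add, map_smul, I.opT_succ e1, I.opT_succ hk, I.opT_eq e3, I.opT_eq hk,
      I.opT_gt e1 (show i + 1 < i + 1 + 1 by omega), I.opT_lt e3 (show i < i + 1 by omega),
      Nat.add_sub_cancel]
  · have e2 : i + 1 ≤ n := by omega
    have e3 : i ≤ n := by omega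
    have h1 := I.sys.quad i (by omega)
    simp only [map_add, map_smul, I.opT_succ hk, I.opT_succ e2, I.opT_eq e2,
      I.opT_gt hk (show i + 1 < i + 1 + 1 by omega), I.opT_lt e3 (show i < i + 1 by omega),
      Nat.add_sub_cancel, ← mul_assoc, h1, add_mul, smul_mul_assoc, one_mul, w_add_right,
      w_smul_right]
    module
  · have h1 := I.sys.braid i (by omega)
    simp only [I.opT_gt hk h, I.opT_gt hk (by omega : i + 1 < k), ← mul_assoc, h1]

theorem opC_sq : I.opC * I.opC = 1 := by
  refine indV_hom_ext fun k hk p a => ?_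
  simp only [Module.End.mul_apply, Module.End.one_apply]
  rcases k with _ | k
  · simp only [opC_zero, ← mul_assoc, I.sysK.cc, one_mul]
  · have e2 : ∀ b, I.c * (I.c * b) = b := fun b => by rw [← mul_assoc, I.sys.cc, one_mul]
    have e3 : ∀ b, I.cK * (I.cK * b) = b := fun b => by rw [← mul_assoc, I.sysK.cc, one_mul]
    simp only [I.opC_succ hk, opC_zero, map_add, map_sub, map_smul, I.σσ, e2, e3]
    module

theorem opD_sq : I.opD * I.opD = 1 := by
  refine indV_hom_ext fun k hk p a => ?_
  simp only [Module.End.mul_apply, Module.End.one_apply]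
  have e2 : ∀ b, I.e * (I.e * b) = b := fun b => by rw [← mul_assoc, I.sys.ee, one_mul]
  rcases k with _ | k
  · simp only [opD_zero, ← mul_assoc, I.sysK.ee, one_mul]
  · simp only [I.opD_succ hk, opD_zero, map_add, map_sub, map_smul, I.σσ, e2, I.sysK.ee, mul_one]
    module

theorem t_mul_descProd_gt (j i : ℕ) (hij : j < i) (hi : i + 1 < n) :
    I.t i * descProd I.t j = descProd I.t j * I.t i := by
  induction j with
  | zero => simp [descProd]
  | succ j ih =>
    rw [descProd, mul_assoc, ← ih (by omega), ← mul_assoc, ← mul_assoc,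
      I.sys.far j i (by omega) hi]

theorem t_mul_descProd_lt (j i : ℕ) (hij : i + 2 ≤ j) (hj : j < n) :
    I.t i * descProd I.t j = descProd I.t j * I.t (i + 1) := by
  induction j, hij using Nat.le_induction with
  | base =>
    have h1 := I.t_mul_descProd_gt i (i + 1) (by omega) (by omega)
    rw [descProd, descProd, mul_assoc, mul_assoc, ← h1, ← mul_assoc, ← mul_assoc, ← mul_assoc,
      ← mul_assoc, I.sys.braid i (by omega)]
  | succ j hij ih =>
    rw [descProd, mul_assoc, ← ih (by omega), ← mul_assoc, ← mul_assoc,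
      I.sys.far i j (by omega) (by omega)]

theorem opT_opC (i : ℕ) (h0 : 0 < i) (hi : i + 1 < n + 1) : I.opT i * I.opC = I.opC * I.opT i := by
  obtain ⟨i, rfl⟩ : ∃ j, i = j + 1 := ⟨i - 1, by omega⟩
  refine indV_hom_ext fun k hk p a => ?_
  simp only [Module.End.mul_apply]
  have z := I.opT_lt (Nat.zero_le n) h0
  simp only [Nat.add_sub_cancel] at z
  rcases k with _ | k
  · simp only [opC_zero, z]
  obtain h | rfl | rfl | h : k < i ∨ k = i ∨ k = i + 1 ∨ i + 1 < k := by omega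
  · have h1 := I.sys.tc i (by omega) (by omega)
    have h2 := I.t_mul_descProd_gt k i h (by omega)
    simp only [I.opC_succ hk, I.opT_lt hk (show k + 1 < i + 1 by omega), map_add, map_sub, map_smul, z,
      Nat.add_sub_cancel, ← mul_assoc, h1, h2]
    simp only [mul_assoc, h1]
  · simp only [I.opC_succ hk, I.opT_eq hk, map_add, map_sub, map_smul, z,
      I.opC_succ (show k + 1 + 1 ≤ n by omega), descProd, mul_assoc]
  · have h1 := I.sys.quad i (by omega)
    simp only [I.opC_succ hk, I.opT_succ hk, map_add, map_sub, map_smul, z,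
      I.opC_succ (show i + 1 ≤ n by omega), descProd, ← mul_assoc, h1, add_mul, smul_mul_assoc,
      one_mul, w_add_right, w_smul_right]
    module
  · have h1 := I.sys.tc (i + 1) (by omega) (by omega)
    have h2 := I.t_mul_descProd_lt k i (by omega) (by omega)
    simp only [I.opC_succ hk, I.opT_gt hk (show i + 1 + 1 < k + 1 by omega), map_add, map_sub, map_smul, z,
      ← mul_assoc, h1, h2]
    simp only [mul_assoc, h1]

theorem t_mul_κ (i : ℕ) (h0 : 0 < i) (hi : i + 1 < n) (p : K) : I.t i * I.κ p = I.κ p * I.t i := by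
  refine I.gen.induction (p := fun p => I.t i * I.κ p = I.κ p * I.t i) (by simp) ?_ ?_ ?_ ?_ ?_
    (fun i hi => by omega) p
  · intro r x hx; simp [hx]
  · intro x y hx hy; simp [hx, hy, mul_add, add_mul]
  · intro x y hx hy; rw [map_mul, ← mul_assoc, hx, mul_assoc, hy, mul_assoc]
  · rw [I.κc, I.sys.tc i h0 hi]
  · rw [I.κe, I.sys.te i h0 hi]

theorem opT_opD (i : ℕ) (h0 : 0 < i) (hi : i + 1 < n + 1) : I.opT i * I.opD = I.opD * I.opT i := by
  obtain ⟨i, rfl⟩ : ∃ j, i = j + 1 := ⟨i - 1, by omega⟩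
  refine indV_hom_ext fun k hk p a => ?_
  simp only [Module.End.mul_apply]
  have z := I.opT_lt (Nat.zero_le n) h0
  simp only [Nat.add_sub_cancel] at z
  rcases k with _ | k
  · simp only [opD_zero, z]
  obtain h | rfl | rfl | h : k < i ∨ k = i ∨ k = i + 1 ∨ i + 1 < k := by omega
  · have h1 := I.sys.te i (by omega) (by omega)
    have h2 := I.t_mul_descProd_gt k i h (by omega)
    have h3 := I.t_mul_κ i (by omega) (by omega)
    simp only [I.opD_succ hk, I.opT_lt hk (show k + 1 < i + 1 by omega), map_add, map_sub, map_smul, z,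
      Nat.add_sub_cancel, ← mul_assoc, h1, h2]
    simp only [mul_assoc, ← h1]
    simp only [← mul_assoc, ← h3]
  · simp only [I.opD_succ hk, I.opT_eq hk, map_add, map_sub, map_smul, z,
      I.opD_succ (show k + 1 + 1 ≤ n by omega), descProd, mul_assoc]
  · have h1 := I.sys.quad i (by omega)
    simp only [I.opD_succ hk, I.opT_succ hk, map_add, map_sub, map_smul, z,
      I.opD_succ (show i + 1 ≤ n by omega), descProd, ← mul_assoc, h1, add_mul, smul_mul_assoc,
      one_mul, w_add_right, w_smul_right]
    module
  · have h1 := I.sys.te (i + 1) (by omega) (by omega)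
    have h2 := I.t_mul_descProd_lt k i (by omega) (by omega)
    have h3 := I.t_mul_κ (i + 1) (by omega) (by omega)
    simp only [I.opD_succ hk, I.opT_gt hk (show i + 1 + 1 < k + 1 by omega), map_add, map_sub, map_smul, z,
      ← mul_assoc, h1, h2]
    simp only [mul_assoc, ← h1]
    simp only [← mul_assoc, ← h3]

end Ind

end Induction

section InducedSystem

variable {F} {q : F} {d : ℕ} {aa : ℕ → F} {n : ℕ} {K A : Type} [Ring K] [Algebra F K] [Ring A]
    [Algebra F A]

namespace Ind

variable (I : Ind q d aa n K A)

/-- The inverse of `t_0`. -/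
def ti : A := I.t 0 - (q - q⁻¹) • 1

theorem ti_mul (h : 1 < n) : I.ti * I.t 0 = 1 := by
  simp [ti, sub_mul, I.sys.quad 0 h]

theorem mul_ti (h : 1 < n) : I.t 0 * I.ti = 1 := by
  simp [ti, mul_sub, I.sys.quad 0 h]

theorem e_conj (h : 1 < n) (p : K) :
    I.e * (I.t 0 * (I.κ p * I.ti)) = I.t 0 * (I.κ (I.σ p) * (I.ti * I.e)) := by
  have h1 : ∀ b, I.ti * (I.t 0 * b) = b := fun b => by rw [← mul_assoc, I.ti_mul h, one_mul]
  refine I.gen.induction (p := fun p => I.e * (I.t 0 * (I.κ p * I.ti)) =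
    I.t 0 * (I.κ (I.σ p) * (I.ti * I.e))) ?_ ?_ ?_ ?_ ?_ ?_ (fun i hi => by omega) p
  · simp only [map_one, one_mul, I.mul_ti h, ← mul_assoc, mul_one]
  · intro r x hx; simp [hx]
  · intro x y hx hy; simp [hx, hy, mul_add, add_mul]
  · intro x y hx hy
    calc _ = (I.e * (I.t 0 * (I.κ x * I.ti))) * (I.t 0 * (I.κ y * I.ti)) := by
          simp only [map_mul, mul_assoc, h1]
      _ = I.t 0 * (I.κ (I.σ x) * (I.ti * (I.e * (I.t 0 * (I.κ y * I.ti))))) := by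
          rw [hx]; simp only [mul_assoc]
      _ = _ := by rw [hy]; simp only [map_mul, mul_assoc, h1]
  · have := I.sys.aec h
    simp only [Anti, ← ti.eq_def, mul_assoc] at this
    simp [I.σc, I.κc, this]
  · have := I.sys.aee h
    simp only [Anti, ← ti.eq_def, mul_assoc] at this
    simp [I.σe, I.κe, this]

theorem c_conj (h : 1 < n) (p : K) :
    I.c * (I.ti * (I.κ p * I.t 0)) = I.ti * (I.κ (I.σ p) * (I.t 0 * I.c)) := by
  have h1 : ∀ b, I.t 0 * (I.ti * b) = b := fun b => by rw [← mul_assoc, I.mul_ti h, one_mul]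
  have h2 : ∀ b, I.ti * (I.t 0 * b) = b := fun b => by rw [← mul_assoc, I.ti_mul h, one_mul]
  have key : ∀ x, Anti x (I.t 0 * I.c * I.ti) →
      I.c * (I.ti * (x * I.t 0)) = -(I.ti * (x * (I.t 0 * I.c))) := fun x hx => by
    have h3 : x * (I.t 0 * (I.c * I.ti)) = -(I.t 0 * (I.c * (I.ti * x))) := by
      simpa only [Anti, mul_assoc] using hx
    calc _ = I.ti * ((I.t 0 * (I.c * (I.ti * x))) * I.t 0) := by simp only [mul_assoc, h2]
      _ = _ := by
        rw [← neg_eq_iff_eq_neg.2 h3]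
        simp only [neg_mul, mul_neg, mul_assoc, I.ti_mul h, mul_one]
  refine I.gen.induction (p := fun p => I.c * (I.ti * (I.κ p * I.t 0)) =
    I.ti * (I.κ (I.σ p) * (I.t 0 * I.c))) ?_ ?_ ?_ ?_ ?_ ?_ (fun i hi => by omega) p
  · simp only [map_one, one_mul, I.ti_mul h, ← mul_assoc, mul_one]
  · intro r x hx; simp [hx]
  · intro x y hx hy; simp [hx, hy, mul_add, add_mul]
  · intro x y hx hy
    calc _ = (I.c * (I.ti * (I.κ x * I.t 0))) * (I.ti * (I.κ y * I.t 0)) := by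
          simp only [map_mul, mul_assoc, h1]
      _ = I.ti * (I.κ (I.σ x) * (I.t 0 * (I.c * (I.ti * (I.κ y * I.t 0))))) := by
          rw [hx]; simp only [mul_assoc]
      _ = _ := by rw [hy]; simp only [map_mul, mul_assoc, h1]
  · simpa [I.σc, I.κc] using key _ (I.sys.acc h)
  · simpa [I.σe, I.κe] using key _ (I.sys.aec h)

/-- The inverse of `T_0`. -/
noncomputable def opTi : Module.End F (IndV F n K A) := I.opT 0 - (q - q⁻¹) • 1

theorem opTi_zero (p : K) (a : A) :
    I.opTi (w F n 0 p a) = w F n 1 p a - (q - q⁻¹) • w F n 0 p a := by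
  simp [opTi, I.opT_eq (Nat.zero_le n)]

theorem opTi_one (p : K) (a : A) : I.opTi (w F n 1 p a) = w F n 0 p a := by
  have := I.opT_succ (i := 0) I.npos p a
  simp only [zero_add] at this
  simp [opTi, this]

theorem opTi_gt {k : ℕ} (hk : k ≤ n) (h : 1 < k) (p : K) (a : A) :
    I.opTi (w F n k p a) = w F n k p (I.ti * a) := by
  simp [opTi, ti, I.opT_gt (i := 0) hk h, sub_mul, w_sub_right, w_smul_right]

theorem opT_mul_opTi : I.opT 0 * I.opTi = 1 := by
  simp [opTi, mul_sub, I.opT_quad 0 (Nat.succ_lt_succ I.npos)]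

theorem opTi_mul_opT : I.opTi * I.opT 0 = 1 := by
  simp [opTi, sub_mul, I.opT_quad 0 (Nat.succ_lt_succ I.npos)]

/-- The conjugate of `opC` by `T_0`. -/
noncomputable def opC' : Module.End F (IndV F n K A) := I.opT 0 * I.opC * I.opTi

/-- The conjugate of `opD` by `T_0`. -/
noncomputable def opD' : Module.End F (IndV F n K A) := I.opT 0 * I.opD * I.opTi

theorem opC_one (p : K) (a : A) :
    I.opC (w F n 1 p a) = w F n 1 (I.σ p) (I.c * a) +
      (q - q⁻¹) • (w F n 0 (I.cK * p) a - w F n 0 (I.σ p) (I.c * a)) := by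
  simpa [descProd] using I.opC_succ (k := 0) I.npos p a

theorem opD_one (p : K) (a : A) :
    I.opD (w F n 1 p a) = w F n 1 (I.σ p) (I.e * a) +
      (q - q⁻¹) • (w F n 0 I.eK (I.κ p * a) - w F n 0 1 (I.κ (I.σ p) * (I.e * a))) := by
  simpa [descProd] using I.opD_succ (k := 0) I.npos p a

theorem opC_two (h : 2 ≤ n) (p : K) (a : A) :
    I.opC (w F n 2 p a) = w F n 2 (I.σ p) (I.c * a) +
      (q - q⁻¹) • (w F n 0 (I.cK * p) (I.t 0 * a) - w F n 0 (I.σ p) (I.t 0 * (I.c * a))) := by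
  simpa [descProd] using I.opC_succ (k := 1) h p a

theorem opD_two (h : 2 ≤ n) (p : K) (a : A) :
    I.opD (w F n 2 p a) = w F n 2 (I.σ p) (I.e * a) +
      (q - q⁻¹) • (w F n 0 I.eK (I.t 0 * (I.κ p * a)) -
        w F n 0 1 (I.t 0 * (I.κ (I.σ p) * (I.e * a)))) := by
  simpa [descProd] using I.opD_succ (k := 1) h p a

theorem opT_zero_zero (p : K) (a : A) : I.opT 0 (w F n 0 p a) = w F n 1 p a :=
  I.opT_eq (Nat.zero_le n) p a

theorem opT_zero_one (p : K) (a : A) :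
    I.opT 0 (w F n 1 p a) = w F n 0 p a + (q - q⁻¹) • w F n 1 p a :=
  I.opT_succ (i := 0) I.npos p a

theorem opC'_zero (p : K) (a : A) : I.opC' (w F n 0 p a) = w F n 0 (I.σ p) (I.c * a) := by
  simp only [opC', Module.End.mul_apply, opTi_zero, map_sub, map_smul, opC_one, opC_zero, map_add,
    opT_zero_zero, opT_zero_one]
  module

theorem opC'_one (p : K) (a : A) : I.opC' (w F n 1 p a) = w F n 1 (I.cK * p) a := by
  simp only [opC', Module.End.mul_apply, opTi_one, opC_zero, opT_zero_zero]

theorem opC'_two (h : 2 ≤ n) (p : K) (a : A) :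
    I.opC' (w F n 2 p a) = w F n 2 (I.σ p) (I.t 0 * (I.c * (I.ti * a))) +
      (q - q⁻¹) • (w F n 1 (I.cK * p) a - w F n 1 (I.σ p) (I.t 0 * (I.c * (I.ti * a)))) := by
  have h1 : ∀ b, I.t 0 * (I.ti * b) = b := fun b => by rw [← mul_assoc, I.mul_ti h, one_mul]
  simp only [opC', Module.End.mul_apply, I.opTi_gt h one_lt_two, I.opC_two h, map_add, map_smul,
    map_sub, opT_zero_zero, I.opT_gt (i := 0) h one_lt_two, h1]

theorem opD'_zero (p : K) (a : A) :
    I.opD' (w F n 0 p a) = w F n 0 (I.σ p) (I.e * a) + (q - q⁻¹) • w F n 1 (I.σ p) (I.e * a) +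
      (q - q⁻¹) • (w F n 1 I.eK (I.κ p * a) - w F n 1 1 (I.κ (I.σ p) * (I.e * a))) -
        (q - q⁻¹) • w F n 1 (I.eK * p) a := by
  simp only [opD', Module.End.mul_apply, opTi_zero, map_sub, map_smul, opD_one, opD_zero, map_add,
    opT_zero_zero, opT_zero_one]

theorem opD'_one (p : K) (a : A) : I.opD' (w F n 1 p a) = w F n 1 (I.eK * p) a := by
  simp only [opD', Module.End.mul_apply, opTi_one, opD_zero, opT_zero_zero]

theorem e_e (b : A) : I.e * (I.e * b) = b := by rw [← mul_assoc, I.sys.ee, one_mul]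

theorem c_c (b : A) : I.c * (I.c * b) = b := by rw [← mul_assoc, I.sys.cc, one_mul]

theorem eK_eK (b : K) : I.eK * (I.eK * b) = b := by rw [← mul_assoc, I.sysK.ee, one_mul]

theorem cK_cK (b : K) : I.cK * (I.cK * b) = b := by rw [← mul_assoc, I.sysK.cc, one_mul]

theorem opD'_zero_e (a : A) : I.opD' (w F n 0 I.eK a) = -w F n 0 I.eK (I.e * a) := by
  simp only [opD'_zero, I.σe, I.κe, map_neg, w_neg_left, w_neg_right, neg_mul, e_e, I.sysK.ee]
  module

theorem opD'_zero_one (a : A) : I.opD' (w F n 0 (1 : K) a) = w F n 0 1 (I.e * a) := by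
  simp only [opD'_zero, map_one, one_mul, mul_one]
  module

theorem opD'_two (h : 2 ≤ n) (p : K) (a : A) :
    I.opD' (w F n 2 p a) = w F n 2 (I.σ p) (I.t 0 * (I.e * (I.ti * a))) +
      (q - q⁻¹) • (w F n 1 I.eK (I.t 0 * (I.κ p * (I.ti * a))) -
        w F n 1 1 (I.t 0 * (I.κ (I.σ p) * (I.e * (I.ti * a))))) := by
  simp only [opD', Module.End.mul_apply, I.opTi_gt h one_lt_two, I.opD_two h, map_add, map_smul,
    map_sub, opT_zero_zero, I.opT_gt (i := 0) h one_lt_two]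

theorem opT_opTi (i : ℕ) (h0 : 1 < i) (hi : i + 1 < n + 1) :
    Commute (I.opT i) I.opTi := by
  have h1 : Commute (I.opT i) (I.opT 0) := (I.opT_far 0 i h0 hi).symm
  exact h1.sub_right ((Commute.one_right _).smul_right _)

theorem opT_opC' (i : ℕ) (h0 : 1 < i) (hi : i + 1 < n + 1) : Commute (I.opT i) I.opC' := by
  have h1 : Commute (I.opT i) (I.opT 0) := (I.opT_far 0 i h0 hi).symm
  have h2 : Commute (I.opT i) I.opC := I.opT_opC i (by omega) hi
  exact (h1.mul_right h2).mul_right (I.opT_opTi i h0 hi)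

theorem opT_opD' (i : ℕ) (h0 : 1 < i) (hi : i + 1 < n + 1) : Commute (I.opT i) I.opD' := by
  have h1 : Commute (I.opT i) (I.opT 0) := (I.opT_far 0 i h0 hi).symm
  have h2 : Commute (I.opT i) I.opD := I.opT_opD i (by omega) hi
  exact (h1.mul_right h2).mul_right (I.opT_opTi i h0 hi)

theorem end_ext_low {P Q : Module.End F (IndV F n K A)}
    (hP : ∀ i, 1 < i → i + 1 < n + 1 → Commute (I.opT i) P)
    (hQ : ∀ i, 1 < i → i + 1 < n + 1 → Commute (I.opT i) Q)
    (h0 : ∀ p a, P (w F n 0 p a) = Q (w F n 0 p a)) (h1 : ∀ p a, P (w F n 1 p a) = Q (w F n 1 p a))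
    (h2 : 2 ≤ n → ∀ p a, P (w F n 2 p a) = Q (w F n 2 p a)) : P = Q := by
  have key : ∀ k, 2 ≤ k → k ≤ n → ∀ p a, P (w F n k p a) = Q (w F n k p a) := by
    intro k hk
    induction k, hk using Nat.le_induction with
    | base => exact h2
    | succ k hk ih =>
      intro hn p a
      have a1 := DFunLike.congr_fun (hP k hk (by omega)).eq (w F n k p a)
      have a2 := DFunLike.congr_fun (hQ k hk (by omega)).eq (w F n k p a)
      simp only [Module.End.mul_apply, I.opT_eq (Nat.le_of_succ_le hn)] at a1 a2
      rw [← a1, ← a2, ih (by omega)]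
  refine indV_hom_ext fun k hk p a => ?_
  obtain rfl | rfl | h : k = 0 ∨ k = 1 ∨ 2 ≤ k := by omega
  · exact h0 p a
  · exact h1 p a
  · exact key k h hk p a

theorem anti_of_low {P Q : Module.End F (IndV F n K A)}
    (hP : ∀ i, 1 < i → i + 1 < n + 1 → Commute (I.opT i) P)
    (hQ : ∀ i, 1 < i → i + 1 < n + 1 → Commute (I.opT i) Q)
    (h0 : ∀ p a, P (Q (w F n 0 p a)) = -Q (P (w F n 0 p a)))
    (h1 : ∀ p a, P (Q (w F n 1 p a)) = -Q (P (w F n 1 p a)))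
    (h2 : 2 ≤ n → ∀ p a, P (Q (w F n 2 p a)) = -Q (P (w F n 2 p a))) : Anti P Q :=
  I.end_ext_low (fun i hi hn => (hP i hi hn).mul_right (hQ i hi hn))
    (fun i hi hn => ((hQ i hi hn).mul_right (hP i hi hn)).neg_right) h0 h1 h2

theorem t_t (h : 1 < n) (b : A) :
    I.t 0 * (I.t 0 * b) = (q - q⁻¹) • (I.t 0 * b) + b := by
  rw [← mul_assoc, I.sys.quad 0 h, add_mul, smul_mul_assoc, one_mul]

theorem opC_opC' : Anti I.opC I.opC' := by
  refine I.anti_of_low (fun i h0 hi => I.opT_opC i (by omega) hi) I.opT_opC' ?_ ?_ ?_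
  · intro p a
    simp only [opC_zero, opC'_zero, map_mul, I.σc, neg_mul, w_neg_left, neg_neg]
  · intro p a
    simp only [opC_one, opC'_zero, opC'_one, map_add, map_smul, map_sub, map_mul, I.σc, neg_mul,
      w_neg_left, cK_cK, c_c, I.σσ]
    module
  · intro h p a
    have h1 : ∀ b, I.c * (I.t 0 * (I.c * (I.t 0 * b))) = (q - q⁻¹) • (I.c * (I.t 0 * (I.c * b))) -
        I.t 0 * (I.c * (I.t 0 * (I.c * b))) + (q - q⁻¹) • (I.t 0 * b) := fun b => by
      have := congrArg (· * b) (I.sys.acc h)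
      simp only [mul_assoc, neg_mul, mul_sub, sub_mul, smul_mul_assoc, mul_smul_comm, one_mul,
        c_c] at this
      linear_combination (norm := module) this
    have h3 := I.t_t h
    simp only [I.opC_two h, I.opC'_two h, opC_one, opC'_zero, map_add, map_smul, map_sub,
      map_mul, I.σc, neg_mul, w_neg_left, cK_cK, I.σσ]
    simp only [ti, mul_sub, sub_mul, mul_add, mul_smul_comm, smul_mul_assoc, one_mul, c_c, h1, h3,
      w_sub_right, w_add_right, w_smul_right]
    module

theorem opD_opC' : Anti I.opD I.opC' := by
  refine I.anti_of_low (fun i h0 hi => I.opT_opD i (by omega) hi) I.opT_opC' ?_ ?_ ?_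
  · intro p a
    simp only [opD_zero, opC'_zero, map_mul, I.σe, neg_mul, w_neg_left, neg_neg]
  · intro p a
    simp only [opD_one, opC'_zero, opC'_one, map_add, map_smul, map_sub, map_mul, I.σc, I.σe, I.κc,
      neg_mul, map_neg, map_one, w_neg_left, w_neg_right, mul_assoc]
    module
  · intro h p a
    have h1 : ∀ b, I.e * (I.t 0 * (I.c * (I.t 0 * b))) = (q - q⁻¹) • (I.e * (I.t 0 * (I.c * b))) -
        I.t 0 * (I.c * (I.t 0 * (I.e * b))) + (q - q⁻¹) • (I.t 0 * (I.c * (I.e * b))) := fun b => by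
      have := congrArg (· * b) (I.sys.aec h)
      simp only [mul_assoc, neg_mul, mul_sub, sub_mul, smul_mul_assoc, mul_smul_comm,
        one_mul] at this
      linear_combination (norm := module) this
    have h2 : ∀ p b, I.t 0 * (I.κ p * (I.t 0 * (I.c * b))) =
        I.c * (I.t 0 * (I.κ (I.σ p) * (I.t 0 * b))) -
          (q - q⁻¹) • (I.c * (I.κ (I.σ p) * (I.t 0 * b))) +
          (q - q⁻¹) • (I.κ p * (I.t 0 * (I.c * b))) := fun p b => by
      have := congrArg (· * b) (I.c_conj h (I.σ p))
      simp only [ti, mul_assoc, mul_sub, sub_mul, smul_mul_assoc, mul_smul_comm, one_mul,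
        I.σσ] at this
      linear_combination (norm := module) -this
    have h3 := I.t_t h
    have h4 : ∀ p b, I.t 0 * (I.κ p * (I.e * (I.t 0 * (I.c * b)))) =
        -(I.c * (I.t 0 * (I.κ (I.σ p) * (I.e * (I.t 0 * b))))) +
          (q - q⁻¹) • (I.c * (I.κ (I.σ p) * (I.e * (I.t 0 * b)))) +
          (q - q⁻¹) • (I.κ p * (I.e * (I.t 0 * (I.c * b)))) := fun p b => by
      have := h2 (p * I.eK) b
      simp only [map_mul, I.σe, map_neg, I.κe, mul_neg, neg_mul, mul_assoc] at this
      rw [this]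
      module
    simp only [I.opD_two h, I.opC'_two h, opD_one, opC'_zero, map_add, map_smul, map_sub,
      map_mul, I.σc, I.σe, I.κc, neg_mul, map_neg, map_one, w_neg_left, w_neg_right,
      I.σσ, mul_assoc]
    simp only [ti, mul_sub, sub_mul, mul_add, mul_smul_comm, smul_mul_assoc, one_mul,
      h1, h2, h3, h4, w_sub_right, w_add_right, w_smul_right, w_neg_right, I.σσ]
    module

theorem opD_opD' : Anti I.opD I.opD' := by
  refine I.anti_of_low (fun i h0 hi => I.opT_opD i (by omega) hi) I.opT_opD' ?_ ?_ ?_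
  · intro p a
    simp only [opD_zero, opD_one, opD'_zero, map_add, map_smul, map_sub, map_mul, I.σe, I.κe,
      neg_mul, map_neg, map_one, w_neg_left, w_neg_right, eK_eK, e_e, I.σσ, mul_assoc, one_mul]
    module
  · intro p a
    simp only [opD_one, opD'_zero_e, opD'_zero_one, opD'_one, map_add, map_smul, map_sub, map_mul,
      I.σe, I.κe, neg_mul, map_neg, w_neg_left, w_neg_right, mul_assoc]
    module
  · intro h p a
    have h2 : ∀ p b, I.t 0 * (I.κ p * (I.t 0 * (I.e * b))) =
        I.e * (I.t 0 * (I.κ (I.σ p) * (I.t 0 * b))) -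
          (q - q⁻¹) • (I.e * (I.t 0 * (I.κ (I.σ p) * b))) +
          (q - q⁻¹) • (I.t 0 * (I.κ p * (I.e * b))) := fun p b => by
      have := congrArg (· * b) (I.e_conj h (I.σ p))
      simp only [ti, mul_assoc, mul_sub, sub_mul, smul_mul_assoc, mul_smul_comm, one_mul,
        I.σσ] at this
      linear_combination (norm := module) -this
    have h1 : ∀ b, I.t 0 * (I.e * (I.t 0 * (I.e * b))) = (q - q⁻¹) • (I.e * (I.t 0 * (I.e * b))) -
        I.e * (I.t 0 * (I.e * (I.t 0 * b))) + (q - q⁻¹) • (I.t 0 * b) := fun b => by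
      have := h2 I.eK b
      simp only [I.σe, map_neg, I.κe, mul_neg, neg_mul, e_e] at this
      rw [this]
      module
    have h3 := I.t_t h
    have h4 : ∀ p b, I.t 0 * (I.κ p * (I.e * (I.t 0 * (I.e * b)))) =
        (q - q⁻¹) • (I.e * (I.t 0 * (I.κ (I.σ p) * (I.e * b)))) -
          I.e * (I.t 0 * (I.κ (I.σ p) * (I.e * (I.t 0 * b)))) +
          (q - q⁻¹) • (I.t 0 * (I.κ p * b)) := fun p b => by
      have := h2 (p * I.eK) b
      simp only [map_mul, I.σe, map_neg, I.κe, mul_neg, neg_mul, mul_assoc, e_e] at this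
      rw [this]
      module
    simp only [I.opD_two h, I.opD'_two h, opD_one, opD'_zero_e, opD'_zero_one, map_add,
      map_smul, map_sub, I.σe, I.κe, neg_mul, map_neg, map_one, one_mul,
      w_neg_left, w_neg_right, I.σσ]
    simp only [ti, mul_sub, sub_mul, mul_add, mul_smul_comm, smul_mul_assoc, one_mul, e_e,
      h1, h2, h3, h4, w_sub_right, w_add_right, w_smul_right, I.σσ]
    module

end Ind

end InducedSystem

section InducedSystem

variable {F} {q : F} {d : ℕ} {aa : ℕ → F} {n : ℕ} {K A : Type} [Ring K] [Algebra F K] [Ring A]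
    [Algebra F A]

theorem sum_pow_apply {V : Type} [AddCommGroup V] [Module F V] (P : Module.End F V) (y : A)
    (f : A →ₗ[F] V) (h : ∀ a, P (f a) = f (y * a)) (a : A) :
    (∑ i ∈ Finset.range (d + 1), aa i • P ^ i) (f a) =
      f ((∑ i ∈ Finset.range (d + 1), aa i • y ^ i) * a) := by
  have key : ∀ i, (P ^ i) (f a) = f (y ^ i * a) := fun i => by
    induction i with
    | zero => simp
    | succ i ih => rw [pow_succ', Module.End.mul_apply, ih, h, pow_succ', mul_assoc]
  simp [LinearMap.sum_apply, key, Finset.sum_mul, map_sum]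

variable (F n) in
/-- The vectors `w` as a linear function of the first tensor factor. -/
noncomputable def wLeft (k : ℕ) (a : A) : K →ₗ[F] IndV F n K A where
  toFun p := w F n k p a
  map_add' p p' := w_add_left k p p' a
  map_smul' r p := w_smul_left k r p a

variable (F n) in
/-- The vectors `w` as a linear function of the second tensor factor. -/
noncomputable def wRight (k : ℕ) (p : K) : A →ₗ[F] IndV F n K A where
  toFun a := w F n k p a
  map_add' a a' := w_add_right k p a a'
  map_smul' r a := w_smul_right k r p a

namespace Ind

variable (I : Ind q d aa n K A)

/-- The operator `f(X_1)`. -/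
noncomputable def opF : Module.End F (IndV F n K A) :=
  ∑ i ∈ Finset.range (d + 1), aa i • (I.opC * I.opD) ^ i

theorem opF_comm {P : Module.End F (IndV F n K A)} (h : Commute (I.opC * I.opD) P) :
    Commute I.opF P :=
  Commute.sum_left _ _ _ fun i _ => (h.pow_left i).smul_left _

theorem opF_zero (p : K) (a : A) : I.opF (w F n 0 p a) = 0 := by
  have := sum_pow_apply (d := d) (aa := aa) (I.opC * I.opD) (I.cK * I.eK) (wLeft F n 0 a)
    (fun p => by simp [wLeft, opC_zero, opD_zero, mul_assoc]) p
  rw [I.sysK.poly] at this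
  simpa [wLeft, opF, w_zero_left] using this

theorem opC_opTi_zero (p : K) (a : A) :
    I.opC (I.opTi (w F n 0 p a)) = I.opTi (w F n 0 (I.σ p) (I.c * a)) := by
  simp only [opTi_zero, map_sub, map_smul, opC_one, opC_zero]
  module

theorem opD_opTi_zero (a : A) :
    I.opD (I.opTi (w F n 0 (1 : K) a)) = I.opTi (w F n 0 1 (I.e * a)) := by
  simp only [opTi_zero, map_sub, map_smul, opD_one, opD_zero, map_one, one_mul, mul_one]
  module

theorem opF_one_one (a : A) : I.opF (w F n 1 (1 : K) a) = 0 := by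
  have := sum_pow_apply (d := d) (aa := aa) (I.opC * I.opD) (I.c * I.e)
    (I.opTi ∘ₗ wRight F n 0 (1 : K))
    (fun p => by simp [wRight, opC_opTi_zero, opD_opTi_zero, mul_assoc]) a
  rw [I.sys.poly, ← opF.eq_def] at this
  simpa [wRight, opTi_zero, opF_zero, w_zero_right] using this

theorem anti_opTi_conj {P Q : Module.End F (IndV F n K A)}
    (h : Anti P (I.opT 0 * Q * I.opTi)) : Anti (I.opTi * P * I.opT 0) Q := by
  refine h.conj ⟨I.opTi, I.opT 0, I.opTi_mul_opT, I.opT_mul_opTi⟩ ?_ ?_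
  · simp [SemiconjBy, mul_assoc, I.opT_mul_opTi]
  · simp [SemiconjBy, ← mul_assoc, I.opTi_mul_opT]

theorem opF_one (p : K) (a : A) : I.opF (w F n 1 p a) = 0 := by
  let W : Submodule F K := ⨅ a : A, LinearMap.ker (I.opF ∘ₗ wLeft F n 1 a)
  have mem : ∀ p, p ∈ W ↔ ∀ a, I.opF (w F n 1 p a) = 0 := fun p => by
    simp [W, Submodule.mem_iInf, wLeft]
  have hW : W = ⊤ := by
    refine I.gen.submodule_eq_top W ((mem 1).2 I.opF_one_one) ?_ ?_ fun i hi => by omega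
    · intro p hp
      refine (mem _).2 fun a => ?_
      have h1 := DFunLike.congr_fun (I.opF_comm (I.opC_opC'.mul_commute I.opD_opC')).eq (w F n 1 p a)
      simpa [opC'_one, (mem p).1 hp a] using h1
    · intro p hp
      refine (mem _).2 fun a => ?_
      have h1 := I.opF_comm ((I.anti_opTi_conj I.opD_opC').symm.mul_commute
        (I.anti_opTi_conj I.opD_opD').symm)
      have h2 := DFunLike.congr_fun h1.eq (I.opTi (w F n 0 p a))
      have h3 := DFunLike.congr_fun I.opT_mul_opTi (w F n 0 p a)
      simp only [Module.End.mul_apply, Module.End.one_apply] at h2 h3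
      rw [h3, opD_zero] at h2
      simpa [opTi_zero, opF_zero, (mem p).1 hp a] using h2
  exact (mem p).1 (hW ▸ Submodule.mem_top) a

theorem opF_eq_zero : I.opF = 0 := by
  have hT : ∀ i, 0 < i → i + 1 < n + 1 → Commute I.opF (I.opT i) := fun i h0 hi =>
    I.opF_comm (Commute.mul_left (I.opT_opC i h0 hi).symm (I.opT_opD i h0 hi).symm)
  have key : ∀ k, 1 ≤ k → k ≤ n → ∀ p a, I.opF (w F n k p a) = 0 := by
    intro k hk
    induction k, hk using Nat.le_induction with
    | base => exact fun _ => I.opF_one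
    | succ k hk ih =>
      intro hn p a
      have := DFunLike.congr_fun (hT k hk (by omega)).eq (w F n k p a)
      simpa [I.opT_eq (Nat.le_of_succ_le hn), ih (Nat.le_of_succ_le hn)] using this
  refine indV_hom_ext fun k hk p a => ?_
  rcases k with _ | k
  · exact I.opF_zero p a
  · exact key _ (by omega) hk p a

/-- The induced system. -/
theorem indSys : Sys q d aa (n + 1) I.opT I.opC I.opD :=
  ⟨I.opC_sq, I.opD_sq, I.opF_eq_zero, I.opT_quad, I.opT_braid, I.opT_far, I.opT_opC, I.opT_opD,
    fun _ => I.opC_opC', fun _ => I.opD_opD', fun _ => I.opD_opC'⟩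

end Ind

end InducedSystem

section Regular

variable {F} {E : Type} [Ring E] [Algebra F E]

/-- The products `t_0 ⋯ t_{j-1}`. -/
def ascProd (t : ℕ → E) : ℕ → E
  | 0 => 1
  | j + 1 => t 0 * ascProd (fun i => t (i + 1)) j

theorem commute_ascProd {x : E} {j : ℕ} :
    ∀ {t : ℕ → E}, (∀ i, i < j → Commute x (t i)) → Commute x (ascProd t j) := by
  induction j with
  | zero => intro t _; exact Commute.one_right x
  | succ j ih =>
    intro t h
    exact (h 0 (by omega)).mul_right (ih fun i hi => h (i + 1) (by omega))

theorem isUnit_ascProd {j : ℕ} :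
    ∀ {t : ℕ → E}, (∀ i, i < j → IsUnit (t i)) → IsUnit (ascProd t j) := by
  induction j with
  | zero => intro t _; exact isUnit_one
  | succ j ih =>
    intro t h
    exact (h 0 (by omega)).mul (ih fun i hi => h (i + 1) (by omega))

theorem mul_ascProd {j : ℕ} : ∀ {t : ℕ → E},
    (∀ i, i + 1 < j → t i * t (i + 1) * t i = t (i + 1) * t i * t (i + 1)) →
    (∀ i k, i + 1 < k → k < j → t i * t k = t k * t i) →
    ∀ i, i + 1 < j → t (i + 1) * ascProd t j = ascProd t j * t i := by
  induction j with
  | zero => intro t _ _ i hi; omega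
  | succ j ih =>
    intro t hb hfar i hi
    rcases i with _ | i
    · obtain ⟨j, rfl⟩ : ∃ k, j = k + 1 := ⟨j - 1, by omega⟩
      have h1 : Commute (t 0) (ascProd (fun i => t (i + 1 + 1)) j) :=
        commute_ascProd fun i hi => hfar 0 (i + 1 + 1) (by omega) (by omega)
      simp only [ascProd]
      rw [mul_assoc, mul_assoc, ← h1.eq]
      simp only [← mul_assoc]
      rw [hb 0 (by omega)]
    · have h1 := ih (t := fun i => t (i + 1)) (fun i hi => hb (i + 1) (by omega))
        (fun i k h1 h2 => hfar (i + 1) (k + 1) (by omega) (by omega)) i (by omega)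
      simp only [ascProd]
      rw [← mul_assoc, ← hfar 0 (i + 1 + 1) (by omega) (by omega), mul_assoc, h1, mul_assoc]

variable {q : F} {d : ℕ} {aa : ℕ → F} {n : ℕ} {K A : Type} [Ring K] [Algebra F K] [Ring A]
    [Algebra F A]

/-- Compatibility of induction data of consecutive ranks. -/
structure Compat (I : Ind q d aa n K A) (J : Ind q d aa (n + 1) K E) (ι : A →ₐ[F] E) : Prop where
  t : ∀ i, i + 1 < n → ι (I.t i) = J.t i
  c : ι I.c = J.c
  e : ι I.e = J.e
  κ : ∀ p, ι (I.κ p) = J.κ p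
  cK : I.cK = J.cK
  eK : I.eK = J.eK
  σ : I.σ = J.σ

/-- The evaluation of the induced representation in the regular representation. -/
noncomputable def ev (J : Ind q d aa (n + 1) K E) (ι : A →ₐ[F] E) : IndV F n K A →ₗ[F] E :=
  indOp fun k => LinearMap.mulLeft F (descProd J.t k) ∘ₗ LinearMap.mul' F E ∘ₗ
    TensorProduct.map J.κ.toLinearMap (LinearMap.mulLeft F (ascProd J.t n) ∘ₗ ι.toLinearMap)

theorem ev_w (J : Ind q d aa (n + 1) K E) (ι : A →ₐ[F] E) {k : ℕ} (hk : k ≤ n) (p : K) (a : A) :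
    ev J ι (w F n k p a) = descProd J.t k * (J.κ p * (ascProd J.t n * ι a)) := by
  simp [ev, w, indOp_wl _ hk]

namespace Compat

variable {I : Ind q d aa n K A} {J : Ind q d aa (n + 1) K E} {ι : A →ₐ[F] E}

theorem ev_opT (R : Compat I J ι) {i : ℕ} (hi : i + 1 < n + 1) (v : IndV F n K A) :
    ev J ι (I.opT i v) = J.t i * ev J ι v := by
  suffices h : ev J ι ∘ₗ I.opT i = LinearMap.mulLeft F (J.t i) ∘ₗ ev J ι from
    DFunLike.congr_fun h v
  have hL : ∀ i, i + 1 < n → ∀ b, J.t (i + 1) * (ascProd J.t n * b) =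
      ascProd J.t n * (J.t i * b) := fun i h b => by
    rw [← mul_assoc, mul_ascProd (fun i hi => J.sys.braid i (by omega))
      (fun i k h1 h2 => J.sys.far i k h1 (by omega)) i h, mul_assoc]
  have hκ : ∀ i, i + 1 < n → ∀ p b, J.t (i + 1) * (J.κ p * b) = J.κ p * (J.t (i + 1) * b) :=
    fun i h p b => by rw [← mul_assoc, J.t_mul_κ (i + 1) (by omega) (by omega), mul_assoc]
  refine indV_hom_ext fun k hk p a => ?_
  simp only [LinearMap.comp_apply, LinearMap.mulLeft_apply, ev_w J ι hk]
  rcases lt_trichotomy k i with h | rfl | h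
  · obtain ⟨i, rfl⟩ : ∃ j, i = j + 1 := ⟨i - 1, by omega⟩
    rw [I.opT_lt hk h, ev_w J ι hk, Nat.add_sub_cancel, map_mul, R.t i (by omega), ← mul_assoc,
      ← mul_assoc (J.t (i + 1)), J.t_mul_descProd_gt k (i + 1) h hi, mul_assoc, mul_assoc,
      hκ i (by omega), hL i (by omega)]
  · rw [I.opT_eq hk, ev_w J ι (by omega), descProd, mul_assoc]
  rcases Nat.eq_or_lt_of_le h with rfl | h
  · rw [I.opT_succ hk, map_add, map_smul, ev_w J ι hk, ev_w J ι (by omega)]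
    simp only [descProd]
    rw [← mul_assoc (J.t i), ← mul_assoc (J.t i), J.sys.quad i hi]
    simp only [add_mul, one_mul, smul_mul_assoc]
    rw [add_comm]
  · rw [I.opT_gt hk h, ev_w J ι hk, map_mul, R.t i (by omega), ← mul_assoc (J.t i) (descProd _ _),
      J.t_mul_descProd_lt k i h (by omega), mul_assoc, hκ i (by omega), hL i (by omega)]

theorem ev_eq_of_low (R : Compat I J ι) {P : Module.End F (IndV F n K A)} {x : E}
    (hP : ∀ i, 0 < i → i + 1 < n + 1 → Commute (I.opT i) P)
    (hx : ∀ i, 0 < i → i + 1 < n + 1 → Commute (J.t i) x)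
    (h0 : ∀ p a, ev J ι (P (w F n 0 p a)) = x * ev J ι (w F n 0 p a))
    (h1 : ∀ p a, ev J ι (P (w F n 1 p a)) = x * ev J ι (w F n 1 p a)) (v : IndV F n K A) :
    ev J ι (P v) = x * ev J ι v := by
  suffices h : ev J ι ∘ₗ P = LinearMap.mulLeft F x ∘ₗ ev J ι from DFunLike.congr_fun h v
  have key : ∀ k, 1 ≤ k → k ≤ n → ∀ p a,
      ev J ι (P (w F n k p a)) = x * ev J ι (w F n k p a) := by
    intro k hk
    induction k, hk using Nat.le_induction with
    | base => exact fun _ => h1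
    | succ k hk ih =>
      intro hn p a
      have a1 := DFunLike.congr_fun (hP k hk (by omega)).eq (w F n k p a)
      simp only [Module.End.mul_apply, I.opT_eq (Nat.le_of_succ_le hn)] at a1
      rw [← a1, R.ev_opT (by omega), ih (by omega), ← mul_assoc, (hx k hk (by omega)).eq, mul_assoc,
        ← R.ev_opT (by omega), I.opT_eq (Nat.le_of_succ_le hn)]
  refine indV_hom_ext fun k hk p a => ?_
  rcases k with _ | k
  · exact h0 p a
  · exact key _ (by omega) hk p a

theorem exists_ascProd (I : Ind q d aa n K A) (J : Ind q d aa (n + 1) K E) :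
    ∃ u, ascProd J.t n = J.t 0 * u ∧
      ∀ x, (∀ i, 0 < i → i + 1 < n + 1 → J.t i * x = x * J.t i) → ∀ b, x * (u * b) = u * (x * b) := by
  obtain ⟨j, hj⟩ : ∃ j, n = j + 1 := ⟨n - 1, by have := I.npos; omega⟩
  refine ⟨ascProd (fun i => J.t (i + 1)) j, (congrArg (ascProd J.t) hj).trans rfl, fun x hx b => ?_⟩
  have : Commute x (ascProd (fun i => J.t (i + 1)) j) :=
    commute_ascProd fun i hi => (hx (i + 1) (by omega) (by omega)).symm
  rw [← mul_assoc, this.eq, mul_assoc]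

theorem ev_opC (R : Compat I J ι) (v : IndV F n K A) : ev J ι (I.opC v) = J.c * ev J ι v := by
  refine R.ev_eq_of_low I.opT_opC J.sys.tc ?_ ?_ v
  · intro p a
    simp [I.opC_zero, ev_w, descProd, R.cK, J.κc, mul_assoc]
  · intro p a
    have h1 : 1 ≤ n := I.npos
    obtain ⟨u, hu, hc⟩ := exists_ascProd I J
    have h2 : ∀ b, J.c * (J.t 0 * (J.κ p * (J.t 0 * b))) =
        (q - q⁻¹) • (J.c * (J.κ p * (J.t 0 * b))) + J.t 0 * (J.κ (J.σ p) * (J.t 0 * (J.c * b))) -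
        (q - q⁻¹) • (J.κ (J.σ p) * (J.t 0 * (J.c * b))) := fun b => by
      have := congrArg (· * b) (J.c_conj (by omega) p)
      simp only [Ind.ti, mul_assoc, mul_sub, sub_mul, smul_mul_assoc, mul_smul_comm,
        one_mul] at this
      linear_combination (norm := module) this
    simp only [I.opC_one, ev_w J ι h1, ev_w J ι (Nat.zero_le n), map_add, map_sub, map_smul, descProd,
      hu, mul_assoc, one_mul, mul_one, map_mul, R.c, R.cK, R.σ, J.κc, h2, hc J.c J.sys.tc]
    module

theorem ev_opD (R : Compat I J ι) (v : IndV F n K A) : ev J ι (I.opD v) = J.e * ev J ι v := by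
  refine R.ev_eq_of_low I.opT_opD J.sys.te ?_ ?_ v
  · intro p a
    simp [I.opD_zero, ev_w, descProd, R.eK, J.κe, mul_assoc]
  · intro p a
    have h1 : 1 ≤ n := I.npos
    obtain ⟨u, hu, hc⟩ := exists_ascProd I J
    have hκ : ∀ p b, J.κ p * (u * b) = u * (J.κ p * b) := fun p =>
      hc _ fun i h0 hi => J.t_mul_κ i h0 hi p
    have h2 : ∀ b, J.e * (J.t 0 * (J.κ p * (J.t 0 * b))) =
        (q - q⁻¹) • (J.e * (J.t 0 * (J.κ p * b))) + J.t 0 * (J.κ (J.σ p) * (J.t 0 * (J.e * b))) -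
        (q - q⁻¹) • (J.t 0 * (J.κ (J.σ p) * (J.e * b))) := fun b => by
      have := congrArg (· * b) (J.e_conj (by omega) p)
      simp only [Ind.ti, mul_assoc, mul_sub, sub_mul, smul_mul_assoc, mul_smul_comm,
        one_mul] at this
      linear_combination (norm := module) this
    simp only [I.opD_one, ev_w J ι h1, ev_w J ι (Nat.zero_le n), map_add, map_sub, map_smul, descProd,
      hu, mul_assoc, one_mul, mul_one, map_mul, map_one, R.e, R.eK, R.σ, R.κ, J.κe, h2,
      hc J.e J.sys.te, hκ]
    module

end Compat

variable (q d aa)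

/-- The induction data from rank `m + 1` to rank `m + 2`. -/
noncomputable def ind (m : ℕ) : Ind q d aa (m + 1) (HF F q d aa 1) (HF F q d aa (m + 1)) where
  cK := c0 q d aa 0
  eK := e0 q d aa 0
  t := tt q d aa (m + 1)
  c := c0 q d aa m
  e := e0 q d aa m
  σ := sg q d aa 0
  κ := Sys.lift (n := 1) ((sys_canonical q d aa m).of_le (by omega))
  gen := fun B h1 h2 _ => gens_canonical q d aa 0 B h1 h2 fun i hi => by omega
  sysK :=
    have S := sys_canonical q d aa 0
    ⟨S.cc, S.ee, S.poly, fun i hi => by omega, fun i hi => by omega, fun i j h1 h2 => by omega,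
      fun i h1 h2 => by omega, fun i h1 h2 => by omega, fun h => by omega, fun h => by omega,
      fun h => by omega⟩
  sys := sys_canonical q d aa m
  σc := sg_c0 0
  σe := sg_e0 0
  κc := Sys.lift_c0 (m := 0) _
  κe := Sys.lift_e0 (m := 0) _
  npos := by omega

/-- The inclusion of rank `m + 1` into rank `m + 2`. -/
noncomputable def incl (m : ℕ) : HF F q d aa (m + 1) →ₐ[F] HF F q d aa (m + 2) :=
  Sys.lift ((sys_canonical q d aa (m + 1)).of_le (by omega))

variable {q d aa}

theorem incl_c0 (m : ℕ) : incl q d aa m (c0 q d aa m) = c0 q d aa (m + 1) := Sys.lift_c0 _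

theorem incl_e0 (m : ℕ) : incl q d aa m (e0 q d aa m) = e0 q d aa (m + 1) := Sys.lift_e0 _

theorem incl_tt {m i : ℕ} (h : i + 1 < m + 1) :
    incl q d aa m (tt q d aa (m + 1) i) = tt q d aa (m + 2) i := Sys.lift_tt _ h

variable (q d aa) in
/-- The representation of rank `m + 2` induced from rank `m + 1`. -/
noncomputable def rho (m : ℕ) : HF F q d aa (m + 2) →ₐ[F]
    Module.End F (IndV F (m + 1) (HF F q d aa 1) (HF F q d aa (m + 1))) :=
  (ind q d aa m).indSys.lift

theorem rho_tt {m i : ℕ} (h : i < m + 1) :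
    rho q d aa m (tt q d aa (m + 2) i) = (ind q d aa m).opT i :=
  Sys.lift_tt (m := m + 1) _ (by omega)

theorem rho_c0 (m : ℕ) : rho q d aa m (c0 q d aa (m + 1)) = (ind q d aa m).opC := Sys.lift_c0 _

theorem rho_e0 (m : ℕ) : rho q d aa m (e0 q d aa (m + 1)) = (ind q d aa m).opD := Sys.lift_e0 _

theorem incl_κ (m : ℕ) (p : HF F q d aa 1) :
    incl q d aa m ((ind q d aa m).κ p) = (ind q d aa (m + 1)).κ p := by
  have : (incl q d aa m).comp (ind q d aa m).κ = (ind q d aa (m + 1)).κ := by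
    refine (gens_canonical q d aa 0).hom_ext ?_ ?_ fun i hi => by omega
    · exact (congrArg _ (ind q d aa m).κc).trans ((incl_c0 m).trans (ind q d aa (m + 1)).κc.symm)
    · exact (congrArg _ (ind q d aa m).κe).trans ((incl_e0 m).trans (ind q d aa (m + 1)).κe.symm)
  exact DFunLike.congr_fun this p

theorem compat (m : ℕ) : Compat (ind q d aa m) (ind q d aa (m + 1)) (incl q d aa m) :=
  ⟨fun _ h => incl_tt h, incl_c0 m, incl_e0 m, incl_κ m, rfl, rfl, rfl⟩

theorem ev_rho (m : ℕ) (h : HF F q d aa (m + 2)) :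
    ∀ v, ev (ind q d aa (m + 1)) (incl q d aa m) (rho q d aa m h v) =
      h * ev (ind q d aa (m + 1)) (incl q d aa m) v := by
  refine (gens_canonical q d aa (m + 1)).induction (p := fun h => ∀ v,
    ev (ind q d aa (m + 1)) (incl q d aa m) (rho q d aa m h v) =
      h * ev (ind q d aa (m + 1)) (incl q d aa m) v) ?_ ?_ ?_ ?_ ?_ ?_ ?_ h
  · intro v; simp
  · intro r x hx v; simp [hx]
  · intro x y hx hy v; simp [hx, hy, add_mul]
  · intro x y hx hy v; simp [hx, hy, mul_assoc]
  · intro v; rw [rho_c0]; exact (compat m).ev_opC v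
  · intro v; rw [rho_e0]; exact (compat m).ev_opD v
  · intro i hi v; rw [rho_tt (by omega)]; exact (compat m).ev_opT hi v

theorem rho_injective (m : ℕ) (h : HF F q d aa (m + 2))
    (h0 : rho q d aa m h (w F (m + 1) 0 1 1) = 0) : h = 0 := by
  have h1 := ev_rho m h (w F (m + 1) 0 1 1)
  have h2 : IsUnit (ascProd (ind q d aa (m + 1)).t (m + 1)) := isUnit_ascProd fun i hi => by
    rw [← (ind q d aa (m + 1)).sys.unit_val (i := i) (by omega)]
    exact Units.isUnit _
  rw [h0, map_zero, ev_w _ _ (Nat.zero_le _), map_one, map_one, mul_one, one_mul] at h1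
  simp only [descProd, one_mul] at h1
  exact h2.mul_left_eq_zero.1 h1.symm

end Regular

section Coefficients

open scoped TensorProduct

variable {F} {q : F} {d : ℕ} {aa : ℕ → F} {n : ℕ} {K A : Type} [Ring K] [Algebra F K] [Ring A]
    [Algebra F A]

variable (A) in
/-- Contraction of the first tensor factor. -/
noncomputable def contr (θ : K →ₗ[F] F) : K ⊗[F] A →ₗ[F] A :=
  (TensorProduct.lid F A).toLinearMap ∘ₗ TensorProduct.map θ LinearMap.id

theorem contr_tmul (θ : K →ₗ[F] F) (p : K) (a : A) : contr A θ (p ⊗ₜ a) = θ p • a := by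
  simp [contr]

/-- The residue pairing detects zero in the tensor product. -/
theorem eq_zero_of_contr {res : K →ₗ[F] F} (nondeg : ∀ p, (∀ k, res (k * p) = 0) → p = 0)
    {z : K ⊗[F] A} (hz : ∀ k, contr A (res ∘ₗ LinearMap.mulLeft F k) z = 0) : z = 0 := by
  classical
  let b := Module.Basis.ofVectorSpace F A
  let φ := TensorProduct.equivFinsuppOfBasisRight (M := K) b
  have key : ∀ (θ : K →ₗ[F] F) z i, b.repr (contr A θ z) i = θ (φ z i) := by
    intro θ z i
    induction z using TensorProduct.induction_on with
    | zero => simp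
    | tmul p a => simp [contr_tmul, φ,
        mul_comm]
    | add x y hx hy => simp [hx, hy]
  refine φ.map_eq_zero_iff.1 (Finsupp.ext fun i => nondeg _ fun k => ?_)
  have := key (res ∘ₗ LinearMap.mulLeft F k) z i
  rw [hz k] at this
  simpa using this.symm

theorem indOp_apply {W : Type} [AddCommGroup W] [Module F W] (f : ℕ → (K ⊗[F] A →ₗ[F] W))
    (y : IndV F n K A) : indOp f y = ∑ i : Fin (n + 1), f i (y i) := by
  simp [indOp, LinearMap.lsum_apply]

variable (n A) in
/-- The contracted `k`-th coefficient. -/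
noncomputable def cf (θ : K →ₗ[F] F) (k : ℕ) : IndV F n K A →ₗ[F] A :=
  indOp fun j => if j = k then contr A θ else 0

theorem cf_w_eq (θ : K →ₗ[F] F) {k : ℕ} (hk : k ≤ n) (p : K) (a : A) :
    cf n A θ k (w F n k p a) = θ p • a := by
  simp [cf, w, indOp_wl _ hk, contr_tmul]

theorem cf_w_ne (θ : K →ₗ[F] F) {k j : ℕ} (h : j ≠ k) (p : K) (a : A) :
    cf n A θ k (w F n j p a) = 0 := by
  by_cases hj : j ≤ n
  · simp [cf, w, indOp_wl _ hj, h]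
  · simp [w, wl, show ¬ j < n + 1 by omega]

theorem cf_eq_contr (θ : K →ₗ[F] F) (k : Fin (n + 1)) (y : IndV F n K A) :
    cf n A θ k y = contr A θ (y k) := by
  rw [cf, indOp_apply, Finset.sum_eq_single k]
  · simp
  · intro b _ hb
    rw [if_neg (fun h => hb (Fin.ext h)), LinearMap.zero_apply]
  · simp

theorem descProd_succ' (t : ℕ → A) (j : ℕ) :
    descProd t (j + 1) = descProd (fun i => t (i + 1)) j * t 0 := by
  induction j with
  | zero => simp [descProd]
  | succ j ih => rw [descProd, ih, descProd, mul_assoc]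

namespace Ind

variable (I : Ind q d aa n K A)

theorem cf_opT_eq (θ : K →ₗ[F] F) {k : ℕ} (hk : k + 1 ≤ n) (y : IndV F n K A) :
    cf n A θ k (I.opT k y) = cf n A θ (k + 1) y := by
  suffices h : cf n A θ k ∘ₗ I.opT k = cf n A θ (k + 1) from DFunLike.congr_fun h y
  refine indV_hom_ext fun j hj p a => ?_
  rw [LinearMap.comp_apply]
  obtain h | rfl | rfl | h : j < k ∨ j = k ∨ j = k + 1 ∨ k + 1 < j := by omega
  · rw [I.opT_lt hj h, cf_w_ne θ (by omega), cf_w_ne θ (by omega)]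
  · rw [I.opT_eq hj, cf_w_ne θ (by omega), cf_w_ne θ (by omega)]
  · rw [I.opT_succ hj, map_add, map_smul, cf_w_ne θ (show k + 1 ≠ k by omega),
      cf_w_eq θ (by omega), cf_w_eq θ hj, smul_zero, add_zero]
  · rw [I.opT_gt hj h, cf_w_ne θ (by omega), cf_w_ne θ (by omega)]

theorem cf_zero_opT_succ (θ : K →ₗ[F] F) (i : ℕ) (y : IndV F n K A) :
    cf n A θ 0 (I.opT (i + 1) y) = I.t i * cf n A θ 0 y := by
  suffices h : cf n A θ 0 ∘ₗ I.opT (i + 1) = LinearMap.mulLeft F (I.t i) ∘ₗ cf n A θ 0 from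
    DFunLike.congr_fun h y
  refine indV_hom_ext fun j hj p a => ?_
  rw [LinearMap.comp_apply, LinearMap.comp_apply, LinearMap.mulLeft_apply]
  rcases j with _ | j
  · rw [I.opT_lt hj (by omega), cf_w_eq θ hj, cf_w_eq θ hj, mul_smul_comm, Nat.add_sub_cancel]
  rw [cf_w_ne θ (show j + 1 ≠ 0 by omega), mul_zero]
  obtain h | rfl | rfl | h : j + 1 < i + 1 ∨ j = i ∨ j = i + 1 ∨ i + 1 + 1 < j + 1 := by omega
  · rw [I.opT_lt hj h, cf_w_ne θ (by omega)]
  · rw [I.opT_eq hj, cf_w_ne θ (by omega)]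
  · rw [I.opT_succ hj, map_add, map_smul, cf_w_ne θ (by omega), cf_w_ne θ (by omega), smul_zero,
      add_zero]
  · rw [I.opT_gt hj h, cf_w_ne θ (by omega)]

theorem cf_succ_opC (θ : K →ₗ[F] F) (k : ℕ) (y : IndV F n K A) :
    cf n A θ (k + 1) (I.opC y) = I.c * cf n A (θ ∘ₗ I.σ.toLinearMap) (k + 1) y := by
  suffices h : cf n A θ (k + 1) ∘ₗ I.opC =
    LinearMap.mulLeft F I.c ∘ₗ cf n A (θ ∘ₗ I.σ.toLinearMap) (k + 1) from DFunLike.congr_fun h y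
  refine indV_hom_ext fun j hj p a => ?_
  rw [LinearMap.comp_apply, LinearMap.comp_apply, LinearMap.mulLeft_apply]
  rcases j with _ | j
  · rw [opC_zero, cf_w_ne θ (by omega), cf_w_ne _ (by omega), mul_zero]
  · rw [I.opC_succ hj, map_add, map_smul, map_sub, cf_w_ne θ (show 0 ≠ k + 1 by omega),
      cf_w_ne θ (show 0 ≠ k + 1 by omega), sub_zero, smul_zero, add_zero]
    by_cases h : j = k
    · subst h
      simp [cf_w_eq _ hj]
    · rw [cf_w_ne θ (by omega), cf_w_ne _ (by omega), mul_zero]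

theorem cf_succ_opD (θ : K →ₗ[F] F) (k : ℕ) (y : IndV F n K A) :
    cf n A θ (k + 1) (I.opD y) = I.e * cf n A (θ ∘ₗ I.σ.toLinearMap) (k + 1) y := by
  suffices h : cf n A θ (k + 1) ∘ₗ I.opD =
    LinearMap.mulLeft F I.e ∘ₗ cf n A (θ ∘ₗ I.σ.toLinearMap) (k + 1) from DFunLike.congr_fun h y
  refine indV_hom_ext fun j hj p a => ?_
  rw [LinearMap.comp_apply, LinearMap.comp_apply, LinearMap.mulLeft_apply]
  rcases j with _ | j
  · rw [opD_zero, cf_w_ne θ (by omega), cf_w_ne _ (by omega), mul_zero]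
  · rw [I.opD_succ hj, map_add, map_smul, map_sub, cf_w_ne θ (show 0 ≠ k + 1 by omega),
      cf_w_ne θ (show 0 ≠ k + 1 by omega), sub_zero, smul_zero, add_zero]
    by_cases h : j = k
    · subst h
      simp [cf_w_eq _ hj]
    · rw [cf_w_ne θ (by omega), cf_w_ne _ (by omega), mul_zero]

theorem cf_zero_opD (θ : K →ₗ[F] F) (h1 : θ 1 = 0) (he : θ I.eK = 0) (y : IndV F n K A) :
    cf n A θ 0 (I.opD y) = cf n A (θ ∘ₗ LinearMap.mulLeft F I.eK) 0 y := by
  suffices h : cf n A θ 0 ∘ₗ I.opD = cf n A (θ ∘ₗ LinearMap.mulLeft F I.eK) 0 from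
    DFunLike.congr_fun h y
  refine indV_hom_ext fun j hj p a => ?_
  rw [LinearMap.comp_apply]
  rcases j with _ | j
  · simp [opD_zero, cf_w_eq]
  · rw [I.opD_succ hj, cf_w_ne _ (by omega)]
    simp [cf_w_eq, h1, he, cf_w_ne]

/-- The triangular functionals used to recover the coefficients. -/
noncomputable def ef (θ : K →ₗ[F] F) (l : ℕ) : IndV F n K A →ₗ[F] A :=
  indOp fun k => if k < l then 0 else if k = l then contr A θ else
    (q - q⁻¹) • LinearMap.mulLeft F (descProd (fun i => I.t (l + i)) (k - l - 1)) ∘ₗ contr A θ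

theorem ef_w_lt (θ : K →ₗ[F] F) {l k : ℕ} (hk : k ≤ n) (h : k < l) (p : K) (a : A) :
    I.ef θ l (w F n k p a) = 0 := by
  simp [ef, w, indOp_wl _ hk, h]

theorem ef_w_eq (θ : K →ₗ[F] F) {l : ℕ} (hk : l ≤ n) (p : K) (a : A) :
    I.ef θ l (w F n l p a) = θ p • a := by
  simp [ef, w, indOp_wl _ hk, contr_tmul]

theorem ef_w_gt (θ : K →ₗ[F] F) {l r : ℕ} (hk : l + r + 1 ≤ n) (p : K) (a : A) :
    I.ef θ l (w F n (l + r + 1) p a) =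
      (q - q⁻¹) • θ p • (descProd (fun i => I.t (l + i)) r * a) := by
  rw [ef, w, indOp_wl _ hk, if_neg (by omega), if_neg (by omega),
    show l + r + 1 - l - 1 = r by omega]
  simp [contr_tmul]

theorem ef_succ (θ : K →ₗ[F] F) {l : ℕ} (hl : l + 1 ≤ n) (y : IndV F n K A) :
    I.ef θ (l + 1) (I.opT l y) = I.ef θ l y := by
  suffices h : I.ef θ (l + 1) ∘ₗ I.opT l = I.ef θ l from DFunLike.congr_fun h y
  refine indV_hom_ext fun j hj p a => ?_
  rw [LinearMap.comp_apply]
  obtain h | rfl | rfl | ⟨r, rfl⟩ : j < l ∨ j = l ∨ j = l + 1 ∨ ∃ r, j = l + (r + 1) + 1 := by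
    by_cases h : l + 2 ≤ j
    · exact Or.inr (Or.inr (Or.inr ⟨j - l - 2, by omega⟩))
    · omega
  · rw [I.opT_lt hj h, ef_w_lt _ _ hj (by omega), ef_w_lt _ _ hj h]
  · rw [I.opT_eq hj, ef_w_eq _ _ hl, ef_w_eq _ _ hj]
  · have := I.ef_w_gt θ (l := l) (r := 0) hj p a
    rw [add_zero] at this
    rw [I.opT_succ hj, map_add, map_smul, ef_w_lt _ _ (by omega) (by omega), ef_w_eq _ _ hj, this]
    simp [descProd]
  · have := I.ef_w_gt θ (l := l + 1) (r := r) (by omega) p (I.t l * a)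
    rw [I.opT_gt hj (by omega), show l + (r + 1) + 1 = l + 1 + r + 1 by omega, this,
      show l + 1 + r + 1 = l + (r + 1) + 1 by omega, I.ef_w_gt θ (by omega), descProd_succ']
    simp only [add_zero, mul_assoc, show ∀ i, l + 1 + i = l + (i + 1) from fun i => by omega]

theorem ef_eq_cf (θ : K →ₗ[F] F) {l : ℕ} (hl : l ≤ n) (y : IndV F n K A)
    (h : ∀ k, l < k → k ≤ n → cf n A θ k y = 0) : I.ef θ l y = cf n A θ l y := by
  rw [ef, indOp_apply, Finset.sum_eq_single (⟨l, by omega⟩ : Fin (n + 1))]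
  · simp [← cf_eq_contr]
  · intro b _ hb
    have hb' : (b : ℕ) ≠ l := fun h => hb (Fin.ext h)
    split_ifs with h1
    · simp
    · rw [LinearMap.smul_apply, LinearMap.comp_apply, ← cf_eq_contr, h b (by omega) (by omega),
        map_zero, smul_zero]
  · simp

theorem cf_zero_opC (θ : K →ₗ[F] F) (y : IndV F n K A) :
    cf n A θ 0 (I.opC y) = I.ef (θ ∘ₗ LinearMap.mulLeft F I.cK) 0 y -
      (q - q⁻¹) • ∑ k ∈ Finset.range n, descProd I.t k * cf n A θ (k + 1) (I.opC y) := by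
  suffices h : cf n A θ 0 ∘ₗ I.opC = I.ef (θ ∘ₗ LinearMap.mulLeft F I.cK) 0 -
      (q - q⁻¹) • ∑ k ∈ Finset.range n, LinearMap.mulLeft F (descProd I.t k) ∘ₗ
        cf n A θ (k + 1) ∘ₗ I.opC by
    simpa using DFunLike.congr_fun h y
  refine indV_hom_ext fun j hj p a => ?_
  simp only [LinearMap.comp_apply, LinearMap.sub_apply, LinearMap.smul_apply, LinearMap.sum_apply,
    LinearMap.mulLeft_apply, cf_succ_opC]
  rcases j with _ | j
  · rw [opC_zero, cf_w_eq _ hj, ef_w_eq _ _ hj, Finset.sum_eq_zero, smul_zero, sub_zero]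
    · rfl
    · intro k _
      rw [cf_w_ne _ (by omega), mul_zero, mul_zero]
  · have h1 := I.ef_w_gt (θ ∘ₗ LinearMap.mulLeft F I.cK) (l := 0) (r := j) (by omega) p a
    simp only [zero_add] at h1
    rw [I.opC_succ hj, h1, Finset.sum_eq_single j]
    · simp [cf_w_eq, cf_w_ne, cf_w_eq _ hj, smul_sub]
    · intro k _ hk
      rw [cf_w_ne _ (by omega), mul_zero, mul_zero]
    · intro hj'
      exact absurd (Finset.mem_range.2 (by omega)) hj'

end Ind

end Coefficients

section Nondegeneracy

open scoped TensorProduct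

variable {F} {q : F} {d : ℕ} {aa : ℕ → F} {n : ℕ} {K A : Type} [Ring K] [Algebra F K] [Ring A]
    [Algebra F A]

/-- The conditions for `U` to be a submodule of the induced representation. -/
structure Ind.Stable (I : Ind q d aa n K A) (U : Submodule F (IndV F n K A)) : Prop where
  opT : ∀ i, i + 1 < n + 1 → ∀ y ∈ U, I.opT i y ∈ U
  opC : ∀ y ∈ U, I.opC y ∈ U
  opD : ∀ y ∈ U, I.opD y ∈ U

namespace Ind.Stable

variable {I : Ind q d aa n K A} {U : Submodule F (IndV F n K A)}

theorem opTi (hU : I.Stable U) {y : IndV F n K A} (hy : y ∈ U) : I.opTi y ∈ U := by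
  rw [Ind.opTi, LinearMap.sub_apply]
  exact U.sub_mem (hU.opT 0 (Nat.succ_lt_succ I.npos) y hy) (U.smul_mem _ hy)

theorem cf_one_opTi (θ : K →ₗ[F] F) (y : IndV F n K A) :
    cf n A θ 1 (I.opTi y) = cf n A θ 0 y := by
  rw [← I.cf_opT_eq θ (k := 0) I.npos, ← Module.End.mul_apply, I.opT_mul_opTi,
    Module.End.one_apply]

/-- The residue of the zeroth coefficient vanishes as soon as it is killed by a nondegenerate
form. -/
theorem cf_res_zero (hU : I.Stable U) {res : K →ₗ[F] F} (even : ∀ k, res (I.σ k) = res k)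
    (genA : Gens (F := F) n I.t I.c I.e) {lam : A →ₗ[F] F}
    (nondeg : ∀ x, (∀ h, lam (h * x) = 0) → x = 0)
    (hlam : ∀ y ∈ U, lam (cf n A res 0 y) = 0) {y : IndV F n K A} (hy : y ∈ U) :
    cf n A res 0 y = 0 := by
  have hσ : res ∘ₗ I.σ.toLinearMap = res := LinearMap.ext even
  have key : ∀ a : A, ∃ g : Module.End F (IndV F n K A), (∀ y ∈ U, g y ∈ U) ∧
      ∀ y, cf n A res 0 (g y) = a * cf n A res 0 y := by
    refine genA.induction ?_ ?_ ?_ ?_ ?_ ?_ ?_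
    · exact ⟨1, fun y hy => hy, fun y => by simp⟩
    · rintro r x ⟨g, h1, h2⟩
      exact ⟨r • g, fun y hy => U.smul_mem _ (h1 y hy), fun y => by simp [h2]⟩
    · rintro x x' ⟨g, h1, h2⟩ ⟨g', h1', h2'⟩
      exact ⟨g + g', fun y hy => U.add_mem (h1 y hy) (h1' y hy),
        fun y => by simp [h2, h2', add_mul]⟩
    · rintro x x' ⟨g, h1, h2⟩ ⟨g', h1', h2'⟩
      exact ⟨g * g', fun y hy => h1 _ (h1' y hy), fun y => by simp [h2, h2', mul_assoc]⟩
    · refine ⟨I.opT 0 * I.opC * I.opTi, fun y hy =>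
        hU.opT 0 (Nat.succ_lt_succ I.npos) _ (hU.opC _ (hU.opTi hy)), fun y => ?_⟩
      rw [Module.End.mul_apply, Module.End.mul_apply, I.cf_opT_eq _ I.npos, I.cf_succ_opC, hσ,
        zero_add, cf_one_opTi]
    · refine ⟨I.opT 0 * I.opD * I.opTi, fun y hy =>
        hU.opT 0 (Nat.succ_lt_succ I.npos) _ (hU.opD _ (hU.opTi hy)), fun y => ?_⟩
      rw [Module.End.mul_apply, Module.End.mul_apply, I.cf_opT_eq _ I.npos, I.cf_succ_opD, hσ,
        zero_add, cf_one_opTi]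
    · intro i hi
      exact ⟨I.opT (i + 1), hU.opT _ (by omega), I.cf_zero_opT_succ res i⟩
  refine nondeg _ fun h => ?_
  obtain ⟨g, h1, h2⟩ := key h
  rw [← h2]
  exact hlam _ (h1 y hy)

theorem cf_eq_zero (hU : I.Stable U) {θ : K →ₗ[F] F} (hθ : ∀ y ∈ U, cf n A θ 0 y = 0) {k : ℕ}
    (hk : k ≤ n) : ∀ y ∈ U, cf n A θ k y = 0 := by
  induction k with
  | zero => exact hθ
  | succ k ih =>
    intro y hy
    rw [← I.cf_opT_eq θ hk]
    exact ih (by omega) _ (hU.opT k (by omega) y hy)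

theorem ef_eq_zero (hU : I.Stable U) {θ : K →ₗ[F] F} (hθ : ∀ y ∈ U, I.ef θ 0 y = 0) {l : ℕ}
    (hl : l ≤ n) : ∀ y ∈ U, I.ef θ l y = 0 := by
  induction l with
  | zero => exact hθ
  | succ l ih =>
    intro y hy
    have hq := DFunLike.congr_fun (I.opT_quad l (Nat.lt_succ_of_le hl)) y
    have : I.opT l (I.opT l y - (q - q⁻¹) • y) = y := by
      rw [map_sub, map_smul, ← Module.End.mul_apply, hq]
      simp
    rw [← this, I.ef_succ θ hl]
    exact ih (by omega) _ (U.sub_mem (hU.opT l (by omega) y hy) (U.smul_mem _ hy))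

theorem cf_zero_mulLeft_c (hU : I.Stable U) {θ : K →ₗ[F] F}
    (hθ : ∀ y ∈ U, cf n A θ 0 y = 0) :
    ∀ y ∈ U, cf n A (θ ∘ₗ LinearMap.mulLeft F I.cK) 0 y = 0 := by
  have he : ∀ y ∈ U, I.ef (θ ∘ₗ LinearMap.mulLeft F I.cK) 0 y = 0 := by
    intro y hy
    have := I.cf_zero_opC θ y
    rw [hθ _ (hU.opC y hy), Finset.sum_eq_zero, smul_zero, sub_zero] at this
    · exact this.symm
    · intro k hk
      rw [hU.cf_eq_zero hθ (Finset.mem_range.1 hk) _ (hU.opC y hy), mul_zero]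
  intro y hy
  have key : ∀ r l, l + r = n → cf n A (θ ∘ₗ LinearMap.mulLeft F I.cK) l y = 0 := by
    intro r
    induction r using Nat.strong_induction_on with
    | _ r ih =>
      intro l hl
      rw [← I.ef_eq_cf _ (by omega) y fun k h1 h2 => ih (n - k) (by omega) k (by omega)]
      exact hU.ef_eq_zero he (by omega) y hy
  exact key n 0 (by omega)

/-- A submodule of the induced representation killed by the induced form vanishes. -/
theorem eq_zero (hU : I.Stable U) {res : K →ₗ[F] F} (hres : IsRes d I.cK I.eK I.σ res)
    (hspan : rankOneSpan F d I.cK I.eK = ⊤) (genA : Gens (F := F) n I.t I.c I.e)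
    {lam : A →ₗ[F] F} (nondeg : ∀ x, (∀ h, lam (h * x) = 0) → x = 0)
    (hlam : ∀ y ∈ U, lam (cf n A res 0 y) = 0) {y : IndV F n K A} (hy : y ∈ U) : y = 0 := by
  have hx : ∀ m, m < d →
      ∀ y ∈ U, cf n A (res ∘ₗ LinearMap.mulLeft F ((I.cK * I.eK) ^ m)) 0 y = 0 := by
    intro m
    induction m with
    | zero =>
      intro _ y hy
      rw [pow_zero, LinearMap.mulLeft_one, LinearMap.comp_id]
      exact hU.cf_res_zero hres.even genA nondeg hlam hy
    | succ m ih =>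
      intro hm y hy
      have h1 := hU.cf_zero_mulLeft_c (ih (by omega)) _ (hU.opD y hy)
      rw [I.cf_zero_opD] at h1
      · rw [← h1]
        refine congrArg (fun θ => cf n A θ 0 y) (LinearMap.ext fun k => ?_)
        simp [pow_succ]
      · simpa using hres.pow_c m
      · simpa [pow_succ, mul_assoc] using hres.pow (m + 1) (by omega) hm
  have hk : ∀ k : K, ∀ y ∈ U, cf n A (res ∘ₗ LinearMap.mulLeft F k) 0 y = 0 := by
    intro k
    have hk : k ∈ rankOneSpan F d I.cK I.eK := by rw [hspan]; trivial
    have lin : ∀ k y, cf n A (res ∘ₗ LinearMap.mulLeft F k) 0 y =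
        contr A (res ∘ₗ LinearMap.mulLeft F k) (y 0) := fun k y => cf_eq_contr _ (0 : Fin (n + 1)) y
    refine rankOneSpan_induction (p := fun k => ∀ y ∈ U,
      cf n A (res ∘ₗ LinearMap.mulLeft F k) 0 y = 0) ?_ ?_ ?_ hx ?_ hk
    · intro r x hx y hy
      have : contr A (res ∘ₗ LinearMap.mulLeft F (r • x)) =
          r • contr A (res ∘ₗ LinearMap.mulLeft F x) := by
        ext p a
        simp [contr_tmul, mul_smul]
      rw [lin, this, LinearMap.smul_apply, ← lin, hx y hy, smul_zero]
    · intro x x' hx hx' y hy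
      have : contr A (res ∘ₗ LinearMap.mulLeft F (x + x')) =
          contr A (res ∘ₗ LinearMap.mulLeft F x) + contr A (res ∘ₗ LinearMap.mulLeft F x') := by
        ext p a
        simp [contr_tmul, add_mul, add_smul]
      rw [lin, this, LinearMap.add_apply, ← lin, ← lin, hx y hy, hx' y hy, add_zero]
    · intro y hy
      have : contr A (res ∘ₗ LinearMap.mulLeft F (0 : K)) = 0 := by
        ext p a
        simp [contr_tmul]
      rw [lin, this, LinearMap.zero_apply]
    · intro m hm y hy
      rw [← hU.cf_zero_mulLeft_c (hx m hm) y hy]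
      refine congrArg (fun θ => cf n A θ 0 y) (LinearMap.ext fun k => ?_)
      simp
  funext j
  refine eq_zero_of_contr hres.nondeg fun k => ?_
  rw [← cf_eq_contr]
  exact hU.cf_eq_zero (hk k) (by omega) y hy

end Ind.Stable

end Nondegeneracy

section Parity

open scoped TensorProduct

variable {F} {q : F} {d : ℕ} {aa : ℕ → F} {n : ℕ} {K A : Type} [Ring K] [Algebra F K] [Ring A]
    [Algebra F A]

/-- The parity involution of the induced representation. -/
noncomputable def Ind.par (I : Ind q d aa n K A) (σA : A →ₐ[F] A) :
    Module.End F (IndV F n K A) :=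
  indOp fun k => wl F n K A k ∘ₗ TensorProduct.map I.σ.toLinearMap σA.toLinearMap

variable (I : Ind q d aa n K A) (σA : A →ₐ[F] A)

theorem Ind.par_w {k : ℕ} (hk : k ≤ n) (p : K) (a : A) :
    I.par σA (w F n k p a) = w F n k (I.σ p) (σA a) := by
  simp [Ind.par, w, indOp_wl _ hk]

theorem map_descProd {t : ℕ → A} (ht : ∀ i, i + 1 < n → σA (t i) = t i) {k : ℕ} (hk : k < n) :
    σA (descProd t k) = descProd t k := by
  induction k with
  | zero => simp [descProd]
  | succ k ih => rw [descProd, map_mul, ht k hk, ih (by omega)]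

variable {I σA}

theorem Ind.par_opT (ht : ∀ i, i + 1 < n → σA (I.t i) = I.t i) {i : ℕ} (hi : i < n)
    (y : IndV F n K A) : I.par σA (I.opT i y) = I.opT i (I.par σA y) := by
  suffices h : I.par σA ∘ₗ I.opT i = I.opT i ∘ₗ I.par σA from DFunLike.congr_fun h y
  refine indV_hom_ext fun j hj p a => ?_
  simp only [LinearMap.comp_apply]
  obtain h | rfl | rfl | h : j < i ∨ j = i ∨ j = i + 1 ∨ i + 1 < j := by omega
  · rw [I.opT_lt hj h, I.par_w _ hj, I.par_w _ hj, I.opT_lt hj h, map_mul, ht _ (by omega)]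
  · rw [I.opT_eq hj, I.par_w _ hj, I.par_w _ (by omega), I.opT_eq hj]
  · rw [I.opT_succ hj, map_add, map_smul, I.par_w _ hj, I.par_w _ (by omega), I.opT_succ hj]
  · rw [I.opT_gt hj h, I.par_w _ hj, I.par_w _ hj, I.opT_gt hj h, map_mul, ht _ (by omega)]

theorem Ind.par_opC (ht : ∀ i, i + 1 < n → σA (I.t i) = I.t i) (hc : σA I.c = -I.c)
    (y : IndV F n K A) : I.par σA (I.opC y) = -I.opC (I.par σA y) := by
  suffices h : I.par σA ∘ₗ I.opC = -(I.opC ∘ₗ I.par σA) from DFunLike.congr_fun h y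
  refine indV_hom_ext fun j hj p a => ?_
  simp only [LinearMap.comp_apply, LinearMap.neg_apply]
  rcases j with _ | j
  · rw [opC_zero, I.par_w _ hj, I.par_w _ hj, opC_zero, map_mul, I.σc, neg_mul, w_neg_left]
  · rw [I.opC_succ hj, I.par_w _ hj, I.opC_succ hj]
    simp only [map_add, map_smul, map_sub, I.par_w _ hj, I.par_w _ (Nat.zero_le n), map_mul, I.σc,
      hc, map_descProd σA ht (show j < n by omega), neg_mul, mul_neg, w_neg_left, w_neg_right]
    module

theorem Ind.par_opD (ht : ∀ i, i + 1 < n → σA (I.t i) = I.t i) (he : σA I.e = -I.e)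
    (hκ : ∀ p, σA (I.κ p) = I.κ (I.σ p))
    (y : IndV F n K A) : I.par σA (I.opD y) = -I.opD (I.par σA y) := by
  suffices h : I.par σA ∘ₗ I.opD = -(I.opD ∘ₗ I.par σA) from DFunLike.congr_fun h y
  refine indV_hom_ext fun j hj p a => ?_
  simp only [LinearMap.comp_apply, LinearMap.neg_apply]
  rcases j with _ | j
  · rw [opD_zero, I.par_w _ hj, I.par_w _ hj, opD_zero, map_mul, I.σe, neg_mul, w_neg_left]
  · rw [I.opD_succ hj, I.par_w _ hj, I.opD_succ hj]
    simp only [map_add, map_smul, map_sub, I.par_w _ hj, I.par_w _ (Nat.zero_le n), map_mul,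
      map_one, I.σe, he, hκ, map_descProd σA ht (show j < n by omega), neg_mul, mul_neg,
      w_neg_left, w_neg_right]
    module

theorem Ind.cf_par {θ : K →ₗ[F] F} (hθ : ∀ p, θ (I.σ p) = θ p) {k : ℕ} (y : IndV F n K A) :
    cf n A θ k (I.par σA y) = σA (cf n A θ k y) := by
  suffices h : cf n A θ k ∘ₗ I.par σA = σA.toLinearMap ∘ₗ cf n A θ k from DFunLike.congr_fun h y
  refine indV_hom_ext fun j hj p a => ?_
  rw [LinearMap.comp_apply, LinearMap.comp_apply, I.par_w _ hj]
  by_cases h : j = k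
  · subst h
    rw [cf_w_eq _ hj, cf_w_eq _ hj, hθ]
    simp
  · rw [cf_w_ne _ h, cf_w_ne _ h, map_zero]

end Parity

section Form

variable {F} {q : F} {d : ℕ} {aa : ℕ → F}

theorem sg_κ (m : ℕ) (p : HF F q d aa 1) :
    sg q d aa m ((ind q d aa m).κ p) = (ind q d aa m).κ ((ind q d aa m).σ p) := by
  have : (sg q d aa m).comp (ind q d aa m).κ = (ind q d aa m).κ.comp (ind q d aa m).σ := by
    refine (gens_canonical q d aa 0).hom_ext ?_ ?_ fun i hi => by omega
    · have h1 : (ind q d aa m).κ (c0 q d aa 0) = c0 q d aa m := (ind q d aa m).κc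
      have h2 : (ind q d aa m).σ (c0 q d aa 0) = -c0 q d aa 0 := (ind q d aa m).σc
      rw [AlgHom.comp_apply, AlgHom.comp_apply, h1, h2, map_neg, h1, sg_c0]
    · have h1 : (ind q d aa m).κ (e0 q d aa 0) = e0 q d aa m := (ind q d aa m).κe
      have h2 : (ind q d aa m).σ (e0 q d aa 0) = -e0 q d aa 0 := (ind q d aa m).σe
      rw [AlgHom.comp_apply, AlgHom.comp_apply, h1, h2, map_neg, h1, sg_e0]
  exact DFunLike.congr_fun this p

theorem par_rho (m : ℕ) (h : HF F q d aa (m + 2)) :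
    ∀ v, (ind q d aa m).par (sg q d aa m) (rho q d aa m h v) =
      rho q d aa m (sg q d aa (m + 1) h) ((ind q d aa m).par (sg q d aa m) v) := by
  have ht : ∀ i, i + 1 < m + 1 → sg q d aa m ((ind q d aa m).t i) = (ind q d aa m).t i :=
    fun i hi => sg_tt hi
  refine (gens_canonical q d aa (m + 1)).induction (p := fun h => ∀ v,
    (ind q d aa m).par (sg q d aa m) (rho q d aa m h v) =
      rho q d aa m (sg q d aa (m + 1) h) ((ind q d aa m).par (sg q d aa m) v))
    ?_ ?_ ?_ ?_ ?_ ?_ ?_ h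
  · intro v
    simp
  · intro r x hx v
    simp [hx]
  · intro x y hx hy v
    simp [hx, hy]
  · intro x y hx hy v
    simp [hx, hy]
  · intro v
    rw [sg_c0, map_neg, LinearMap.neg_apply, rho_c0]
    exact Ind.par_opC ht (sg_c0 m) v
  · intro v
    rw [sg_e0, map_neg, LinearMap.neg_apply, rho_e0]
    exact Ind.par_opD ht (sg_e0 m) (sg_κ m) v
  · intro i hi v
    rw [sg_tt hi, rho_tt (by omega)]
    exact Ind.par_opT ht (by omega) v

/-- The cyclotomic algebras are finite-dimensional and carry an even nondegenerate form. -/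
theorem exists_form (hf : GoodPoly F d aa) (m : ℕ) :
    Module.Finite F (HF F q d aa (m + 1)) ∧ ∃ lam : HF F q d aa (m + 1) →ₗ[F] F,
      (∀ x, lam (sg q d aa m x) = lam x) ∧ ∀ x, (∀ h, lam (h * x) = 0) → x = 0 := by
  obtain ⟨res, hres⟩ := exists_isRes (q := q) hf
  induction m with
  | zero => exact ⟨finite_rankOne hf, res, hres.even, hres.nondeg⟩
  | succ m ih =>
    obtain ⟨hfin, lam, even, nondeg⟩ := ih
    have hfin1 := finite_rankOne (q := q) hf
    let w0 : IndV F (m + 1) (HF F q d aa 1) (HF F q d aa (m + 1)) := w F (m + 1) 0 1 1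
    obtain ⟨at0, hat0⟩ : ∃ at0 : HF F q d aa (m + 2) →ₗ[F]
        IndV F (m + 1) (HF F q d aa 1) (HF F q d aa (m + 1)), ∀ h, at0 h = rho q d aa m h w0 :=
      ⟨LinearMap.applyₗ w0 ∘ₗ (rho q d aa m).toLinearMap, fun h => rfl⟩
    have inj : Function.Injective at0 :=
      (injective_iff_map_eq_zero at0).2 fun h h0 =>
        rho_injective m h ((hat0 h).symm.trans h0)
    refine ⟨Module.Finite.of_injective at0 inj,
      lam ∘ₗ cf (m + 1) (HF F q d aa (m + 1)) res 0 ∘ₗ at0, fun x => ?_, fun x hx => ?_⟩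
    · have h1 : (ind q d aa m).par (sg q d aa m) w0 = w0 := by
        have := (ind q d aa m).par_w (sg q d aa m) (Nat.zero_le _) 1 1
        rwa [map_one, map_one] at this
      have h2 := par_rho m x w0
      rw [h1] at h2
      have h3 := Ind.cf_par (I := ind q d aa m) (σA := sg q d aa m) (θ := res) hres.even (k := 0)
        (rho q d aa m x w0)
      rw [LinearMap.comp_apply, LinearMap.comp_apply, LinearMap.comp_apply, LinearMap.comp_apply,
        hat0, hat0, ← h2, h3, even]
    · let φ : IndV F (m + 1) (HF F q d aa 1) (HF F q d aa (m + 1)) →ₗ[F] F :=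
        lam ∘ₗ cf (m + 1) (HF F q d aa (m + 1)) res 0
      let U : Submodule F (IndV F (m + 1) (HF F q d aa 1) (HF F q d aa (m + 1))) :=
        ⨅ h : HF F q d aa (m + 2), LinearMap.ker (φ ∘ₗ rho q d aa m h)
      have memU : ∀ y, y ∈ U ↔ ∀ h, φ (rho q d aa m h y) = 0 := fun y => by
        simp [U, Submodule.mem_iInf]
      have act : ∀ g y, y ∈ U → rho q d aa m g y ∈ U := fun g y hy => by
        rw [memU] at hy ⊢
        intro h
        rw [← Module.End.mul_apply, ← map_mul]
        exact hy _
      have hU : (ind q d aa m).Stable U := by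
        refine ⟨fun i hi y hy => ?_, fun y hy => ?_, fun y hy => ?_⟩
        · rw [← rho_tt (by omega)]
          exact act _ y hy
        · rw [← rho_c0]
          exact act _ y hy
        · rw [← rho_e0]
          exact act _ y hy
      refine rho_injective m x ?_
      refine hU.eq_zero (res := res) hres (rankOneSpan_HF hf) (gens_canonical q d aa m) nondeg
        (fun y hy => ?_) ?_
      · have := (memU y).1 hy 1
        rwa [map_one, Module.End.one_apply] at this
      · rw [memU]
        intro h
        have := hx h
        rw [LinearMap.comp_apply, LinearMap.comp_apply, hat0, map_mul, Module.End.mul_apply] at this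
        exact this

end Form

section Frobenius

variable {F}

/-- An even nondegenerate form induces an even isomorphism onto the dual. -/
theorem exists_dual_equiv {A : Type} [Ring A] [Algebra F A] [Module.Finite F A] (δ : A →ₐ[F] A)
    (hδ : ∀ x, δ (δ x) = x) (lam : A →ₗ[F] F) (even : ∀ x, lam (δ x) = lam x)
    (nondeg : ∀ x, (∀ h, lam (h * x) = 0) → x = 0) :
    ∃ Φ : A ≃ₗ[F] (A →ₗ[F] F), (∀ a x b : A, Φ (a * x) b = Φ x (b * a)) ∧
      ∀ x b : A, Φ (δ x) b = Φ x (δ b) := by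
  let φ : A →ₗ[F] (A →ₗ[F] F) := (LinearMap.mul F A).flip.compr₂ lam
  have hφ : ∀ x b, φ x b = lam (b * x) := fun x b => rfl
  have inj : Function.Injective φ := (injective_iff_map_eq_zero φ).2 fun x hx =>
    nondeg x fun h => by rw [← hφ, hx, LinearMap.zero_apply]
  have hr : Module.finrank F A = Module.finrank F (A →ₗ[F] F) :=
    (Subspace.dual_finrank_eq (K := F) (V := A)).symm
  refine ⟨LinearEquiv.ofInjectiveOfFinrankEq φ inj hr, fun a x b => ?_, fun x b => ?_⟩
  · change φ _ _ = φ _ _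
    rw [hφ, hφ, mul_assoc]
  · change φ _ _ = φ _ _
    rw [hφ, hφ, ← even, map_mul, hδ]

variable {q : F} {d : ℕ} {aa : ℕ → F}

theorem grading_involutive {n : ℕ} {δ : HF F q d aa n →ₐ[F] HF F q d aa n}
    (hX : ∀ i, δ (gX F q d aa n i) = gX F q d aa n i)
    (hXi : ∀ i, δ (gXi F q d aa n i) = gXi F q d aa n i)
    (hC : ∀ i, δ (gC F q d aa n i) = -gC F q d aa n i)
    (hT : ∀ i, δ (gT F q d aa n i) = gT F q d aa n i) (x : HF F q d aa n) : δ (δ x) = x := by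
  have := subalgebra_eq_top_of_gens (AlgHom.equalizer (δ.comp δ) (AlgHom.id F _))
    (fun i => by simp [hX]) (fun i => by simp [hXi]) (fun i => by simp [hC])
    (fun i => by simp [hT])
  have hx : x ∈ AlgHom.equalizer (δ.comp δ) (AlgHom.id F _) := by rw [this]; trivial
  exact hx

theorem eq_algebraMap_rank_zero (x : HF F q d aa 0) :
    ∃ r : F, x = algebraMap F (HF F q d aa 0) r := by
  have := subalgebra_eq_top_of_gens (⊥ : Subalgebra F (HF F q d aa 0))
    (fun i => i.elim0) (fun i => i.elim0) (fun i => i.elim0) (fun i => i.elim0)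
  have hx : x ∈ (⊥ : Subalgebra F (HF F q d aa 0)) := by rw [this]; trivial
  obtain ⟨r, hr⟩ := Algebra.mem_bot.1 hx
  exact ⟨r, hr.symm⟩

theorem exists_augmentation_rank_zero (q : F) (d : ℕ) (aa : ℕ → F) :
    Nonempty (HF F q d aa 0 →ₐ[F] F) := by
  let ε₀ : FA F 0 →ₐ[F] F := FreeAlgebra.lift F fun _ => 0
  let ε₁ : H F q 0 →ₐ[F] F := RingQuot.liftAlgHom F ⟨ε₀, fun _ _ h => by
    cases h <;> exact Fin.elim0 ‹Fin 0›⟩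
  exact ⟨RingQuot.liftAlgHom F (s := CycRel F q 0 d aa) ⟨ε₁, fun _ _ h => by
    cases h
    simp [felem]⟩⟩

theorem frobenius_HF (hf : GoodPoly F d aa) {n : ℕ} {δ : HF F q d aa n →ₐ[F] HF F q d aa n}
    (hX : ∀ i, δ (gX F q d aa n i) = gX F q d aa n i)
    (hXi : ∀ i, δ (gXi F q d aa n i) = gXi F q d aa n i)
    (hC : ∀ i, δ (gC F q d aa n i) = -gC F q d aa n i)
    (hT : ∀ i, δ (gT F q d aa n i) = gT F q d aa n i) :
    ∃ Φ : HF F q d aa n ≃ₗ[F] (HF F q d aa n →ₗ[F] F),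
      (∀ a x b : HF F q d aa n, Φ (a * x) b = Φ x (b * a)) ∧
      ∀ x b : HF F q d aa n, Φ (δ x) b = Φ x (δ b) := by
  have inv := grading_involutive hX hXi hC hT
  rcases n with _ | m
  · obtain ⟨ε⟩ := exists_augmentation_rank_zero q d aa
    have : Module.Finite F (HF F q d aa 0) :=
      Module.Finite.of_surjective (Algebra.linearMap F (HF F q d aa 0)) fun x => by
        obtain ⟨r, rfl⟩ := eq_algebraMap_rank_zero x
        exact ⟨r, rfl⟩
    refine exists_dual_equiv δ inv ε.toLinearMap (fun x => ?_) fun x hx => ?_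
    · obtain ⟨r, rfl⟩ := eq_algebraMap_rank_zero x
      rw [AlgHom.commutes]
    · obtain ⟨r, rfl⟩ := eq_algebraMap_rank_zero x
      have := hx 1
      rw [one_mul, AlgHom.toLinearMap_apply, AlgHom.commutes] at this
      rw [show r = 0 from this, map_zero]
  · obtain ⟨hfin, lam, even, nondeg⟩ := exists_form (q := q) hf m
    have hδ : δ = sg q d aa m := by
      refine (gens_canonical q d aa m).hom_ext ?_ ?_ fun i hi => ?_
      · rw [sg_c0]
        exact hC 0
      · rw [sg_e0, e0, map_mul, hC, hX, neg_mul]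
      · rw [sg_tt hi, tt_of_lt (by omega)]
        exact hT _
    subst hδ
    exact exists_dual_equiv _ inv lam even nondeg

end Frobenius

/-- **`H_n^f` is a Frobenius superalgebra** (Corollary to Theorem `indcoind` of
Brundan–Kleshchev): there is an even isomorphism of left `H_n^f`-modules between the
left regular module and the `F`-linear dual of the right regular module (the left
action on the dual being `(a · φ)(b) = φ(b a)`; evenness is expressed via the grading
automorphism `δ`). -/
theorem cyclotomic_frobenius
    (F : Type) [Field F] [IsAlgClosed F] (h2 : (2 : F) ≠ 0)
    (q : F) (hq : GoodParam F q) (n : ℕ)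
    (d : ℕ) (aa : ℕ → F) (hf : GoodPoly F d aa)
    (δf : Hf F q n d aa →ₐ[F] Hf F q n d aa) (hδ : IsCycGrading F q n d aa δf) :
    ∃ Φ : Hf F q n d aa ≃ₗ[F] (Hf F q n d aa →ₗ[F] F),
      (∀ a x b : Hf F q n d aa, Φ (a * x) b = Φ x (b * a)) ∧
      ∀ x b : Hf F q n d aa, Φ (δf x) b = Φ x (δf b) :=
  frobenius_HF (q := q) (n := n) (δ := δf) hf hδ.1 hδ.2.1 hδ.2.2.1 hδ.2.2.2

end HC
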